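/- arXiv:0710.4358 — 3 statements merged into one kernel-verified Lean document; each statement's English description precedes it below -/
import Mathlib

section
/- Suppose L is a metric flag labeled triangulation of the 2-sphere. If S and T are two distinct infinite, maximal RA-suspensions in L, then no 2-simplex of L is contained in both S and T. -/
open Geometry

/-- The ambient space for our simplicial complexes. -/
abbrev E3 : Type := EuclideanSpace ℝ (Fin 3)

noncomputable instance : DecidableEq E3 := Classical.decEq _

namespace CoxOrb

variable (L : SimplicialComplex ℝ E3) (m : E3 → E3 → ℕ)

/-- `L` is a labeled triangulation of the 2-sphere with edge labeling `m`:
`L` is finite, its underlying space is homeomorphic to the 2-sphere, and `m`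
is symmetric with `m s t ≥ 2` on every edge `{s, t}` of `L`. -/
structure IsLabeledS2 : Prop where
  finite : L.faces.Finite
  sphere : Nonempty (L.space ≃ₜ (Metric.sphere (0 : E3) 1 : Set E3))
  symm : ∀ s t : E3, m s t = m t s
  two_le : ∀ s t : E3, s ≠ t → ({s, t} : Finset E3) ∈ L.faces → 2 ≤ m s t

/-- `L` with labeling `m` is metric flag: three pairwise-joined vertices span a
2-simplex iff the corresponding angle sum `π/m_st + π/m_tu + π/m_us` exceeds `π`. -/
def MetricFlag : Prop :=
  ∀ s t u : E3, s ≠ t → t ≠ u → s ≠ u →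
    ({s, t} : Finset E3) ∈ L.faces → ({t, u} : Finset E3) ∈ L.faces →
    ({s, u} : Finset E3) ∈ L.faces →
    (({s, t, u} : Finset E3) ∈ L.faces ↔
      1 / (m s t : ℝ) + 1 / (m t u : ℝ) + 1 / (m u s : ℝ) > 1)

/-- The link of a vertex `s`, as a set of faces of `L`. -/
def link (s : E3) : Set (Finset E3) :=
  {F | F ∈ L.faces ∧ s ∉ F ∧ insert s F ∈ L.faces}

/-- The closed star of a vertex `s`: all faces of `L` contained in some face
containing `s`. -/
def star (s : E3) : Set (Finset E3) :=
  {F | F ∈ L.faces ∧ ∃ G ∈ L.faces, s ∈ G ∧ F ⊆ G}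

/-- The vertices of the link of `s`. -/
def linkVerts (s : E3) : Set E3 :=
  {v | v ≠ s ∧ ({s, v} : Finset E3) ∈ L.faces}

/-- A set of faces `A` is a full subcomplex of `L`: every face of `L` all of
whose vertices are vertices of `A` belongs to `A`. -/
def IsFullSubcomplex (A : Set (Finset E3)) : Prop :=
  A ⊆ L.faces ∧ ∀ F ∈ L.faces, (∀ v ∈ F, ({v} : Finset E3) ∈ A) → F ∈ A

/-- `s` is a 3-Euclidean vertex of `L`: it has valence three and the labels on
the three edges of its link have reciprocals summing to one. -/
def IsThreeEuclidean (s : E3) : Prop :=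
  ({s} : Finset E3) ∈ L.faces ∧
  ∃ s₀ s₁ s₂ : E3, s₀ ≠ s₁ ∧ s₁ ≠ s₂ ∧ s₀ ≠ s₂ ∧
    linkVerts L s = {s₀, s₁, s₂} ∧
    1 / (m s₀ s₁ : ℝ) + 1 / (m s₁ s₂ : ℝ) + 1 / (m s₂ s₀ : ℝ) = 1

/-- `s` is a 4-Euclidean vertex of `L`: it has valence four, its link is the
4-circuit on `v 0, v 1, v 2, v 3` (in cyclic order), and the labels on the
edges of the link are all `2`. -/
def IsFourEuclidean (s : E3) : Prop :=
  ({s} : Finset E3) ∈ L.faces ∧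
  ∃ v : Fin 4 → E3, Function.Injective v ∧
    linkVerts L s = {v 0, v 1, v 2, v 3} ∧
    (∀ i : Fin 4, ({s, v i, v (i + 1)} : Finset E3) ∈ L.faces) ∧
    (∀ i : Fin 4, m (v i) (v (i + 1)) = 2)

/-- `L` is the boundary complex of a 3-simplex: four pairwise-joined vertices
spanning four 2-simplices. -/
def IsBoundaryOfThreeSimplex : Prop :=
  ∃ a b c d : E3, a ≠ b ∧ a ≠ c ∧ a ≠ d ∧ b ≠ c ∧ b ≠ d ∧ c ≠ d ∧
    (∀ v : E3, ({v} : Finset E3) ∈ L.faces ↔ v = a ∨ v = b ∨ v = c ∨ v = d) ∧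
    ({a, b, c} : Finset E3) ∈ L.faces ∧ ({a, b, d} : Finset E3) ∈ L.faces ∧
    ({a, c, d} : Finset E3) ∈ L.faces ∧ ({b, c, d} : Finset E3) ∈ L.faces

/-- `L` is the suspension of a 3-gon. -/
def IsSuspensionOfThreeGon : Prop :=
  ∃ t t' s₀ s₁ s₂ : E3, [t, t', s₀, s₁, s₂].Pairwise (· ≠ ·) ∧
    (∀ v : E3, ({v} : Finset E3) ∈ L.faces ↔ v = t ∨ v = t' ∨ v = s₀ ∨ v = s₁ ∨ v = s₂) ∧
    ({s₀, s₁} : Finset E3) ∈ L.faces ∧ ({s₁, s₂} : Finset E3) ∈ L.faces ∧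
    ({s₀, s₂} : Finset E3) ∈ L.faces ∧
    ({t, s₀} : Finset E3) ∈ L.faces ∧ ({t, s₁} : Finset E3) ∈ L.faces ∧
    ({t, s₂} : Finset E3) ∈ L.faces ∧
    ({t', s₀} : Finset E3) ∈ L.faces ∧ ({t', s₁} : Finset E3) ∈ L.faces ∧
    ({t', s₂} : Finset E3) ∈ L.faces ∧
    ({t, t'} : Finset E3) ∉ L.faces

/-- The simplicial join of the subcomplex `Z` with the two points `t, t'`. -/
def joinSusp (Z : Set (Finset E3)) (t t' : E3) : Set (Finset E3) :=
  Z ∪ {{t}, {t'}} ∪ ((fun F => insert t F) '' Z) ∪ ((fun F => insert t' F) '' Z)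

/-- `T` is the right-angled suspension in `L` of the subcomplex `Z` with
suspension points `t, t'` (not joined by an edge of `T`): every edge from a
suspension point to a vertex of `Z` is labeled `2`. -/
structure IsRASuspData (T Z : Set (Finset E3)) (t t' : E3) : Prop where
  subset : T ⊆ L.faces
  zsubset : Z ⊆ L.faces
  zdown : ∀ F ∈ Z, ∀ G : Finset E3, G ⊆ F → G.Nonempty → G ∈ Z
  znonempty : Z.Nonempty
  tne : t ≠ t'
  t_notin : ∀ F ∈ Z, t ∉ F
  t'_notin : ∀ F ∈ Z, t' ∉ F
  labels : ∀ v : E3, ({v} : Finset E3) ∈ Z → m t v = 2 ∧ m t' v = 2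
  eq : T = joinSusp Z t t'

/-- `T` is a right-angled suspension in `L`. -/
def IsRASusp (T : Set (Finset E3)) : Prop :=
  ∃ Z t t', IsRASuspData L m T Z t t'

/-- The base `Z` of the suspension is neither a single vertex nor a single
edge, so that the suspension is infinite. -/
def InfiniteBase (Z : Set (Finset E3)) : Prop :=
  (¬ ∃ v : E3, Z = {({v} : Finset E3)}) ∧
  (¬ ∃ u v : E3, u ≠ v ∧ Z = {({u} : Finset E3), ({v} : Finset E3), ({u, v} : Finset E3)})

/-- `T` is an infinite, maximal right-angled suspension in `L`: it is an
RA-suspension of a full subcomplex which is neither a vertex nor an edge, and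
`T` is not properly contained in another RA-suspension. -/
def IsInfMaxRASusp (T : Set (Finset E3)) : Prop :=
  (∃ Z t t', IsRASuspData L m T Z t t' ∧ InfiniteBase Z ∧ IsFullSubcomplex L Z) ∧
  ∀ T', IsRASusp L m T' → T ⊆ T' → T = T'

/-- `v 0, v 1, v 2, v 3` (in cyclic order) form a Euclidean 4-circuit of `L`:
all four edge labels are `2` and the circuit is not the boundary of the union
of two 2-simplices of `L` sharing an edge. -/
def IsEuclidean4Circuit (v : Fin 4 → E3) : Prop :=
  Function.Injective v ∧
  (∀ i : Fin 4, ({v i, v (i + 1)} : Finset E3) ∈ L.faces) ∧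
  (∀ i : Fin 4, m (v i) (v (i + 1)) = 2) ∧
  ¬ ((({v 0, v 1, v 2} : Finset E3) ∈ L.faces ∧ ({v 0, v 2, v 3} : Finset E3) ∈ L.faces) ∨
     (({v 1, v 2, v 3} : Finset E3) ∈ L.faces ∧ ({v 0, v 1, v 3} : Finset E3) ∈ L.faces))

/-- The subcomplex consisting of the vertices and edges of the 4-circuit `v`. -/
def circuitComplex (v : Fin 4 → E3) : Set (Finset E3) :=
  {F | (∃ i : Fin 4, F = {v i}) ∨ (∃ i : Fin 4, F = {v i, v (i + 1)})}

/-- `T` is the right-angled cone on a Euclidean 4-circuit: the closed star of a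
vertex `c` of valence four whose link is a Euclidean 4-circuit, all four edges
containing `c` being labeled `2`. -/
def IsRAConeOn4Circuit (T : Set (Finset E3)) : Prop :=
  ∃ (c : E3) (v : Fin 4 → E3), IsEuclidean4Circuit L m v ∧
    linkVerts L c = {v 0, v 1, v 2, v 3} ∧
    (∀ i : Fin 4, ({c, v i, v (i + 1)} : Finset E3) ∈ L.faces) ∧
    (∀ i : Fin 4, m c (v i) = 2) ∧
    T = star L c

/-- The generating relation for Seifert subcomplexes: two infinite, maximal
RA-suspensions whose intersection is a Euclidean 4-circuit. -/
def SeifertRel (S S' : Set (Finset E3)) : Prop :=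
  IsInfMaxRASusp L m S ∧ IsInfMaxRASusp L m S' ∧
  ∃ v : Fin 4 → E3, IsEuclidean4Circuit L m v ∧ S ∩ S' = circuitComplex v

/-- `D` is a Seifert subcomplex of `L`: the union of the members of an
equivalence class of infinite, maximal RA-suspensions under the equivalence
relation generated by `SeifertRel`. -/
def IsSeifertSubcomplex (D : Set (Finset E3)) : Prop :=
  ∃ S₀, IsInfMaxRASusp L m S₀ ∧
    D = ⋃₀ {S | IsInfMaxRASusp L m S ∧ Relation.EqvGen (SeifertRel L m) S₀ S}

end CoxOrb

open CoxOrb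




namespace K33

theorem lift_unique (h k : ℝ → ℂ) (hh : Continuous h) (hk : Continuous k)
    (he : ∀ x, Complex.exp (h x) = Complex.exp (k x)) : h 1 - h 0 = k 1 - k 0 := by
  have hf : Continuous (fun x => Complex.exp (k x)) := by fun_prop
  obtain ⟨F, -, hF⟩ := Complex.isCoveringMapOn_exp.existsUnique_continuousMap_lifts
    (⟨fun x => Complex.exp (k x), hf⟩ : C(ℝ, ℂ)) (a₀ := 0) (e₀ := k 0) rfl
    (fun a => by simp)
  have h1 := hF ⟨k, hk⟩ ⟨rfl, rfl⟩
  have h2 := hF ⟨fun x => h x - (h 0 - k 0), by fun_prop⟩ ⟨by simp, by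
    funext x
    simp [Complex.exp_sub, he]⟩
  have := congrArg (fun f : C(ℝ, ℂ) => f 1) (h1.trans h2.symm)
  simp at this
  rw [this]; ring

open Classical in
noncomputable def vari (g : ℝ → ℂ) : ℂ :=
  if H : ∃ h : ℝ → ℂ, Continuous h ∧ ∀ x, Complex.exp (h x) = g x then
    H.choose 1 - H.choose 0 else 0

theorem vari_eq (g h : ℝ → ℂ) (hh : Continuous h) (c : ℂ) (hc : c ≠ 0)
    (he : ∀ x, Complex.exp (h x) = c * g x) : h 1 - h 0 = vari g := by
  have H : ∃ h : ℝ → ℂ, Continuous h ∧ ∀ x, Complex.exp (h x) = g x := by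
    refine ⟨fun x => h x - Complex.log c, by fun_prop, fun x => ?_⟩
    rw [Complex.exp_sub, Complex.exp_log hc, he]; field_simp
  rw [vari, dif_pos H]
  obtain ⟨h1, h2⟩ := H.choose_spec
  rw [lift_unique H.choose (fun x => h x - Complex.log c) h1 (by fun_prop)]
  · ring
  · intro x
    rw [Complex.exp_sub, Complex.exp_log hc, he, h2]; field_simp

theorem exists_lift2 (G : ℝ × ℝ → ℂ) (hG : Continuous G) (h0 : ∀ x, G x ≠ 0) :
    ∃ H : ℝ × ℝ → ℂ, Continuous H ∧ ∀ x, Complex.exp (H x) = G x := by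
  obtain ⟨F, ⟨-, h⟩, -⟩ := Complex.isCoveringMapOn_exp.existsUnique_continuousMap_lifts
    (⟨G, hG⟩ : C(ℝ × ℝ, ℂ)) (a₀ := 0) (e₀ := Complex.log (G 0)) (Complex.exp_log (h0 0))
    (fun a => by simpa using h0 a)
  exact ⟨F, F.continuous, fun x => congrFun h x⟩

/-- variation relation on a square -/
theorem square_rel (α β : ℝ → ℂ) (hα : Continuous α) (hβ : Continuous β)
    (h : ∀ s r, α s ≠ β r) :
    vari (fun s => α s - β 0) - vari (fun r => β r - α 0) =
      vari (fun s => α s - β 1) - vari (fun r => β r - α 1) := by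
  obtain ⟨H, hH, hE⟩ := exists_lift2 (fun p => α p.1 - β p.2) (by fun_prop)
    (fun p => sub_ne_zero.2 (h _ _))
  rw [← vari_eq (fun s => α s - β 0) (fun s => H (s, 0)) (by fun_prop) 1 one_ne_zero
      (fun x => by rw [hE]; simp),
    ← vari_eq (fun s => α s - β 1) (fun s => H (s, 1)) (by fun_prop) 1 one_ne_zero
      (fun x => by rw [hE]; simp),
    ← vari_eq (fun r => β r - α 0) (fun r => H (0, r)) (by fun_prop) (-1) (by norm_num)
      (fun x => by rw [hE]; simp),
    ← vari_eq (fun r => β r - α 1) (fun r => H (1, r)) (by fun_prop) (-1) (by norm_num)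
      (fun x => by rw [hE]; simp)]
  ring

theorem exp_vari (α : ℝ → ℂ) (z : ℂ) (hα : Continuous α) (h : ∀ s, α s ≠ z) :
    Complex.exp (vari (fun s => α s - z)) = (α 1 - z) / (α 0 - z) := by
  obtain ⟨H, hH, hE⟩ := exists_lift2 (fun p => α p.1 - z) (by fun_prop)
    (fun p => sub_ne_zero.2 (h _))
  rw [← vari_eq (fun s => α s - z) (fun s => H (s, 0)) (by fun_prop) 1 one_ne_zero
      (fun x => by rw [hE]; simp), Complex.exp_sub, hE, hE]

theorem nonplanar (A B : Fin 3 → ℂ) (γ : Fin 3 → Fin 3 → ℝ → ℂ)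
    (hc : ∀ i j, Continuous (γ i j)) (h0 : ∀ i j, γ i j 0 = A i) (h1 : ∀ i j, γ i j 1 = B j)
    (hd : ∀ i j k l, i ≠ k → j ≠ l → ∀ s r, γ i j s ≠ γ k l r) : False := by
  obtain ⟨D, hD⟩ : ∃ D : Fin 3 → Fin 3 → Fin 3 → ℂ, ∀ i j k,
    D i j k = vari (fun s => γ i j s - A k) := ⟨_, fun _ _ _ => rfl⟩
  obtain ⟨E, hE⟩ : ∃ D : Fin 3 → Fin 3 → Fin 3 → ℂ, ∀ i j k,
    D i j k = vari (fun s => γ i j s - B k) := ⟨_, fun _ _ _ => rfl⟩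
  have rel : ∀ i j k l, i ≠ k → j ≠ l → D i j k - D k l i = E i j l - E k l j := by
    intro i j k l hik hjl
    have := square_rel (γ i j) (γ k l) (hc _ _) (hc _ _) (hd i j k l hik hjl)
    simpa only [h0, h1, ← hD, ← hE] using this
  have hex : ∀ j : Fin 3, ∃ l, j ≠ l := by decide
  have eD : ∀ i j k, i ≠ k → Complex.exp (D i j k) = (B j - A k) / (A i - A k) := by
    intro i j k hik
    obtain ⟨l, hl⟩ := hex j
    rw [hD, exp_vari _ _ (hc _ _), h0, h1]
    intro s; rw [← h0 k l]; exact hd _ _ _ _ hik hl _ _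
  have eE : ∀ i j l, j ≠ l → Complex.exp (E i j l) = (B j - B l) / (A i - B l) := by
    intro i j l hjl
    obtain ⟨k, hk⟩ := hex i
    rw [hE, exp_vari _ _ (hc _ _), h0, h1]
    intro s; rw [← h1 k l]; exact hd _ _ _ _ hk hjl _ _
  have nAA : ∀ i k, i ≠ k → A i - A k ≠ 0 := by
    intro i k h; rw [← h0 i 0, ← h0 k 1]; exact sub_ne_zero.2 (hd _ _ _ _ h (by decide) _ _)
  have nBB : ∀ i k, i ≠ k → B i - B k ≠ 0 := by
    intro i k h; rw [← h1 0 i, ← h1 1 k]; exact sub_ne_zero.2 (hd _ _ _ _ (by decide) h _ _)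
  have nBA : ∀ j i, B j - A i ≠ 0 := by
    intro j i
    obtain ⟨k, hk⟩ := hex i
    obtain ⟨l, hl⟩ := hex j
    rw [← h1 k j, ← h0 i l]; exact sub_ne_zero.2 (hd _ _ _ _ hk.symm hl _ _)
  have nAB : ∀ j i, A i - B j ≠ 0 := fun j i => by
    rw [← neg_sub]; exact neg_ne_zero.2 (nBA j i)
  -- P i k = ∑ j, D i j k - D k j i
  have eP : ∀ i k, i ≠ k → Complex.exp (D i 0 k + D i 1 k + D i 2 k - D k 0 i - D k 1 i - D k 2 i)
      = - (((B 0 - A k) * (B 1 - A k) * (B 2 - A k)) /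
        ((B 0 - A i) * (B 1 - A i) * (B 2 - A i))) := by
    intro i k h
    simp only [Complex.exp_sub, Complex.exp_add, eD _ _ _ h, eD _ _ _ h.symm]
    have a1 := nAA i k h
    have a2 : A k - A i = - (A i - A k) := by ring
    rw [a2]
    have := nBA 0 k
    have := nBA 1 k
    have := nBA 2 k
    have := nBA 0 i
    have := nBA 1 i
    have := nBA 2 i
    field_simp
  have eQ : ∀ i, Complex.exp (E i 0 1 + E i 0 2 + E i 1 0 + E i 1 2 + E i 2 0 + E i 2 1) =
      ((B 0 - B 1) * (B 0 - B 2) * (B 1 - B 0) * (B 1 - B 2) * (B 2 - B 0) * (B 2 - B 1)) /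
        ((B 0 - A i) * (B 1 - A i) * (B 2 - A i)) ^ 2 := by
    intro i
    simp only [Complex.exp_add]
    rw [eE _ _ _ (by decide), eE _ _ _ (by decide), eE _ _ _ (by decide), eE _ _ _ (by decide),
      eE _ _ _ (by decide), eE _ _ _ (by decide)]
    have a0 : A i - B 0 = - (B 0 - A i) := by ring
    have a1 : A i - B 1 = - (B 1 - A i) := by ring
    have a2 : A i - B 2 = - (B 2 - A i) := by ring
    rw [a0, a1, a2]
    have := nBA 0 i
    have := nBA 1 i
    have := nBA 2 i
    field_simp
  have key : (D 0 0 1 + D 0 1 1 + D 0 2 1 - D 1 0 0 - D 1 1 0 - D 1 2 0) +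
      (D 0 0 2 + D 0 1 2 + D 0 2 2 - D 2 0 0 - D 2 1 0 - D 2 2 0) +
      (D 1 0 2 + D 1 1 2 + D 1 2 2 - D 2 0 1 - D 2 1 1 - D 2 2 1) =
      (E 0 0 1 + E 0 0 2 + E 0 1 0 + E 0 1 2 + E 0 2 0 + E 0 2 1) -
      (E 2 0 1 + E 2 0 2 + E 2 1 0 + E 2 1 2 + E 2 2 0 + E 2 2 1) := by
    linear_combination (1 / 2 : ℂ) * (rel 0 0 1 1 (by decide) (by decide) +
      rel 0 0 1 2 (by decide) (by decide) +
      rel 0 1 1 0 (by decide) (by decide) +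
      rel 0 1 1 2 (by decide) (by decide) +
      rel 0 2 1 0 (by decide) (by decide) +
      rel 0 2 1 1 (by decide) (by decide) +
      rel 0 0 2 1 (by decide) (by decide) +
      rel 0 0 2 2 (by decide) (by decide) +
      rel 0 1 2 0 (by decide) (by decide) +
      rel 0 1 2 2 (by decide) (by decide) +
      rel 0 2 2 0 (by decide) (by decide) +
      rel 0 2 2 1 (by decide) (by decide) +
      rel 1 0 2 1 (by decide) (by decide) +
      rel 1 0 2 2 (by decide) (by decide) +
      rel 1 1 2 0 (by decide) (by decide) +
      rel 1 1 2 2 (by decide) (by decide) +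
      rel 1 2 2 0 (by decide) (by decide) +
      rel 1 2 2 1 (by decide) (by decide))
  have := congrArg Complex.exp key
  rw [Complex.exp_add, Complex.exp_add, eP _ _ (by decide), eP _ _ (by decide),
    eP _ _ (by decide), Complex.exp_sub, eQ, eQ] at this
  have m0 : (B 0 - A 0) * (B 1 - A 0) * (B 2 - A 0) ≠ 0 :=
    mul_ne_zero (mul_ne_zero (nBA _ _) (nBA _ _)) (nBA _ _)
  have m1 : (B 0 - A 1) * (B 1 - A 1) * (B 2 - A 1) ≠ 0 :=
    mul_ne_zero (mul_ne_zero (nBA _ _) (nBA _ _)) (nBA _ _)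
  have m2 : (B 0 - A 2) * (B 1 - A 2) * (B 2 - A 2) ≠ 0 :=
    mul_ne_zero (mul_ne_zero (nBA _ _) (nBA _ _)) (nBA _ _)
  have mq : (B 0 - B 1) * (B 0 - B 2) * (B 1 - B 0) * (B 1 - B 2) * (B 2 - B 0) * (B 2 - B 1) ≠ 0 := by
    repeat' apply mul_ne_zero
    all_goals exact nBB _ _ (by decide)
  generalize (B 0 - A 0) * (B 1 - A 0) * (B 2 - A 0) = x0 at *
  generalize (B 0 - A 1) * (B 1 - A 1) * (B 2 - A 1) = x1 at *
  generalize (B 0 - A 2) * (B 1 - A 2) * (B 2 - A 2) = x2 at *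
  generalize (B 0 - B 1) * (B 0 - B 2) * (B 1 - B 0) * (B 1 - B 2) * (B 2 - B 0) * (B 2 - B 1) = q at *
  field_simp at this
  norm_num at this

end K33

namespace Geo

variable (L : SimplicialComplex ℝ E3)

/-- The point with given barycentric weights. -/
noncomputable def pt : (E3 →₀ ℝ) →ₗ[ℝ] E3 := Finsupp.linearCombination ℝ (id : E3 → E3)

noncomputable def mass : (E3 →₀ ℝ) →ₗ[ℝ] ℝ := Finsupp.linearCombination ℝ (fun _ : E3 => (1 : ℝ))

@[simp] theorem pt_single (v : E3) (r : ℝ) : pt (Finsupp.single v r) = r • v := by simp [pt]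
@[simp] theorem mass_single (v : E3) (r : ℝ) : mass (Finsupp.single v r) = r := by simp [mass]

def Good (w : E3 →₀ ℝ) : Prop :=
  (∀ v, 0 ≤ w v) ∧ mass w = 1 ∧ ∃ F ∈ L.faces, ∀ v, v ∉ F → w v = 0

variable {L}

theorem pt_eq (w : E3 →₀ ℝ) (F : Finset E3) (h : ∀ v, v ∉ F → w v = 0) :
    pt w = ∑ v ∈ F, w v • v := by
  rw [pt, Finsupp.linearCombination_apply, Finsupp.sum]
  refine Finset.sum_subset (fun v hv => ?_) (fun v _ hv => ?_)
  · by_contra hn; exact (Finsupp.mem_support_iff.1 hv) (h v hn)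
  · simp [Finsupp.notMem_support_iff.1 hv]

theorem mass_eq (w : E3 →₀ ℝ) (F : Finset E3) (h : ∀ v, v ∉ F → w v = 0) :
    mass w = ∑ v ∈ F, w v := by
  rw [mass, Finsupp.linearCombination_apply, Finsupp.sum]
  refine (Finset.sum_subset (fun v hv => ?_) (fun v _ hv => ?_)).trans
    (Finset.sum_congr rfl fun _ _ => by simp)
  · by_contra hn; exact (Finsupp.mem_support_iff.1 hv) (h v hn)
  · simp [Finsupp.notMem_support_iff.1 hv]

theorem Good.mem_hull {w : E3 →₀ ℝ} (h0 : ∀ v, 0 ≤ w v) (h1 : mass w = 1) {F : Finset E3}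
    (h : ∀ v, v ∉ F → w v = 0) : pt w ∈ convexHull ℝ (F : Set E3) := by
  rw [Finset.mem_convexHull']
  exact ⟨w, fun v _ => h0 v, by rw [← mass_eq w F h, h1], by rw [← pt_eq w F h]⟩

theorem Good.mem_space {w : E3 →₀ ℝ} (h : Good L w) : pt w ∈ L.space := by
  obtain ⟨h0, h1, F, hF, h2⟩ := h
  exact SimplicialComplex.mem_space_iff.2 ⟨F, hF, Good.mem_hull h0 h1 h2⟩

theorem indep_eq {F : Finset E3} (hF : F ∈ L.faces) (f g : E3 → ℝ)
    (h1 : ∑ v ∈ F, f v = ∑ v ∈ F, g v) (h2 : ∑ v ∈ F, f v • v = ∑ v ∈ F, g v • v) :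
    ∀ v ∈ F, f v = g v := by
  have := affineIndependent_iff.1 (L.indep hF) Finset.univ (fun v => f v - g v)
    (by rw [Finset.sum_sub_distrib, Finset.sum_coe_sort F f, Finset.sum_coe_sort F g, h1, sub_self])
    (by
      simp only [sub_smul, Finset.sum_sub_distrib]
      rw [Finset.sum_coe_sort F (fun v => f v • v), Finset.sum_coe_sort F (fun v => g v • v), h2,
        sub_self])
  intro v hv
  exact sub_eq_zero.1 (this ⟨v, hv⟩ (Finset.mem_univ _))

theorem Good.inj {w w' : E3 →₀ ℝ} (h : Good L w) (h' : Good L w') (he : pt w = pt w') :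
    w = w' := by
  obtain ⟨h0, h1, F, hF, h2⟩ := h
  obtain ⟨h0', h1', F', hF', h2'⟩ := h'
  have hx := L.inter_subset_convexHull hF hF'
    ⟨Good.mem_hull h0 h1 h2, he ▸ Good.mem_hull h0' h1' h2'⟩
  rw [← Finset.coe_inter, Finset.mem_convexHull'] at hx
  obtain ⟨u, hu0, hu1, hu2⟩ := hx
  have key : ∀ (w : E3 →₀ ℝ) (G : Finset E3), G ∈ L.faces → F ∩ F' ⊆ G →
      (∀ v, v ∉ G → w v = 0) → mass w = 1 → pt w = ∑ y ∈ F ∩ F', u y • y →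
      ∀ v, w v = if v ∈ F ∩ F' then u v else 0 := by
    intro w G hG hs hw hm hp v
    have := indep_eq hG w (fun v => if v ∈ F ∩ F' then u v else 0)
      (by rw [← mass_eq w G hw, hm, ← hu1, Finset.sum_ite_mem, Finset.inter_eq_right.2 hs])
      (by
        rw [← pt_eq w G hw, hp]
        simp only [ite_smul, zero_smul]
        rw [Finset.sum_ite_mem, Finset.inter_eq_right.2 hs])
    by_cases hv : v ∈ G
    · exact this v hv
    · rw [hw v hv, if_neg (fun h => hv (hs h))]
  ext v
  rw [key w F hF Finset.inter_subset_left h2 h1 hu2.symm v,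
    key w' F' hF' Finset.inter_subset_right h2' h1' (he ▸ hu2.symm) v]

/-- No weighted `K₃,₃` in a sphere, missing a point. -/
theorem no_K33 (hs : Nonempty (L.space ≃ₜ (Metric.sphere (0 : E3) 1 : Set E3)))
    (A B : Fin 3 → E3 →₀ ℝ) (W : Fin 3 → Fin 3 → ℝ → E3 →₀ ℝ)
    (hg : ∀ i j s, 0 ≤ s → s ≤ 1 → Good L (W i j s))
    (hc : ∀ i j, Continuous fun s => pt (W i j s))
    (h0 : ∀ i j, W i j 0 = A i) (h1 : ∀ i j, W i j 1 = B j)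
    (hd : ∀ i j k l, i ≠ k → j ≠ l → ∀ s r, 0 ≤ s → s ≤ 1 → 0 ≤ r → r ≤ 1 → W i j s ≠ W k l r)
    (q : E3 →₀ ℝ) (hq : Good L q) (hqn : ∀ i j s, 0 ≤ s → s ≤ 1 → W i j s ≠ q) : False := by
  obtain ⟨e⟩ := hs
  let c : ℝ → ℝ := fun s => max 0 (min 1 s)
  have hcc : Continuous c := by fun_prop
  have c0 : ∀ s, 0 ≤ c s := fun s => le_max_left _ _
  have c1 : ∀ s, c s ≤ 1 := fun s => max_le zero_le_one (min_le_left _ _)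
  have hG : ∀ i j s, Good L (W i j (c s)) := fun i j s => hg i j _ (c0 s) (c1 s)
  let P : Fin 3 → Fin 3 → ℝ → (Metric.sphere (0 : E3) 1 : Set E3) := fun i j s =>
    e ⟨pt (W i j (c s)), (hG i j s).mem_space⟩
  let Q : (Metric.sphere (0 : E3) 1 : Set E3) := e ⟨pt q, hq.mem_space⟩
  have hPc : ∀ i j, Continuous (P i j) := fun i j =>
    e.continuous.comp (Continuous.subtype_mk ((hc i j).comp hcc) _)
  have hPQ : ∀ i j s, P i j s ≠ Q := by
    intro i j s h
    have := congrArg Subtype.val (e.injective h)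
    exact hqn i j _ (c0 s) (c1 s) ((hG i j s).inj hq this)
  have hPP : ∀ i j k l s r, P i j s = P k l r → W i j (c s) = W k l (c r) := by
    intro i j k l s r h
    have := congrArg Subtype.val (e.injective h)
    exact (hG i j s).inj (hG k l r) this
  haveI : Fact (Module.finrank ℝ E3 = 2 + 1) := ⟨by simp⟩
  let σ := stereographic' 2 Q
  have hsrc : ∀ x, x ≠ Q → x ∈ σ.source := by
    intro x hx; simpa [σ] using hx
  let z : EuclideanSpace ℝ (Fin 2) → ℂ := fun y => ⟨y 0, y 1⟩
  have hz : Continuous z := by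
    have : z = fun y => (y 0 : ℂ) + (y 1 : ℂ) * Complex.I := by
      funext y; apply Complex.ext <;> simp [z]
    rw [this]; fun_prop
  have hzi : Function.Injective z := by
    intro x y h
    have h1 := congrArg Complex.re h
    have h2 := congrArg Complex.im h
    ext i; fin_cases i
    · exact h1
    · exact h2
  have hPeq : ∀ i j k l s r, z (σ (P i j s)) = z (σ (P k l r)) → P i j s = P k l r := by
    intro i j k l s r h
    exact σ.injOn (hsrc _ (hPQ _ _ _)) (hsrc _ (hPQ _ _ _)) (hzi h)
  have cz : c 0 = 0 := by simp [c]
  have co : c 1 = 1 := by simp [c]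
  refine K33.nonplanar (fun i => z (σ (P i 0 0))) (fun j => z (σ (P 0 j 1)))
    (fun i j s => z (σ (P i j s))) ?_ ?_ ?_ ?_
  · intro i j
    refine hz.comp ?_
    exact σ.continuousOn.comp_continuous (hPc i j) (fun s => hsrc _ (hPQ _ _ _))
  · intro i j
    simp only [P, cz, h0]
  · intro i j
    simp only [P, co, h1]
  · intro i j k l hik hjl s r h
    exact hd i j k l hik hjl _ _ (c0 s) (c1 s) (c0 r) (c1 r) (hPP _ _ _ _ _ _ (hPeq _ _ _ _ _ _ h))

end Geo

namespace Geo

variable {L : SimplicialComplex ℝ E3}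

theorem book (hs : Nonempty (L.space ≃ₜ (Metric.sphere (0 : E3) 1 : Set E3)))
    (a b : E3) (hab : a ≠ b) (τ : Fin 3 → E3 →₀ ℝ) (h0 : ∀ i v, 0 ≤ τ i v)
    (h1 : ∀ i, mass (τ i) = 1) (ha : ∀ i, τ i a = 0) (hb : ∀ i, τ i b = 0)
    (hi : Function.Injective τ)
    (hF : ∀ i, ∃ F ∈ L.faces, a ∈ F ∧ b ∈ F ∧ ∀ v, v ∉ F → τ i v = 0) : False := by
  let x : Fin 3 → ℝ := ![1, 1 / 2, 0]
  have hx0 : ∀ j, 0 ≤ x j := by intro j; fin_cases j <;> norm_num [x]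
  have hx1 : ∀ j, x j ≤ 1 := by intro j; fin_cases j <;> norm_num [x]
  have hx2 : ∀ j, x j ≠ 2 / 3 := by intro j; fin_cases j <;> norm_num [x]
  have hxi : ∀ j l, j ≠ l → x j ≠ x l := by
    intro j l; fin_cases j <;> fin_cases l <;> norm_num [x]
  let β : ℝ → E3 →₀ ℝ := fun y => Finsupp.single a y + Finsupp.single b (1 - y)
  let V : Fin 3 → ℝ → ℝ → E3 →₀ ℝ := fun i y s => (1 - s) • τ i + s • β y
  have hVa : ∀ i y s, V i y s a = s * y := by
    intro i y s; simp [V, β, ha, Finsupp.single_apply, hab.symm]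
  have hVb : ∀ i y s, V i y s b = s * (1 - y) := by
    intro i y s; simp [V, β, hb, Finsupp.single_apply, hab]
  have hβ0 : ∀ y v, 0 ≤ y → y ≤ 1 → 0 ≤ β y v := by
    intro y v h0 h1
    simp only [β, Finsupp.add_apply, Finsupp.single_apply]
    split_ifs <;> linarith
  have hVg : ∀ i y s, 0 ≤ y → y ≤ 1 → 0 ≤ s → s ≤ 1 → Good L (V i y s) := by
    intro i y s hy0 hy1 hs0 hs1
    refine ⟨fun v => ?_, ?_, ?_⟩
    · simp only [V, Finsupp.add_apply, Finsupp.smul_apply, smul_eq_mul]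
      exact add_nonneg (mul_nonneg (by linarith) (h0 i v)) (mul_nonneg hs0 (hβ0 y v hy0 hy1))
    · simp only [V, β, map_add, map_smul, h1, mass_single, smul_eq_mul]; ring
    · obtain ⟨F, hF, haF, hbF, hv⟩ := hF i
      refine ⟨F, hF, fun v hvF => ?_⟩
      have e1 : a ≠ v := fun h => hvF (h ▸ haF)
      have e2 : b ≠ v := fun h => hvF (h ▸ hbF)
      simp [V, β, hv v hvF, Finsupp.single_apply, e1, e2]
  refine no_K33 hs τ (fun j => β (x j)) (fun i j s => V i (x j) s)
    (fun i j s => hVg _ _ _ (hx0 j) (hx1 j)) ?_ ?_ ?_ ?_ (V 0 (2 / 3) (1 / 2))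
    (hVg _ _ _ (by norm_num) (by norm_num) (by norm_num) (by norm_num)) ?_
  · intro i j
    simp only [V, map_add, map_smul]
    fun_prop
  · intro i j; simp [V]
  · intro i j; simp [V]
  · intro i j k l hik hjl s r _ _ _ _ h
    have e1 := DFunLike.congr_fun h a
    have e2 := DFunLike.congr_fun h b
    rw [hVa, hVa] at e1
    rw [hVb, hVb] at e2
    have e3 : s = r := by linarith
    subst e3
    by_cases hs0 : s = 0
    · subst hs0
      simp [V] at h
      exact hik (hi h)
    · exact hxi j l hjl (mul_left_cancel₀ hs0 e1)
  · intro i j s _ _ h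
    have e1 := DFunLike.congr_fun h a
    have e2 := DFunLike.congr_fun h b
    rw [hVa, hVa] at e1
    rw [hVb, hVb] at e2
    have e3 : s = 1 / 2 := by linarith
    subst e3
    exact hx2 j (by linarith)

theorem three_pages (hs : Nonempty (L.space ≃ₜ (Metric.sphere (0 : E3) 1 : Set E3)))
    (a b x y z : E3) (hab : a ≠ b) (hxa : x ≠ a) (hxb : x ≠ b) (hya : y ≠ a) (hyb : y ≠ b)
    (hza : z ≠ a) (hzb : z ≠ b) (hxy : x ≠ y) (hxz : x ≠ z) (hyz : y ≠ z)
    (hx : ({a, b, x} : Finset E3) ∈ L.faces) (hy : ({a, b, y} : Finset E3) ∈ L.faces)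
    (hz : ({a, b, z} : Finset E3) ∈ L.faces) : False := by
  let f : Fin 3 → E3 := ![x, y, z]
  have hfi : Function.Injective f := by
    intro i j; fin_cases i <;> fin_cases j <;>
      simp [f, hxy, hxz, hyz, hxy.symm, hxz.symm, hyz.symm]
  have hfa : ∀ i, f i ≠ a := by intro i; fin_cases i <;> simp [f, hxa, hya, hza]
  have hfb : ∀ i, f i ≠ b := by intro i; fin_cases i <;> simp [f, hxb, hyb, hzb]
  have hff : ∀ i, ({a, b, f i} : Finset E3) ∈ L.faces := by
    intro i; fin_cases i <;> simpa [f]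
  refine book hs a b hab (fun i => Finsupp.single (f i) 1) ?_ ?_ ?_ ?_ ?_ ?_
  · intro i v; simp only [Finsupp.single_apply]; split_ifs <;> norm_num
  · intro i; simp
  · intro i; simp [Finsupp.single_apply, hfa]
  · intro i; simp [Finsupp.single_apply, hfb]
  · intro i j h; exact hfi (Finsupp.single_left_injective one_ne_zero h)
  · intro i
    refine ⟨_, hff i, by simp, by simp, fun v hv => ?_⟩
    have : f i ≠ v := by rintro rfl; simp at hv
    simp [Finsupp.single_apply, this]

theorem card_le (hs : Nonempty (L.space ≃ₜ (Metric.sphere (0 : E3) 1 : Set E3)))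
    (F : Finset E3) (hF : F ∈ L.faces) : F.card ≤ 3 := by
  by_contra hcon
  push Not at hcon
  obtain ⟨a, haF⟩ : F.Nonempty := Finset.card_pos.1 (by omega)
  have h2 : 2 < (F.erase a).card := by rw [Finset.card_erase_of_mem haF]; omega
  obtain ⟨b, x, y, hb, hx, hy, hbx, hby, hxy⟩ := Finset.two_lt_card_iff.1 h2
  simp only [Finset.mem_erase] at hb hx hy
  let τ : Fin 3 → E3 →₀ ℝ := ![Finsupp.single x 1, Finsupp.single y 1,
    Finsupp.single x (1 / 2) + Finsupp.single y (1 / 2)]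
  have e : ∀ i v, v ≠ x → v ≠ y → τ i v = 0 := by
    intro i v h1 h2
    fin_cases i <;> simp [τ, Finsupp.single_apply, h1.symm, h2.symm]
  refine book hs a b hb.1.symm τ ?_ ?_ ?_ ?_ ?_ ?_
  · intro i v
    fin_cases i <;> simp [τ, Finsupp.single_apply] <;> split_ifs <;> norm_num
  · intro i; fin_cases i <;> norm_num [τ]
  · intro i; exact e i a hx.1.symm hy.1.symm
  · intro i; exact e i b hbx hby
  · intro i j h
    have := DFunLike.congr_fun h x
    revert this
    fin_cases i <;> fin_cases j <;> norm_num [τ, Finsupp.single_apply, hxy, hxy.symm]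
  · intro i
    refine ⟨F, hF, haF, hb.2, fun v hv => e i v ?_ ?_⟩
    · rintro rfl; exact hv hx.2
    · rintro rfl; exact hv hy.2

noncomputable def emb (x : Fin 7 → E3) (w : Fin 7 → ℝ) : E3 →₀ ℝ :=
  ∑ k, Finsupp.single (x k) (w k)

theorem emb_apply (x : Fin 7 → E3) (hx : Function.Injective x) (w : Fin 7 → ℝ) (k : Fin 7) :
    emb x w (x k) = w k := by
  simp [emb, Finsupp.finsetSum_apply, Finsupp.single_apply, hx.eq_iff]

theorem emb_inj (x : Fin 7 → E3) (hx : Function.Injective x) (w w' : Fin 7 → ℝ)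
    (h : emb x w = emb x w') : w = w' := by
  funext k; rw [← emb_apply x hx w, h, emb_apply x hx]

theorem emb_good (x : Fin 7 → E3) (w : Fin 7 → ℝ) (h0 : ∀ k, 0 ≤ w k)
    (h1 : ∑ k, w k = 1) (F : Finset E3) (hF : F ∈ L.faces) (h : ∀ k, x k ∈ F ∨ w k = 0) :
    Good L (emb x w) := by
  refine ⟨fun v => ?_, ?_, F, hF, fun v hv => ?_⟩
  · rw [emb, Finsupp.finsetSum_apply]
    refine Finset.sum_nonneg fun k _ => ?_
    rw [Finsupp.single_apply]; split_ifs
    · exact h0 k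
    · exact le_rfl
  · simp [emb, h1]
  · rw [emb, Finsupp.finsetSum_apply]
    refine Finset.sum_eq_zero fun k _ => ?_
    rw [Finsupp.single_apply]; split_ifs with hk
    · rcases h k with h | h
      · exact absurd (hk ▸ h) hv
      · exact h
    · rfl

/-- weights of the nine paths on the seven vertices -/
noncomputable def cw : Fin 3 → Fin 3 → ℝ → Fin 7 → ℝ := fun i j s =>
  (![![![0, 0, 1 - s, s, 0, 0, 0],
      ![s / 2, s / 2, 1 - s, 0, 0, 0, 0],
      ![0, 0, 1 - s, 0, s, 0, 0]],
    ![![0, 1 - s, 0, s, 0, 0, 0],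
      ![s / 2, 1 - s / 2, 0, 0, 0, 0, 0],
      ![0, max 0 (1 - 2 * s), 0, 0, max 0 (2 * s - 1), 0,
        1 - max 0 (1 - 2 * s) - max 0 (2 * s - 1)]],
    ![![max 0 (1 - 2 * s), 0, 0, max 0 (2 * s - 1), 0,
        1 - max 0 (1 - 2 * s) - max 0 (2 * s - 1), 0],
      ![1 - s / 2, s / 2, 0, 0, 0, 0, 0],
      ![1 - s, 0, 0, 0, s, 0, 0]]] : Fin 3 → Fin 3 → Fin 7 → ℝ) i j

theorem maxfacts (s : ℝ) (h0 : 0 ≤ s) (h1 : s ≤ 1) : 0 ≤ max 0 (1 - 2 * s) ∧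
    0 ≤ max 0 (2 * s - 1) ∧ max 0 (1 - 2 * s) + max 0 (2 * s - 1) ≤ 1 := by
  refine ⟨le_max_left _ _, le_max_left _ _, ?_⟩
  rcases le_total (2 * s) 1 with h | h
  · rw [max_eq_right (by linarith), max_eq_left (by linarith)]; linarith
  · rw [max_eq_left (by linarith), max_eq_right (by linarith)]; linarith

theorem cw_ne (i j k l : Fin 3) (hik : i ≠ k) (hjl : j ≠ l) (s r : ℝ) (hs0 : 0 ≤ s) (hs1 : s ≤ 1)
    (hr0 : 0 ≤ r) (hr1 : r ≤ 1) : cw i j s ≠ cw k l r := by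
  intro h
  obtain ⟨a1, a2, a3⟩ := maxfacts s hs0 hs1
  obtain ⟨b1, b2, b3⟩ := maxfacts r hr0 hr1
  have e0 := congrFun h 0
  have e1 := congrFun h 1
  have e2 := congrFun h 2
  have e3 := congrFun h 3
  have e4 := congrFun h 4
  have e5 := congrFun h 5
  have e6 := congrFun h 6
  clear h
  simp only [cw] at e0 e1 e2 e3 e4 e5 e6
  generalize max 0 (1 - 2 * s) = m1 at *
  generalize max 0 (2 * s - 1) = m2 at *
  generalize max 0 (1 - 2 * r) = n1 at *
  generalize max 0 (2 * r - 1) = n2 at *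
  fin_cases i <;> fin_cases k <;> first | exact hik rfl | (
    fin_cases j <;> fin_cases l <;> first | exact hjl rfl | (
      simp [Matrix.cons_val] at e0 e1 e2 e3 e4 e5 e6
      linarith))

theorem cw_cont (i j : Fin 3) (k : Fin 7) : Continuous fun s => cw i j s k := by
  simp only [cw]
  fin_cases i <;> fin_cases j <;> fin_cases k <;> simp [Matrix.cons_val] <;> fun_prop

theorem cw_ne_q (i j : Fin 3) (s : ℝ) : cw i j s ≠ ![0, 1 / 3, 1 / 3, 1 / 3, 0, 0, 0] := by
  intro h
  have e1 := congrFun h 1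
  have e2 := congrFun h 2
  have e3 := congrFun h 3
  clear h
  simp only [cw] at e1 e2 e3
  fin_cases i <;> fin_cases j <;> simp [Matrix.cons_val] at e1 e2 e3

set_option maxHeartbeats 1000000 in
theorem crossing (hs : Nonempty (L.space ≃ₜ (Metric.sphere (0 : E3) 1 : Set E3)))
    (t a b t' u' c d : E3) (hnd : [t, a, b, t', u', c, d].Nodup)
    (f1 : ({t, a, b} : Finset E3) ∈ L.faces) (f2 : ({t', a, b} : Finset E3) ∈ L.faces)
    (f3 : ({t, u'} : Finset E3) ∈ L.faces) (f4 : ({b, u'} : Finset E3) ∈ L.faces)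
    (f5 : ({t, c} : Finset E3) ∈ L.faces) (f6 : ({t', c} : Finset E3) ∈ L.faces)
    (f7 : ({a, d} : Finset E3) ∈ L.faces) (f8 : ({u', d} : Finset E3) ∈ L.faces) : False := by
  let x : Fin 7 → E3 := ![t, a, b, t', u', c, d]
  have hx : Function.Injective x := by
    have := List.nodup_iff_injective_get.1 hnd
    intro i j h
    apply this
    fin_cases i <;> fin_cases j <;> simpa [x] using h
  have hgood : ∀ i j s, 0 ≤ s → s ≤ 1 → Good L (emb x (cw i j s)) := by
    intro i j s h0 h1
    obtain ⟨a1, a2, a3⟩ := maxfacts s h0 h1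
    have hn : ∀ k, 0 ≤ cw i j s k := by
      intro k
      simp only [cw]
      generalize max 0 (1 - 2 * s) = m1 at *
      generalize max 0 (2 * s - 1) = m2 at *
      fin_cases i <;> fin_cases j <;> fin_cases k <;> simp [Matrix.cons_val] <;> linarith
    have hm : ∑ k, cw i j s k = 1 := by
      rw [Fin.sum_univ_seven]
      simp only [cw]
      generalize max 0 (1 - 2 * s) = m1 at *
      generalize max 0 (2 * s - 1) = m2 at *
      fin_cases i <;> fin_cases j <;> simp [Matrix.cons_val]
    have hf : ∃ F ∈ L.faces, ∀ k, x k ∈ F ∨ cw i j s k = 0 := by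
      have fm : ∀ F : Finset E3, F ∈ L.faces → (x 0 ∈ F ∨ cw i j s 0 = 0) →
          (x 1 ∈ F ∨ cw i j s 1 = 0) → (x 2 ∈ F ∨ cw i j s 2 = 0) →
          (x 3 ∈ F ∨ cw i j s 3 = 0) → (x 4 ∈ F ∨ cw i j s 4 = 0) →
          (x 5 ∈ F ∨ cw i j s 5 = 0) → (x 6 ∈ F ∨ cw i j s 6 = 0) →
          ∃ F ∈ L.faces, ∀ k, x k ∈ F ∨ cw i j s k = 0 := by
        intro F hF h0 h1 h2 h3 h4 h5 h6
        refine ⟨F, hF, fun k => ?_⟩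
        fin_cases k <;> assumption
      fin_cases i <;> fin_cases j
      · apply fm _ f2 <;> simp [x, cw, Matrix.cons_val]
      · apply fm _ f1 <;> simp [x, cw, Matrix.cons_val]
      · apply fm _ f4 <;> simp [x, cw, Matrix.cons_val]
      · apply fm _ f2 <;> simp [x, cw, Matrix.cons_val]
      · apply fm _ f1 <;> simp [x, cw, Matrix.cons_val]
      · rcases le_total (2 * s) 1 with h | h
        · apply fm _ f7 <;> simp [x, cw, Matrix.cons_val, h]
        · apply fm _ f8 <;> simp [x, cw, Matrix.cons_val, h]
      · rcases le_total (2 * s) 1 with h | h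
        · apply fm _ f5 <;> simp [x, cw, Matrix.cons_val, h]
        · apply fm _ f6 <;> simp [x, cw, Matrix.cons_val, h]
      · apply fm _ f1 <;> simp [x, cw, Matrix.cons_val]
      · apply fm _ f3 <;> simp [x, cw, Matrix.cons_val]
    obtain ⟨F, hF, hk⟩ := hf
    exact emb_good x _ hn hm F hF hk
  have hq : Good L (emb x ![0, 1 / 3, 1 / 3, 1 / 3, 0, 0, 0]) := by
    refine emb_good x _ ?_ ?_ _ f2 ?_
    · intro k; fin_cases k <;> norm_num [Matrix.cons_val]
    · rw [Fin.sum_univ_seven]; simp [Matrix.cons_val]; norm_num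
    · intro k; fin_cases k <;> simp [x, Matrix.cons_val]
  refine no_K33 hs (fun i => emb x (cw i 0 0)) (fun j => emb x (cw 0 j 1))
    (fun i j s => emb x (cw i j s)) hgood ?_ ?_ ?_ ?_ _ hq ?_
  · intro i j
    simp only [emb, map_sum, pt_single]
    refine continuous_finsetSum _ fun k _ => ?_
    have := cw_cont i j k
    fun_prop
  · intro i j
    congr 1
    funext k
    simp only [cw]
    fin_cases i <;> fin_cases j <;> fin_cases k <;> norm_num [Matrix.cons_val]
  · intro i j
    congr 1
    funext k
    simp only [cw]
    fin_cases i <;> fin_cases j <;> fin_cases k <;> norm_num [Matrix.cons_val]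
  · intro i j k l hik hjl s r h1 h2 h3 h4 h
    exact cw_ne i j k l hik hjl s r h1 h2 h3 h4 (emb_inj x hx _ _ h)
  · intro i j s _ _ h
    exact cw_ne_q i j s (emb_inj x hx _ _ h)

end Geo

namespace Comb

variable {L : SimplicialComplex ℝ E3} {m : E3 → E3 → ℕ}

theorem mem_join {Z : Set (Finset E3)} {t t' : E3} {F : Finset E3} :
    F ∈ joinSusp Z t t' ↔ F ∈ Z ∨ F = {t} ∨ F = {t'} ∨ (∃ G ∈ Z, insert t G = F) ∨
      (∃ G ∈ Z, insert t' G = F) := by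
  simp only [joinSusp, Set.mem_union, Set.mem_insert_iff, Set.mem_singleton_iff, Set.mem_image, or_assoc]

theorem join_comm (Z : Set (Finset E3)) (t t' : E3) : joinSusp Z t t' = joinSusp Z t' t := by
  ext F; rw [mem_join, mem_join]
  generalize (∃ G ∈ Z, insert t G = F) = p
  generalize (∃ G ∈ Z, insert t' G = F) = q
  tauto

theorem join_mono {Z W : Set (Finset E3)} (h : Z ⊆ W) (t t' : E3) :
    joinSusp Z t t' ⊆ joinSusp W t t' := by
  intro F; rw [mem_join, mem_join]
  rintro (h1 | h1 | h1 | ⟨G, h1, h2⟩ | ⟨G, h1, h2⟩)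
  · exact .inl (h h1)
  · tauto
  · tauto
  · exact .inr (.inr (.inr (.inl ⟨G, h h1, h2⟩)))
  · exact .inr (.inr (.inr (.inr ⟨G, h h1, h2⟩)))

structure Q (L : SimplicialComplex ℝ E3) (m : E3 → E3 → ℕ) (S Z : Set (Finset E3))
    (t t' : E3) : Prop where
  d : IsRASuspData L m S Z t t'
  inf : InfiniteBase Z
  full : IsFullSubcomplex L Z
  max : ∀ T', IsRASusp L m T' → S ⊆ T' → S = T'

variable {S T Z W : Set (Finset E3)} {t t' u u' a b : E3}

theorem Q.swap (h : Q L m S Z t t') : Q L m S Z t' t where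
  d := { subset := h.d.subset
         zsubset := h.d.zsubset
         zdown := h.d.zdown
         znonempty := h.d.znonempty
         tne := h.d.tne.symm
         t_notin := h.d.t'_notin
         t'_notin := h.d.t_notin
         labels := fun v hv => (h.d.labels v hv).symm
         eq := by rw [h.d.eq, join_comm] }
  inf := h.inf
  full := h.full
  max := h.max

theorem Q.mem (h : Q L m S Z t t') {F : Finset E3} : F ∈ S ↔ F ∈ Z ∨ F = {t} ∨ F = {t'} ∨
    (∃ G ∈ Z, insert t G = F) ∨ (∃ G ∈ Z, insert t' G = F) := by
  rw [h.d.eq, mem_join]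

theorem Q.ins (h : Q L m S Z t t') {F : Finset E3} (hF : F ∈ Z) : insert t F ∈ L.faces :=
  h.d.subset (h.mem.2 (.inr (.inr (.inr (.inl ⟨F, hF, rfl⟩)))))

theorem Q.vert (h : Q L m S Z t t') : ({t} : Finset E3) ∈ L.faces :=
  h.d.subset (h.mem.2 (.inr (.inl rfl)))

theorem Q.edge (h : Q L m S Z t t') {v : E3} (hv : ({v} : Finset E3) ∈ Z) :
    ({t, v} : Finset E3) ∈ L.faces := h.ins hv

theorem Q.ne (h : Q L m S Z t t') {v : E3} (hv : ({v} : Finset E3) ∈ Z) : v ≠ t := by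
  rintro rfl; exact h.d.t_notin _ hv (by simp)

theorem Q.lab (h : Q L m S Z t t') {v : E3} (hv : ({v} : Finset E3) ∈ Z) : m t v = 2 :=
  (h.d.labels v hv).1

theorem Q.nemp (h : Q L m S Z t t') {F : Finset E3} (hF : F ∈ Z) : F.Nonempty :=
  L.nonempty_of_mem_faces (h.d.zsubset hF)

theorem Q.sub1 (h : Q L m S Z t t') {F : Finset E3} (hF : F ∈ Z) {v : E3} (hv : v ∈ F) :
    ({v} : Finset E3) ∈ Z :=
  h.d.zdown F hF _ (by simpa using hv) (by simp)

theorem Q.zcard (hL : IsLabeledS2 L m) (h : Q L m S Z t t') {F : Finset E3} (hF : F ∈ Z) :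
    F.card ≤ 2 := by
  have h1 := Geo.card_le hL.sphere _ (h.ins hF)
  rw [Finset.card_insert_of_notMem (h.d.t_notin F hF)] at h1
  omega

theorem Q.third (h : Q L m S Z t t') (hab : a ≠ b) (he : ({a, b} : Finset E3) ∈ Z) :
    ∃ c, ({c} : Finset E3) ∈ Z ∧ c ≠ a ∧ c ≠ b := by
  by_contra hcon
  push Not at hcon
  have hh : ∀ c, ({c} : Finset E3) ∈ Z → c = a ∨ c = b := by
    intro c hc
    by_cases hca : c = a
    · exact .inl hca
    · exact .inr (hcon c hc hca)
  apply h.inf.2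
  refine ⟨a, b, hab, ?_⟩
  ext F
  simp only [Set.mem_insert_iff, Set.mem_singleton_iff]
  constructor
  · intro hF
    have hs : F ⊆ {a, b} := by
      intro v hv
      simpa using hh v (h.sub1 hF hv)
    have hn := h.nemp hF
    have hs' : ∀ v ∈ F, v = a ∨ v = b := by
      intro v hv
      simpa using hs hv
    obtain ⟨w, hw⟩ := hn
    by_cases h1 : a ∈ F <;> by_cases h2 : b ∈ F
    · right; right; ext x
      rw [Finset.mem_insert, Finset.mem_singleton]
      exact ⟨hs' x, by rintro (rfl | rfl) <;> assumption⟩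
    · left; ext x
      rw [Finset.mem_singleton]
      refine ⟨fun hx => ?_, by rintro rfl; assumption⟩
      rcases hs' x hx with h3 | h3
      · exact h3
      · exact absurd (h3 ▸ hx) h2
    · right; left; ext x
      rw [Finset.mem_singleton]
      refine ⟨fun hx => ?_, by rintro rfl; assumption⟩
      rcases hs' x hx with h3 | h3
      · exact absurd (h3 ▸ hx) h1
      · exact h3
    · rcases hs' w hw with h3 | h3
      · exact absurd (h3 ▸ hw) h1
      · exact absurd (h3 ▸ hw) h2
  · rintro (rfl | rfl | rfl)
    · exact h.sub1 he (by simp)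
    · exact h.sub1 he (by simp)
    · exact he

theorem edge_symm {x y : E3} (h : ({x, y} : Finset E3) ∈ L.faces) :
    ({y, x} : Finset E3) ∈ L.faces := by rwa [Finset.pair_comm]

/-- two right angles force a triangle -/
theorem flag2 (hL : IsLabeledS2 L m) (hf : MetricFlag L m) {x y z : E3} (hxy : x ≠ y)
    (hyz : y ≠ z) (hxz : x ≠ z) (e1 : ({x, y} : Finset E3) ∈ L.faces)
    (e2 : ({y, z} : Finset E3) ∈ L.faces) (e3 : ({x, z} : Finset E3) ∈ L.faces)
    (m1 : m x y = 2) (m2 : m x z = 2) : ({x, y, z} : Finset E3) ∈ L.faces := by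
  rw [hf x y z hxy hyz hxz e1 e2 e3, hL.symm z x, m1, m2]
  have := hL.two_le y z hyz e2
  have : (0 : ℝ) < m y z := by exact_mod_cast (by omega)
  have : (0 : ℝ) < 1 / m y z := by positivity
  push_cast
  linarith

theorem Q.nonadj (hL : IsLabeledS2 L m) (hf : MetricFlag L m) (h : Q L m S Z t t')
    (hab : a ≠ b) (he : ({a, b} : Finset E3) ∈ Z) : ({t, t'} : Finset E3) ∉ L.faces := by
  intro htt
  obtain ⟨c, hc, hca, hcb⟩ := h.third hab he
  have key : ∀ v, ({v} : Finset E3) ∈ Z → ({t, t', v} : Finset E3) ∈ L.faces := by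
    intro v hv
    have := flag2 hL hf (h.ne hv) h.d.tne (h.swap.ne hv) (edge_symm (h.edge hv)) htt
      (edge_symm (h.swap.edge hv)) (by rw [hL.symm]; exact h.lab hv)
      (by rw [hL.symm]; exact h.swap.lab hv)
    convert this using 1
    ext x; simp; tauto
  have ha := h.sub1 he (v := a) (by simp)
  have hb := h.sub1 he (v := b) (by simp)
  exact Geo.three_pages hL.sphere t t' a b c h.d.tne (h.ne ha) (h.swap.ne ha) (h.ne hb)
    (h.swap.ne hb) (h.ne hc) (h.swap.ne hc) hab hca.symm hcb.symm (key a ha) (key b hb) (key c hc)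

/-- extending a maximal suspension -/
theorem Q.extend (h : Q L m S Z t t') (Z0 : Set (Finset E3)) (p q : E3)
    (hz : Z0 ⊆ L.faces) (hd : ∀ F ∈ Z0, ∀ G : Finset E3, G ⊆ F → G.Nonempty → G ∈ Z0)
    (hn : Z0.Nonempty) (hpq : p ≠ q) (hp : ∀ F ∈ Z0, p ∉ F) (hq : ∀ F ∈ Z0, q ∉ F)
    (hl : ∀ v : E3, ({v} : Finset E3) ∈ Z0 → m p v = 2 ∧ m q v = 2)
    (hip : ∀ F ∈ Z0, insert p F ∈ L.faces) (hiq : ∀ F ∈ Z0, insert q F ∈ L.faces)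
    (hsub : S ⊆ joinSusp Z0 p q) : S = joinSusp Z0 p q := by
  apply h.max _ _ hsub
  refine ⟨Z0, p, q, ?_, hz, hd, hn, hpq, hp, hq, hl, rfl⟩
  intro F hF
  obtain ⟨G, hG⟩ := hn
  rcases mem_join.1 hF with h1 | h1 | h1 | ⟨G, h1, rfl⟩ | ⟨G, h1, rfl⟩
  · exact hz h1
  · exact L.down_closed (hip G hG) (by rw [h1]; simp) (by simp [h1])
  · exact L.down_closed (hiq G hG) (by rw [h1]; simp) (by simp [h1])
  · exact hip G h1
  · exact hiq G h1

theorem shape (hL : IsLabeledS2 L m) (h : Q L m S Z t t') {F : Finset E3} (hF : F ∈ S)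
    (hc : F.card = 3) : ∃ s s', Q L m S Z s s' ∧ ∃ G ∈ Z, insert s G = F ∧ G.card = 2 := by
  rcases h.mem.1 hF with h1 | h1 | h1 | ⟨G, h1, rfl⟩ | ⟨G, h1, rfl⟩
  · have := h.zcard hL h1; omega
  · rw [h1] at hc; simp at hc
  · rw [h1] at hc; simp at hc
  · refine ⟨t, t', h, G, h1, rfl, ?_⟩
    rw [Finset.card_insert_of_notMem (h.d.t_notin G h1)] at hc; omega
  · refine ⟨t', t, h.swap, G, h1, rfl, ?_⟩
    rw [Finset.card_insert_of_notMem (h.d.t'_notin G h1)] at hc; omega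

/-- same suspension points -/
theorem same (h : Q L m S Z t t') (k : Q L m T W t t') : S = T := by
  have hx := h.extend (Z ∪ W) t t' (Set.union_subset h.d.zsubset k.d.zsubset)
    (by rintro F (hF | hF) G hG hn
        · exact .inl (h.d.zdown F hF G hG hn)
        · exact .inr (k.d.zdown F hF G hG hn))
    (h.d.znonempty.mono Set.subset_union_left) h.d.tne
    (by rintro F (hF | hF); exacts [h.d.t_notin F hF, k.d.t_notin F hF])
    (by rintro F (hF | hF); exacts [h.d.t'_notin F hF, k.d.t'_notin F hF])
    (by rintro F (hF | hF); exacts [h.d.labels F hF, k.d.labels F hF])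
    (by rintro F (hF | hF); exacts [h.ins hF, k.ins hF])
    (by rintro F (hF | hF); exacts [h.swap.ins hF, k.swap.ins hF])
    (by rw [h.d.eq]; exact join_mono Set.subset_union_left _ _)
  symm
  apply k.max S ⟨Z, t, t', h.d⟩
  rw [hx, k.d.eq]
  exact join_mono Set.subset_union_right _ _

theorem case1 (hL : IsLabeledS2 L m) (h : Q L m S Z t t') (k : Q L m T W t u')
    (hab : a ≠ b) (he : ({a, b} : Finset E3) ∈ Z) (he' : ({a, b} : Finset E3) ∈ W) : S = T := by
  by_cases htu : t' = u'
  · subst htu; exact same h k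
  exfalso
  have ha := h.sub1 he (v := a) (by simp)
  have hb := h.sub1 he (v := b) (by simp)
  have ha' := k.sub1 he' (v := a) (by simp)
  have hb' := k.sub1 he' (v := b) (by simp)
  have rot : ∀ x : E3, insert x ({a, b} : Finset E3) = {a, b, x} := by
    intro x; ext y; simp; tauto
  refine Geo.three_pages hL.sphere a b t t' u' hab (h.ne ha).symm (h.ne hb).symm
    (h.swap.ne ha).symm (h.swap.ne hb).symm (k.swap.ne ha').symm (k.swap.ne hb').symm
    h.d.tne k.d.tne htu ?_ ?_ ?_
  · rw [← rot]; exact h.ins he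
  · rw [← rot]; exact h.swap.ins he
  · rw [← rot]; exact k.swap.ins he'

structure Cfg (L : SimplicialComplex ℝ E3) (m : E3 → E3 → ℕ) (S Z : Set (Finset E3))
    (t t' : E3) (T W : Set (Finset E3)) (a u' b : E3) : Prop where
  h : Q L m S Z t t'
  k : Q L m T W a u'
  ab : a ≠ b
  tb : t ≠ b
  e : ({a, b} : Finset E3) ∈ Z
  f : ({t, b} : Finset E3) ∈ W

theorem Cfg.symm (c : Cfg L m S Z t t' T W a u' b) : Cfg L m T W a u' S Z t t' b :=
  ⟨c.k, c.h, c.tb, c.ab, c.f, c.e⟩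

theorem Cfg.aZ (c : Cfg L m S Z t t' T W a u' b) : ({a} : Finset E3) ∈ Z := c.h.sub1 c.e (by simp)
theorem Cfg.bZ (c : Cfg L m S Z t t' T W a u' b) : ({b} : Finset E3) ∈ Z := c.h.sub1 c.e (by simp)
theorem Cfg.tW (c : Cfg L m S Z t t' T W a u' b) : ({t} : Finset E3) ∈ W := c.k.sub1 c.f (by simp)
theorem Cfg.bW (c : Cfg L m S Z t t' T W a u' b) : ({b} : Finset E3) ∈ W := c.k.sub1 c.f (by simp)

theorem Cfg.ntt (hL : IsLabeledS2 L m) (hf : MetricFlag L m)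
    (c : Cfg L m S Z t t' T W a u' b) : ({t, t'} : Finset E3) ∉ L.faces :=
  c.h.nonadj hL hf c.ab c.e

theorem Cfg.nau (hL : IsLabeledS2 L m) (hf : MetricFlag L m)
    (c : Cfg L m S Z t t' T W a u' b) : ({a, u'} : Finset E3) ∉ L.faces :=
  c.symm.ntt hL hf

theorem Cfg.tune (hL : IsLabeledS2 L m) (hf : MetricFlag L m)
    (c : Cfg L m S Z t t' T W a u' b) : t' ≠ u' := by
  rintro rfl
  exact c.ntt hL hf (edge_symm (c.k.swap.edge c.tW))

theorem Cfg.cross (hL : IsLabeledS2 L m) (hf : MetricFlag L m)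
    (C : Cfg L m S Z t t' T W a u' b) {c d : E3} (hc : ({c} : Finset E3) ∈ Z) (hca : c ≠ a)
    (hcb : c ≠ b) (hd : ({d} : Finset E3) ∈ W) (hdt : d ≠ t) (hdb : d ≠ b) :
    c = u' ∨ d = t' ∨ c = d := by
  by_contra hcon
  push Not at hcon
  obtain ⟨n1, n2, n3⟩ := hcon
  refine Geo.crossing hL.sphere t a b t' u' c d ?_ (C.h.ins C.e) (C.h.swap.ins C.e)
    (edge_symm (C.k.swap.edge C.tW)) (edge_symm (C.k.swap.edge C.bW)) (C.h.edge hc)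
    (C.h.swap.edge hc) (C.k.edge hd) (C.k.swap.edge hd)
  have q1 := C.h.ne C.aZ
  have q2 := C.tb
  have q3 := C.h.d.tne
  have q4 := C.k.swap.ne C.tW
  have q5 := C.h.ne hc
  have q6 := C.ab
  have q7 := C.h.swap.ne C.aZ
  have q8 := C.k.d.tne
  have q9 := C.k.ne hd
  have q10 := C.h.swap.ne C.bZ
  have q11 := C.k.swap.ne C.bW
  have q12 := C.tune hL hf
  have q13 := C.h.swap.ne hc
  have q14 := C.k.swap.ne hd
  simp only [List.nodup_cons, List.mem_cons, List.not_mem_nil, or_false, not_or,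
    List.nodup_nil, not_false_eq_true, and_true]
  grind

theorem Cfg.lemX (hL : IsLabeledS2 L m)
    (C : Cfg L m S Z t t' T W a u' b) (hu : ({u'} : Finset E3) ∈ Z) :
    ({t'} : Finset E3) ∈ W := by
  have e1 := C.h.swap.edge C.aZ
  have e2 := C.h.swap.edge hu
  have n1 := C.h.swap.ne C.aZ
  have n2 := C.h.swap.ne hu
  have hx := C.k.extend (W ∪ {{t'}}) a u'
    (Set.union_subset C.k.d.zsubset (by simpa using C.h.swap.vert))
    (by rintro F (hF | hF) G hG hn
        · exact .inl (C.k.d.zdown F hF G hG hn)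
        · right
          rw [Set.mem_singleton_iff] at hF ⊢
          rw [hF, Finset.subset_singleton_iff] at hG
          rcases hG with rfl | hG
          · simp at hn
          · exact hG)
    (C.k.d.znonempty.mono Set.subset_union_left) C.k.d.tne
    (by rintro F (hF | rfl)
        · exact C.k.d.t_notin F hF
        · simpa using n1)
    (by rintro F (hF | rfl)
        · exact C.k.d.t'_notin F hF
        · simpa using n2)
    (by rintro F (hF | hF)
        · exact C.k.d.labels F hF
        · rw [Set.mem_singleton_iff, Finset.singleton_inj] at hF
          subst hF
          rw [hL.symm a, hL.symm u']
          exact ⟨C.h.swap.lab C.aZ, C.h.swap.lab hu⟩)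
    (by rintro F (hF | rfl)
        · exact C.k.ins hF
        · exact edge_symm e1)
    (by rintro F (hF | rfl)
        · exact C.k.swap.ins hF
        · exact edge_symm e2)
    (by rw [C.k.d.eq]; exact join_mono Set.subset_union_left _ _)
  have ht : ({t'} : Finset E3) ∈ T := by
    rw [hx, mem_join]; left; right; rfl
  rcases C.k.mem.1 ht with h1 | h1 | h1 | ⟨G, h1, h2⟩ | ⟨G, h1, h2⟩
  · exact h1
  · exact absurd (Finset.singleton_inj.1 h1).symm n1
  · exact absurd (Finset.singleton_inj.1 h1).symm n2
  · exact absurd (Finset.mem_singleton.1 (h2 ▸ Finset.mem_insert_self a G)) n1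
  · exact absurd (Finset.mem_singleton.1 (h2 ▸ Finset.mem_insert_self u' G)) n2

theorem card_two_cases {F : Finset E3} (hn : F.Nonempty) (hc : F.card ≤ 2) :
    (∃ x, F = {x}) ∨ ∃ x y, x ≠ y ∧ F = {x, y} := by
  have : 0 < F.card := hn.card_pos
  have : F.card = 1 ∨ F.card = 2 := by omega
  rcases this with h | h
  · exact .inl (Finset.card_eq_one.1 h)
  · exact .inr (Finset.card_eq_two.1 h)

theorem Cfg.lemSub (hL : IsLabeledS2 L m) (hf : MetricFlag L m)
    (C : Cfg L m S Z t t' T W a u' b) (ht : ({t'} : Finset E3) ∈ W)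
    (hall : ∀ c, ({c} : Finset E3) ∈ Z → c = a ∨ c = u' ∨ ({c} : Finset E3) ∈ W) : S = T := by
  apply C.h.max T ⟨W, a, u', C.k.d⟩
  have pair : ∀ s x : E3, ({s} : Finset E3) ∈ W → ({x} : Finset E3) ∈ W →
      ({s, x} : Finset E3) ∈ L.faces → ({s, x} : Finset E3) ∈ W := by
    intro s x hs hx he
    apply C.k.full.2 _ he
    intro v hv
    rw [Finset.mem_insert, Finset.mem_singleton] at hv
    rcases hv with rfl | rfl <;> assumption
  -- faces of W go to T, also after coning
  have inT : ∀ G ∈ W, G ∈ T ∧ insert a G ∈ T ∧ insert u' G ∈ T := fun G hG =>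
    ⟨C.k.mem.2 (.inl hG), C.k.mem.2 (.inr (.inr (.inr (.inl ⟨G, hG, rfl⟩)))),
      C.k.mem.2 (.inr (.inr (.inr (.inr ⟨G, hG, rfl⟩))))⟩
  -- two adjacent common vertices are impossible
  have noW : ∀ x y, x ≠ y → ({x, y} : Finset E3) ∈ Z → ({x} : Finset E3) ∈ W →
      ({y} : Finset E3) ∈ W → False := by
    intro x y hxy he hx hy
    have h1 : insert t ({x, y} : Finset E3) ∈ W := by
      apply C.k.full.2 _ (C.h.ins he)
      intro v hv
      simp only [Finset.mem_insert, Finset.mem_singleton] at hv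
      rcases hv with rfl | rfl | rfl
      · exact C.tW
      · assumption
      · assumption
    have h2 := C.k.zcard hL h1
    rw [Finset.card_insert_of_notMem (C.h.d.t_notin _ he), Finset.card_pair hxy] at h2
    omega
  have main : ∀ s, ({s} : Finset E3) ∈ W →
      (∀ G ∈ Z, insert s G ∈ L.faces) → ∀ G ∈ Z, G ∈ T ∧ insert s G ∈ T := by
    intro s hs hins G hG
    have one : ∀ x, ({x} : Finset E3) ∈ Z → ({x} : Finset E3) ∈ W →
        ({s, x} : Finset E3) ∈ W := fun x hx hx' => pair s x hs hx' (hins _ hx)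
    have cone : ∀ p x : E3, ({x} : Finset E3) ∈ Z → ({x} : Finset E3) ∈ W → p = a ∨ p = u' →
        ({p, x} : Finset E3) ∈ T ∧ insert s ({p, x} : Finset E3) ∈ T := by
      intro p x hx hx' hp
      rw [Finset.insert_comm]
      rcases hp with rfl | rfl
      · exact ⟨(inT _ hx').2.1, (inT _ (one x hx hx')).2.1⟩
      · exact ⟨(inT _ hx').2.2, (inT _ (one x hx hx')).2.2⟩
    rcases card_two_cases (C.h.nemp hG) (C.h.zcard hL hG) with ⟨x, rfl⟩ | ⟨x, y, hxy, rfl⟩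
    · rcases hall x hG with rfl | rfl | hx
      · refine ⟨C.k.mem.2 (by tauto), ?_⟩
        rw [Finset.pair_comm]; exact (inT _ hs).2.1
      · refine ⟨C.k.mem.2 (by tauto), ?_⟩
        rw [Finset.pair_comm]; exact (inT _ hs).2.2
      · exact ⟨(inT _ hx).1, (inT _ (one x hG hx)).1⟩
    · have hx := C.h.sub1 hG (v := x) (by simp)
      have hy := C.h.sub1 hG (v := y) (by simp)
      have bad := C.nau hL hf
      rcases or_assoc.2 (hall x hx) with hx' | hx' <;> rcases or_assoc.2 (hall y hy) with hy' | hy'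
      · exfalso
        have hb2 := C.h.d.zsubset hG
        rcases hx' with rfl | rfl <;> rcases hy' with rfl | rfl
        · exact hxy rfl
        · exact bad hb2
        · exact bad (edge_symm hb2)
        · exact hxy rfl
      · exact cone x y hy hy' hx'
      · rw [Finset.pair_comm x y]
        exact cone y x hx hx' hy'
      · exact (noW x y hxy hG hx' hy').elim
  intro F hF
  rcases C.h.mem.1 hF with h1 | h1 | h1 | ⟨G, h1, rfl⟩ | ⟨G, h1, rfl⟩
  · exact (main t C.tW (fun G hG => C.h.ins hG) F h1).1
  · rw [h1]; exact (inT _ C.tW).1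
  · rw [h1]; exact (inT _ ht).1
  · exact (main t C.tW (fun G hG => C.h.ins hG) G h1).2
  · exact (main t' ht (fun G hG => C.h.swap.ins hG) G h1).2

theorem Cfg.caseI (hL : IsLabeledS2 L m) (hf : MetricFlag L m)
    (C : Cfg L m S Z t t' T W a u' b) (hu : ({u'} : Finset E3) ∈ Z)
    (ht : ({t'} : Finset E3) ∈ W) : S = T := by
  by_cases hd : ∃ d, ({d} : Finset E3) ∈ W ∧ d ≠ t ∧ d ≠ b ∧ d ≠ t'
  · obtain ⟨d, hdW, h1, h2, h3⟩ := hd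
    apply C.lemSub hL hf ht
    intro c hc
    by_cases hca : c = a
    · exact .inl hca
    by_cases hcb : c = b
    · rw [hcb]; exact .inr (.inr C.bW)
    rcases C.cross hL hf hc hca hcb hdW h1 h2 with h | h | h
    · exact .inr (.inl h)
    · exact absurd h h3
    · rw [h]; exact .inr (.inr hdW)
  · push Not at hd
    symm
    apply C.symm.lemSub hL hf hu
    intro d hdW
    by_cases h1 : d = t
    · exact .inl h1
    by_cases h2 : d = b
    · rw [h2]; exact .inr (.inr C.bZ)
    exact .inr (.inl (hd d hdW h1 h2))

theorem Cfg.caseII (hL : IsLabeledS2 L m) (hf : MetricFlag L m)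
    (C : Cfg L m S Z t t' T W a u' b) (hu : ({u'} : Finset E3) ∉ Z)
    (ht : ({t'} : Finset E3) ∉ W) : False := by
  obtain ⟨e, heW, het, heb⟩ := C.k.third C.tb C.f
  have hcross : ∀ c, ({c} : Finset E3) ∈ Z → c = a ∨ c = b ∨ c = e := by
    intro c hc
    by_cases hca : c = a
    · exact .inl hca
    by_cases hcb : c = b
    · exact .inr (.inl hcb)
    rcases C.cross hL hf hc hca hcb heW het heb with h | h | h
    · exact absurd (h ▸ hc) hu
    · exact absurd (h ▸ heW) ht
    · exact .inr (.inr h)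
  obtain ⟨c, hcZ, hca, hcb⟩ := C.h.third C.ab C.e
  have heZ : ({e} : Finset E3) ∈ Z := by
    rcases hcross c hcZ with h | h | h
    · exact absurd h hca
    · exact absurd h hcb
    · rwa [← h]
  have q0 := C.h.ne heZ
  have q1 := C.h.swap.ne heZ
  have q2 := C.k.ne heW
  have q3 := C.k.swap.ne heW
  have q4 := C.h.ne C.aZ
  have q5 := C.h.swap.ne C.aZ
  have q6 := C.k.swap.ne C.tW
  have q7 := C.h.swap.ne C.bZ
  have q8 := C.k.swap.ne C.bW
  have q9 := C.tune hL hf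
  have q10 := C.tb
  have q11 := C.ab
  have ft : ({t, a, b} : Finset E3) ∈ L.faces := C.h.ins C.e
  have ft' : ({t', a, b} : Finset E3) ∈ L.faces := C.h.swap.ins C.e
  have fu' : ({u', t, b} : Finset E3) ∈ L.faces := C.k.swap.ins C.f
  have hbe : ({b, e} : Finset E3) ∉ Z := by
    intro hbe
    have f3 : ({t, b, e} : Finset E3) ∈ L.faces := C.h.ins hbe
    refine Geo.three_pages hL.sphere t b a u' e q10 q4 q11 q6.symm q8.symm het heb
      C.k.d.tne q2.symm q3.symm ?_ ?_ f3
    · convert ft using 1; ext x; simp; tauto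
    · convert fu' using 1; ext x; simp; tauto
  have g1 : ({e, t', a} : Finset E3) ∈ L.faces :=
    flag2 hL hf q1 q5.symm q2 (edge_symm (C.h.swap.edge heZ)) (C.h.swap.edge C.aZ)
      (edge_symm (C.k.edge heW)) (by rw [hL.symm]; exact C.h.swap.lab heZ)
      (by rw [hL.symm]; exact C.k.lab heW)
  have g2 : ({e, a, t} : Finset E3) ∈ L.faces :=
    flag2 hL hf q2 q4 q0 (edge_symm (C.k.edge heW)) (C.k.edge C.tW)
      (edge_symm (C.h.edge heZ)) (by rw [hL.symm]; exact C.k.lab heW)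
      (by rw [hL.symm]; exact C.h.lab heZ)
  have g3 : ({e, t, u'} : Finset E3) ∈ L.faces :=
    flag2 hL hf q0 q6 q3 (edge_symm (C.h.edge heZ)) (edge_symm (C.k.swap.edge C.tW))
      (edge_symm (C.k.swap.edge heW)) (by rw [hL.symm]; exact C.h.lab heZ)
      (by rw [hL.symm]; exact C.k.swap.lab heW)
  have b1 : ({b, t', a} : Finset E3) ∈ L.faces := by
    convert ft' using 1; ext x; simp; tauto
  have b2 : ({b, a, t} : Finset E3) ∈ L.faces := by
    convert ft using 1; ext x; simp; tauto
  have b3 : ({b, t, u'} : Finset E3) ∈ L.faces := by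
    convert fu' using 1; ext x; simp; tauto
  -- the base of the new suspension is a path on four vertices
  let P : Set (Finset E3) := {F | F.Nonempty ∧
    (F ⊆ ({t', a} : Finset E3) ∨ F ⊆ ({a, t} : Finset E3) ∨ F ⊆ ({t, u'} : Finset E3))}
  have hP1 : ∀ p : E3, ({p, t', a} : Finset E3) ∈ L.faces → ({p, a, t} : Finset E3) ∈ L.faces →
      ({p, t, u'} : Finset E3) ∈ L.faces → ∀ F ∈ P, insert p F ∈ L.faces := by
    rintro p h1 h2 h3 F ⟨hn, h | h | h⟩
    · exact L.down_closed h1 (Finset.insert_subset_insert p h) (by simp)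
    · exact L.down_closed h2 (Finset.insert_subset_insert p h) (by simp)
    · exact L.down_closed h3 (Finset.insert_subset_insert p h) (by simp)
  have hPv : ∀ F ∈ P, ∀ v ∈ F, v = t' ∨ v = a ∨ v = t ∨ v = u' := by
    rintro F ⟨hn, h | h | h⟩ v hv <;> have := h hv <;> simp at this <;> tauto
  have hPt : ({t} : Finset E3) ∈ P := ⟨by simp, by simp⟩
  have hPa : ({a} : Finset E3) ∈ P := ⟨by simp, by simp⟩
  have hPt' : ({t'} : Finset E3) ∈ P := ⟨by simp, by simp⟩
  have hPta : ({t, a} : Finset E3) ∈ P := ⟨by simp, .inr (.inl (by rw [Finset.pair_comm]))⟩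
  have hPt'a : ({t', a} : Finset E3) ∈ P := ⟨by simp, .inl subset_rfl⟩
  have hPu : ({u'} : Finset E3) ∈ P := ⟨by simp, by simp⟩
  have hX : S = joinSusp P b e := by
    apply C.h.extend P b e
    · intro F hF
      exact L.down_closed (hP1 b b1 b2 b3 F hF) (Finset.subset_insert _ _) hF.1
    · rintro F ⟨hn, h | h | h⟩ G hG hGn
      · exact ⟨hGn, .inl (hG.trans h)⟩
      · exact ⟨hGn, .inr (.inl (hG.trans h))⟩
      · exact ⟨hGn, .inr (.inr (hG.trans h))⟩
    · exact ⟨_, hPt⟩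
    · exact heb.symm
    · intro F hF hb
      have := hPv F hF b hb
      grind
    · intro F hF hb
      have := hPv F hF e hb
      grind
    · intro v hv
      rw [hL.symm b, hL.symm e]
      rcases hPv _ hv v (by simp) with rfl | rfl | rfl | rfl
      · exact ⟨C.h.swap.lab C.bZ, C.h.swap.lab heZ⟩
      · exact ⟨C.k.lab C.bW, C.k.lab heW⟩
      · exact ⟨C.h.lab C.bZ, C.h.lab heZ⟩
      · exact ⟨C.k.swap.lab C.bW, C.k.swap.lab heW⟩
    · exact hP1 b b1 b2 b3
    · exact hP1 e g1 g2 g3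
    · have inR : ∀ G ∈ P, G ∈ joinSusp P b e ∧ insert b G ∈ joinSusp P b e ∧
          insert e G ∈ joinSusp P b e := fun G hG =>
        ⟨mem_join.2 (.inl hG), mem_join.2 (.inr (.inr (.inr (.inl ⟨G, hG, rfl⟩)))),
          mem_join.2 (.inr (.inr (.inr (.inr ⟨G, hG, rfl⟩))))⟩
      have shapes : ∀ G ∈ Z, G = {a} ∨ G = {b} ∨ G = {e} ∨ G = {b, a} ∨ G = {e, a} := by
        intro G hG
        rcases card_two_cases (C.h.nemp hG) (C.h.zcard hL hG) with ⟨x, rfl⟩ | ⟨x, y, hxy, rfl⟩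
        · rcases hcross x hG with rfl | rfl | rfl <;> tauto
        · have hx := hcross x (C.h.sub1 hG (by simp))
          have hy := hcross y (C.h.sub1 hG (by simp))
          rcases hx with rfl | rfl | rfl <;> rcases hy with rfl | rfl | rfl
          · exact absurd rfl hxy
          · rw [Finset.pair_comm]; tauto
          · rw [Finset.pair_comm]; tauto
          · tauto
          · exact absurd rfl hxy
          · exact absurd hG hbe
          · tauto
          · exact absurd (by rwa [Finset.pair_comm]) hbe
          · exact absurd rfl hxy
      have main : ∀ s, ({s} : Finset E3) ∈ P → ({s, a} : Finset E3) ∈ P →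
          ∀ G ∈ Z, G ∈ joinSusp P b e ∧ insert s G ∈ joinSusp P b e := by
        intro s hs hsa G hG
        rcases shapes G hG with rfl | rfl | rfl | rfl | rfl
        · exact ⟨(inR _ hPa).1, (inR _ hsa).1⟩
        · exact ⟨mem_join.2 (by tauto), by rw [Finset.pair_comm]; exact (inR _ hs).2.1⟩
        · exact ⟨mem_join.2 (by tauto), by rw [Finset.pair_comm]; exact (inR _ hs).2.2⟩
        · exact ⟨(inR _ hPa).2.1, by rw [Finset.insert_comm]; exact (inR _ hsa).2.1⟩
        · exact ⟨(inR _ hPa).2.2, by rw [Finset.insert_comm]; exact (inR _ hsa).2.2⟩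
      intro F hF
      rcases C.h.mem.1 hF with h1 | h1 | h1 | ⟨G, h1, rfl⟩ | ⟨G, h1, rfl⟩
      · exact (main t hPt hPta F h1).1
      · rw [h1]; exact (inR _ hPt).1
      · rw [h1]; exact (inR _ hPt').1
      · exact (main t hPt hPta G h1).2
      · exact (main t' hPt' hPt'a G h1).2
  have hS : ({u'} : Finset E3) ∈ S := by
    rw [hX]; exact mem_join.2 (.inl hPu)
  rcases C.h.mem.1 hS with h1 | h1 | h1 | ⟨G, h1, h2⟩ | ⟨G, h1, h2⟩
  · exact hu h1
  · exact q6 (Finset.singleton_inj.1 h1).symm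
  · exact q9 (Finset.singleton_inj.1 h1).symm
  · exact q6 (Finset.mem_singleton.1 (h2 ▸ Finset.mem_insert_self t G))
  · exact q9 (Finset.mem_singleton.1 (h2 ▸ Finset.mem_insert_self t' G))

theorem Cfg.final (hL : IsLabeledS2 L m) (hf : MetricFlag L m)
    (C : Cfg L m S Z t t' T W a u' b) : S = T := by
  by_cases hu : ({u'} : Finset E3) ∈ Z
  · exact C.caseI hL hf hu (C.lemX hL hu)
  · by_cases ht : ({t'} : Finset E3) ∈ W
    · exact absurd (C.symm.lemX hL ht) hu
    · exact (C.caseII hL hf hu ht).elim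

theorem main (hL : IsLabeledS2 L m) (hf : MetricFlag L m) (hS : IsInfMaxRASusp L m S)
    (hT : IsInfMaxRASusp L m T) {F : Finset E3} (hc : F.card = 3) (h1 : F ∈ S) (h2 : F ∈ T) :
    S = T := by
  obtain ⟨⟨Z, t, t', d1, d2, d3⟩, d4⟩ := hS
  obtain ⟨⟨W, u, u', e1, e2, e3⟩, e4⟩ := hT
  obtain ⟨t, t', h, G, hG, hGF, hG2⟩ := shape hL ⟨d1, d2, d3, d4⟩ h1 hc
  obtain ⟨u, u', k, H, hH, hHF, hH2⟩ := shape hL ⟨e1, e2, e3, e4⟩ h2 hc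
  have htG := h.d.t_notin G hG
  have huH := k.d.t_notin H hH
  by_cases htu : t = u
  · subst htu
    have : G = H := by
      rw [← Finset.erase_insert htG, ← Finset.erase_insert huH, hGF, hHF]
    subst this
    obtain ⟨a, b, hab, rfl⟩ := Finset.card_eq_two.1 hG2
    exact case1 hL h k hab hG hH
  · have huG : u ∈ G := by
      have : u ∈ insert t G := by rw [hGF, ← hHF]; simp
      rcases Finset.mem_insert.1 this with h | h
      · exact absurd h.symm htu
      · exact h
    obtain ⟨b, hub, hGe⟩ : ∃ b, u ≠ b ∧ G = {u, b} := by
      obtain ⟨x, y, hxy, rfl⟩ := Finset.card_eq_two.1 hG2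
      rcases (by simpa using huG : u = x ∨ u = y) with rfl | rfl
      · exact ⟨y, hxy, rfl⟩
      · exact ⟨x, hxy.symm, Finset.pair_comm _ _⟩
    subst hGe
    have htb : t ≠ b := by
      rintro rfl; simp at htG
    have hHe : H = {t, b} := by
      rw [← Finset.erase_insert huH, hHF, ← hGF]
      ext x
      simp only [Finset.mem_erase, Finset.mem_insert, Finset.mem_singleton]
      grind
    subst hHe
    exact Cfg.final hL hf ⟨h, k, hub, htb, hG, hH⟩

end Comb

/-- Two distinct infinite, maximal RA-suspensions in a metric flag labeled
triangulation of the 2-sphere contain no common 2-simplex of `L`. -/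
theorem infMaxRASusps_no_common_two_simplex
    (L : SimplicialComplex ℝ E3) (m : E3 → E3 → ℕ)
    (hL : IsLabeledS2 L m) (hflag : MetricFlag L m)
    (S T : Set (Finset E3)) (hS : IsInfMaxRASusp L m S) (hT : IsInfMaxRASusp L m T)
    (hne : S ≠ T) :
    ∀ F ∈ L.faces, F.card = 3 → ¬ (F ∈ S ∧ F ∈ T) := by
  intro F _ hc hF
  exact hne (Comb.main hL hflag hS hT hc hF.1 hF.2)
end

section
/- Suppose L is a metric flag labeled triangulation of the 2-sphere that is not the suspension of a 3-gon. If s is a 3-Euclidean vertex of L and T is an infinite, maximal RA-suspension in L, then no 2-simplex of L is contained in both the closed star St_L(s) and T. -/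
open Geometry

open CoxOrb

noncomputable def invStereo (z : ℂ) : Metric.sphere (0 : E3) 1 :=
  ⟨!₂[2 * z.re / (1 + Complex.normSq z), 2 * z.im / (1 + Complex.normSq z),
      (1 - Complex.normSq z) / (1 + Complex.normSq z)], by
    have h : 0 < 1 + Complex.normSq z := by positivity [Complex.normSq_nonneg z]
    rw [mem_sphere_zero_iff_norm, EuclideanSpace.norm_eq, Real.sqrt_eq_one, Fin.sum_univ_three]
    simp only [Real.norm_eq_abs, sq_abs]
    simp
    field_simp
    rw [Complex.normSq_apply]; ring⟩

theorem continuous_invStereo : Continuous invStereo := by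
  have h : ∀ z, 1 + Complex.normSq z ≠ 0 := fun z => by have := Complex.normSq_nonneg z; positivity
  unfold invStereo
  refine Continuous.subtype_mk ?_ _
  refine (PiLp.continuous_toLp 2 _).comp ?_
  refine continuous_pi fun i => ?_
  have := Complex.continuous_normSq
  fin_cases i <;> simp <;> fun_prop (disch := exact h _)

theorem invStereo_neg {z : ℂ} (hz : Complex.normSq z = 1) : invStereo (-z) = -invStereo z := by
  apply Subtype.ext
  ext i
  fin_cases i <;> simp [invStereo, hz] <;> ring

theorem no_embed_sphere_plane (f : Metric.sphere (0 : E3) 1 → ℂ) (hf : Continuous f)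
    (hi : Function.Injective f) : False := by
  let g : C(ℂ, ℂ) := ⟨fun z => f (invStereo z) - f (-invStereo z), by
    have := continuous_invStereo
    fun_prop⟩
  have hg : ∀ z, g z ≠ 0 := by
    intro z hz
    have h1 := hi (sub_eq_zero.1 hz)
    have h2 : (invStereo z : E3) = -(invStereo z : E3) := congrArg Subtype.val h1
    have h3 : (invStereo z : E3) = 0 := by
      have h5 : (2 : ℝ) • (invStereo z : E3) = 0 := by
        rw [two_smul]; nth_rewrite 1 [h2]; simp
      simpa using h5
    have h4 := (invStereo z).2
    rw [h3] at h4
    simp at h4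
  obtain ⟨h, ⟨-, hh⟩, -⟩ := Complex.isCoveringMapOn_exp.existsUnique_continuousMap_lifts g
    (a₀ := (0 : ℂ)) (e₀ := Complex.log (g 0)) (Complex.exp_log (hg 0)) (fun z => hg z)
  have hh' : ∀ z, Complex.exp (h z) = g z := fun z => congrFun hh z
  let c : ℝ → ℂ := fun t => Complex.exp (t * Complex.I)
  have hc : Continuous c := by fun_prop
  have hcn : ∀ t, Complex.normSq (c t) = 1 := fun t => by
    rw [Complex.normSq_eq_norm_sq, Complex.norm_exp_ofReal_mul_I]; norm_num
  let k : ℝ → ℝ := fun t => (h (-c t) - h (c t)).im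
  have hk : Continuous k := by
    have := h.continuous
    fun_prop
  have hk0 : k Real.pi = - k 0 := by
    simp [k, c]
  obtain ⟨t, ht⟩ : ∃ t, k t = 0 := by
    have := mem_range_of_exists_le_of_exists_ge (c := 0) hk
    rcases le_total (k 0) 0 with h0 | h0
    · exact this ⟨0, h0⟩ ⟨Real.pi, by linarith⟩
    · exact this ⟨Real.pi, by linarith⟩ ⟨0, h0⟩
  have e1 : Complex.exp (h (-c t) - h (c t)) = -1 := by
    rw [Complex.exp_sub, hh', hh']
    have : g (-c t) = - g (c t) := by
      simp [g, invStereo_neg (hcn t)]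
    rw [this, neg_div, div_self (hg _)]
  have e2 : h (-c t) - h (c t) = (((h (-c t) - h (c t)).re : ℝ) : ℂ) := by
    apply Complex.ext
    · simp
    · rw [Complex.ofReal_im]; exact ht
  rw [e2, ← Complex.ofReal_exp] at e1
  have e3 : Real.exp ((h (-c t) - h (c t)).re) = -1 := by exact_mod_cast e1
  linarith [Real.exp_pos ((h (-c t) - h (c t)).re)]

noncomputable def toC (y : EuclideanSpace ℝ (Fin 2)) : ℂ :=
  ((y 0 : ℝ) : ℂ) + ((y 1 : ℝ) : ℂ) * Complex.I

theorem continuous_toC : Continuous toC := by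
  unfold toC
  fun_prop

theorem toC_injective : Function.Injective toC := by
  intro x y h
  have h0 := congrArg Complex.re h
  have h1 := congrArg Complex.im h
  simp [toC] at h0 h1
  ext i
  fin_cases i
  · exact h0
  · exact h1

theorem sphere_surj (f : Metric.sphere (0 : E3) 1 → Metric.sphere (0 : E3) 1) (hf : Continuous f)
    (hi : Function.Injective f) : Function.Surjective f := by
  by_contra hs
  simp only [Function.Surjective, not_forall, not_exists] at hs
  obtain ⟨v, hv⟩ := hs
  have hfact : Fact (Module.finrank ℝ E3 = 2 + 1) := ⟨by simp⟩
  obtain ⟨e, he⟩ : ∃ e : OpenPartialHomeomorph (Metric.sphere (0 : E3) 1)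
      (EuclideanSpace ℝ (Fin 2)), e.source = {v}ᶜ :=
    ⟨stereographic' 2 v, stereographic'_source v⟩
  have hsrc : ∀ x, f x ∈ e.source := fun x => by
    rw [he]; exact hv x
  refine no_embed_sphere_plane (fun x => toC (e (f x)))
    (continuous_toC.comp (e.continuousOn.comp_continuous hf hsrc)) ?_
  intro x y hxy
  exact hi (e.injOn (hsrc x) (hsrc y) (toC_injective hxy))

theorem face_indep (L : SimplicialComplex ℝ E3) {F : Finset E3} (hF : F ∈ L.faces) (w : E3 → ℝ)
    (h0 : ∑ v ∈ F, w v = 0) (h1 : ∑ v ∈ F, w v • v = 0) : ∀ v ∈ F, w v = 0 := by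
  intro v hv
  have h := (affineIndependent_iff.1 (L.indep hF)) Finset.univ (fun e => w e)
    (by rw [← h0]; exact Finset.sum_coe_sort F w)
    (by rw [← h1]; exact Finset.sum_coe_sort F (fun v => w v • v)) ⟨v, hv⟩ (Finset.mem_univ _)
  exact h

theorem index_unique (L : SimplicialComplex ℝ E3) {ι : Type} [Fintype ι] [DecidableEq ι]
    (V : ι → E3) (hV : Function.Injective V) (I J : Finset ι) (hI : I.image V ∈ L.faces)
    (hJ : J.image V ∈ L.faces) (W W' : ι → ℝ) (hW : ∀ i, 0 ≤ W i) (hW' : ∀ i, 0 ≤ W' i)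
    (hWs : ∑ i, W i = 1) (hWs' : ∑ i, W' i = 1) (hWI : ∀ i, i ∉ I → W i = 0)
    (hWJ : ∀ i, i ∉ J → W' i = 0) (h : ∑ i, W i • V i = ∑ i, W' i • V i) : W = W' := by
  have hmem : ∀ (K : Finset ι) (U : ι → ℝ), (∀ i, 0 ≤ U i) → ∑ i, U i = 1 →
      (∀ i, i ∉ K → U i = 0) → ∑ i, U i • V i ∈ convexHull ℝ ((K.image V : Finset E3) : Set E3) := by
    intro K U hU hs hK
    have e1 : ∑ i ∈ K, U i • V i = ∑ i, U i • V i :=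
      Finset.sum_subset (Finset.subset_univ _) (fun i _ hi => by rw [hK i hi, zero_smul])
    have e2 : ∑ i ∈ K, U i = ∑ i, U i :=
      Finset.sum_subset (Finset.subset_univ _) (fun i _ hi => hK i hi)
    rw [← e1]
    refine (convex_convexHull ℝ _).sum_mem (fun i _ => hU i) (by rw [e2, hs]) ?_
    intro i hi
    exact subset_convexHull ℝ _ (by simpa using ⟨i, hi, rfl⟩)
  have hx := L.inter_subset_convexHull hI hJ ⟨hmem I W hW hWs hWI, h ▸ hmem J W' hW' hWs' hWJ⟩
  rw [← Finset.coe_inter, ← Finset.image_inter _ _ hV] at hx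
  obtain ⟨u, hu0, hu1, hux⟩ := Finset.mem_convexHull'.1 hx
  rw [Finset.sum_image (fun _ _ _ _ h => hV h)] at hu1 hux
  let U : ι → ℝ := fun i => if i ∈ I ∩ J then u (V i) else 0
  have key : ∀ (K : Finset ι) (A : ι → ℝ), I ∩ J ⊆ K → K.image V ∈ L.faces → ∑ i, A i = 1 →
      (∀ i, i ∉ K → A i = 0) → ∑ i, A i • V i = ∑ i, W i • V i → A = U := by
    intro K A hK hKf hA1 hA0 hAx
    have hU0 : ∀ i, i ∉ K → U i = 0 := fun i hi => by
      simp only [U]; rw [if_neg (fun h => hi (hK h))]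
    have hUs : ∑ i, U i = 1 := by
      simp only [U]; rw [Finset.sum_ite_mem, Finset.univ_inter, hu1]
    have hUx : ∑ i, U i • V i = ∑ i, W i • V i := by
      simp only [U, ite_smul, zero_smul]; rw [Finset.sum_ite_mem, Finset.univ_inter, hux]
    let w : E3 → ℝ := fun v => ∑ i, if V i = v then A i - U i else 0
    have hw : ∀ i, w (V i) = A i - U i := fun i => by
      simp only [w]
      rw [Finset.sum_eq_single i]
      · simp
      · intro j _ hj; rw [if_neg (fun h => hj (hV h))]
      · simp
    have := face_indep L hKf w
      (by
        rw [Finset.sum_image (fun _ _ _ _ h => hV h)]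
        simp only [hw]
        rw [Finset.sum_subset (Finset.subset_univ K), Finset.sum_sub_distrib, hA1, hUs, sub_self]
        intro i _ hi; rw [hA0 i hi, hU0 i hi, sub_self])
      (by
        rw [Finset.sum_image (fun _ _ _ _ h => hV h)]
        simp only [hw]
        rw [Finset.sum_subset (Finset.subset_univ K)]
        · simp only [sub_smul]
          rw [Finset.sum_sub_distrib, hAx, hUx, sub_self]
        · intro i _ hi; rw [hA0 i hi, hU0 i hi, sub_self, zero_smul])
    funext i
    by_cases hi : i ∈ K
    · have h2 := this (V i) (Finset.mem_image_of_mem _ hi)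
      rw [hw] at h2; linarith
    · rw [hA0 i hi, hU0 i hi]
  rw [key I W Finset.inter_subset_left hI hWs hWI rfl,
    key J W' Finset.inter_subset_right hJ hWs' hWJ h.symm]

theorem space_surj (L : SimplicialComplex ℝ E3)
    (hsph : Nonempty (L.space ≃ₜ (Metric.sphere (0 : E3) 1 : Set E3)))
    (f : Metric.sphere (0 : E3) 1 → L.space) (hf : Continuous f) (hi : Function.Injective f) :
    Function.Surjective f := by
  obtain ⟨e⟩ := hsph
  have := sphere_surj (fun x => e (f x)) (e.continuous.comp hf) (e.injective.comp hi)
  intro y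
  obtain ⟨x, hx⟩ := this (e y)
  exact ⟨x, e.injective hx⟩

theorem space_self_surj (L : SimplicialComplex ℝ E3)
    (hsph : Nonempty (L.space ≃ₜ (Metric.sphere (0 : E3) 1 : Set E3)))
    (f : L.space → L.space) (hf : Continuous f) (hi : Function.Injective f) :
    Function.Surjective f := by
  obtain ⟨e⟩ := hsph
  have := space_surj L ⟨e⟩ (fun x => f (e.symm x)) (hf.comp e.symm.continuous)
    (hi.comp e.symm.injective)
  intro y
  obtain ⟨x, hx⟩ := this y
  exact ⟨_, hx⟩

theorem mem_triangle {a b c : E3} (hab : a ≠ b) (hac : a ≠ c) (hbc : b ≠ c) (x : E3) :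
    x ∈ convexHull ℝ ((({a, b, c} : Finset E3)) : Set E3) ↔
      ∃ p q : ℝ, 0 ≤ p ∧ 0 ≤ q ∧ p + q ≤ 1 ∧ x = c + p • (a - c) + q • (b - c) := by
  rw [Finset.mem_convexHull']
  have hs : ∀ {M : Type} [AddCommMonoid M] (g : E3 → M),
      ∑ v ∈ ({a, b, c} : Finset E3), g v = g a + (g b + g c) := by
    intro M _ g
    rw [Finset.sum_insert (by simp [hab, hac]), Finset.sum_insert (by simp [hbc]),
      Finset.sum_singleton]
  constructor
  · rintro ⟨w, h0, h1, rfl⟩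
    rw [hs] at h1 ⊢
    have ha := h0 a (by simp)
    have hb := h0 b (by simp)
    have hc := h0 c (by simp)
    refine ⟨w a, w b, ha, hb, by linarith, ?_⟩
    have : w c = 1 - w a - w b := by linarith
    rw [this]; module
  · rintro ⟨p, q, hp, hq, hpq, rfl⟩
    refine ⟨fun v => if v = a then p else if v = b then q else 1 - p - q, ?_, ?_, ?_⟩
    · intro y _
      dsimp only
      split_ifs <;> linarith
    · rw [hs]; simp [hab.symm, hac.symm, hbc.symm]
    · rw [hs]; simp only [if_true, hab.symm, hac.symm, hbc.symm, if_false]; module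

theorem not_free_edge (L : SimplicialComplex ℝ E3) (hfin : L.faces.Finite)
    (hsph : Nonempty (L.space ≃ₜ (Metric.sphere (0 : E3) 1 : Set E3)))
    {a b c : E3} (hab : a ≠ b) (hac : a ≠ c) (hbc : b ≠ c)
    (habc : ({a, b, c} : Finset E3) ∈ L.faces)
    (hfree : ∀ G ∈ L.faces, a ∈ G → b ∈ G → G ⊆ {a, b, c}) : False := by
  obtain ⟨g, hg⟩ : ∃ g : E3 →ₗ[ℝ] ℝ × ℝ, ∀ p q : ℝ, g (p • (a - c) + q • (b - c)) = (p, q) := by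
    let l : ℝ × ℝ →ₗ[ℝ] E3 := LinearMap.coprod (LinearMap.toSpanSingleton ℝ E3 (a - c))
      (LinearMap.toSpanSingleton ℝ E3 (b - c))
    have hl : LinearMap.ker l = ⊥ := by
      rw [LinearMap.ker_eq_bot']
      rintro ⟨p, q⟩ h
      have h' : p • (a - c) + q • (b - c) = 0 := by simpa [l] using h
      have hs : ∀ {M : Type} [AddCommMonoid M] (g : E3 → M),
          ∑ v ∈ ({a, b, c} : Finset E3), g v = g a + (g b + g c) := by
        intro M _ g
        rw [Finset.sum_insert (by simp [hab, hac]), Finset.sum_insert (by simp [hbc]),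
          Finset.sum_singleton]
      have := face_indep L habc (fun v => if v = a then p else if v = b then q else - p - q)
        (by rw [hs]; simp [hab.symm, hac.symm, hbc.symm])
        (by
          rw [hs]; simp only [if_true, hab.symm, hac.symm, hbc.symm, if_false]
          rw [← h']; module)
      have h1 := this a (by simp)
      have h2 := this b (by simp)
      simp [hab.symm] at h1 h2
      simp [h1, h2]
    obtain ⟨g, hg⟩ := LinearMap.exists_leftInverse_of_injective l hl
    refine ⟨g, fun p q => ?_⟩
    have := LinearMap.congr_fun hg (p, q)
    simpa [l] using this
  let α : E3 → ℝ := fun x => (g (x - c)).1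
  let β : E3 → ℝ := fun x => (g (x - c)).2
  have hgc : Continuous g := g.continuous_of_finiteDimensional
  have hα : Continuous α := by fun_prop
  have hβ : Continuous β := by fun_prop
  have hαv : ∀ p q : ℝ, α (c + p • (a - c) + q • (b - c)) = p := fun p q => by
    have : c + p • (a - c) + q • (b - c) - c = p • (a - c) + q • (b - c) := by abel
    simp only [α]; rw [this, hg]
  have hβv : ∀ p q : ℝ, β (c + p • (a - c) + q • (b - c)) = q := fun p q => by
    have : c + p • (a - c) + q • (b - c) - c = p • (a - c) + q • (b - c) := by abel
    simp only [β]; rw [this, hg]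
  let K₁ : Set E3 := convexHull ℝ ((({a, b, c} : Finset E3)) : Set E3)
  let K₂ : Set E3 := ⋃ G ∈ {G ∈ L.faces | ¬ (a ∈ G ∧ b ∈ G)}, convexHull ℝ ((G : Finset E3) : Set E3)
  have hK₁ : IsClosed K₁ := (Finset.finite_toSet _).isClosed_convexHull ℝ
  have hK₂ : IsClosed K₂ := by
    refine (hfin.subset (fun G hG => hG.1)).isClosed_biUnion fun G _ => ?_
    exact (Finset.finite_toSet _).isClosed_convexHull ℝ
  have hcov : L.space ⊆ K₁ ∪ K₂ := by
    intro x hx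
    obtain ⟨G, hG, hxG⟩ := SimplicialComplex.mem_space_iff.1 hx
    by_cases h : a ∈ G ∧ b ∈ G
    · left
      exact convexHull_mono (by exact_mod_cast hfree G hG h.1 h.2) hxG
    · right
      exact Set.mem_biUnion (show G ∈ {G ∈ L.faces | ¬ (a ∈ G ∧ b ∈ G)} from ⟨hG, h⟩) hxG
  have hK₁s : K₁ ⊆ L.space := SimplicialComplex.convexHull_subset_space habc
  have hmin : ∀ x ∈ K₁ ∩ K₂, min (α x) (β x) = 0 := by
    rintro x ⟨h1, h2⟩
    obtain ⟨G, ⟨hG, hn⟩, hxG⟩ := Set.mem_iUnion₂.1 h2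
    have hx := L.inter_subset_convexHull habc hG ⟨h1, hxG⟩
    obtain ⟨p, q, hp, hq, -, rfl⟩ := (mem_triangle hab hac hbc x).1 h1
    rw [hαv, hβv]
    by_cases ha : a ∈ G
    · have hb : b ∉ G := fun hb => hn ⟨ha, hb⟩
      have h3 : convexHull ℝ ((({a, b, c} : Finset E3) : Set E3) ∩ G) ⊆ {x | β x = 0} := by
        refine convexHull_min ?_ ?_
        · rintro y ⟨hy1, hy2⟩
          have : y = a ∨ y = b ∨ y = c := by simpa using hy1
          rcases this with rfl | rfl | rfl
          · have := hβv 1 0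
            simpa using this
          · exact absurd hy2 hb
          · simp [β]
        · intro y hy z hz r s hr hs hrs
          change (g (y - c)).2 = 0 at hy
          change (g (z - c)).2 = 0 at hz
          change (g (r • y + s • z - c)).2 = 0
          have : r • y + s • z - c = r • (y - c) + s • (z - c) := by
            have : r = 1 - s := by linarith
            rw [this]; module
          rw [this, map_add, map_smul, map_smul, Prod.snd_add, Prod.smul_snd, Prod.smul_snd, hy, hz]; simp
      have h4 : β _ = 0 := h3 hx
      rw [hβv] at h4
      rw [h4]; exact min_eq_right hp
    · have h3 : convexHull ℝ ((({a, b, c} : Finset E3) : Set E3) ∩ G) ⊆ {x | α x = 0} := by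
        refine convexHull_min ?_ ?_
        · rintro y ⟨hy1, hy2⟩
          have : y = a ∨ y = b ∨ y = c := by simpa using hy1
          rcases this with rfl | rfl | rfl
          · exact absurd hy2 ha
          · have := hαv 0 1
            simpa using this
          · simp [α]
        · intro y hy z hz r s hr hs hrs
          change (g (y - c)).1 = 0 at hy
          change (g (z - c)).1 = 0 at hz
          change (g (r • y + s • z - c)).1 = 0
          have : r • y + s • z - c = r • (y - c) + s • (z - c) := by
            have : r = 1 - s := by linarith
            rw [this]; module
          rw [this, map_add, map_smul, map_smul, Prod.fst_add, Prod.smul_fst, Prod.smul_fst, hy, hz]; simp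
      have h4 : α _ = 0 := h3 hx
      rw [hαv] at h4
      rw [h4]; exact min_eq_left hq
  classical
  let μ : E3 → ℝ := fun x => if x ∈ K₁ then min (α x) (β x) else 0
  have hμ : ContinuousOn μ L.space := by
    refine ContinuousOn.mono (ContinuousOn.union_of_isClosed ?_ ?_ hK₁ hK₂) hcov
    · refine ContinuousOn.congr (f := fun x => min (α x) (β x)) (by fun_prop) ?_
      intro x hx
      simp only [μ, if_pos hx]
    · refine ContinuousOn.congr (f := fun x => 0) (by fun_prop) ?_
      intro x hx
      by_cases h : x ∈ K₁
      · simp only [μ, if_pos h]; exact hmin x ⟨h, hx⟩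
      · simp only [μ, if_neg h]
  let d : E3 := (-(1/2) : ℝ) • (a - c) + (-(1/2) : ℝ) • (b - c)
  have hin : ∀ p q : ℝ, 0 ≤ p → 0 ≤ q → p + q ≤ 1 →
      (c + p • (a - c) + q • (b - c)) + μ (c + p • (a - c) + q • (b - c)) • d =
        c + (p - min p q / 2) • (a - c) + (q - min p q / 2) • (b - c) := by
    intro p q hp hq hpq
    have : c + p • (a - c) + q • (b - c) ∈ K₁ := (mem_triangle hab hac hbc _).2 ⟨p, q, hp, hq, hpq, rfl⟩
    simp only [μ, if_pos this, hαv, hβv, d]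
    module
  have hK₁K₁ : ∀ x ∈ K₁, x + μ x • d ∈ K₁ := by
    intro x hx
    obtain ⟨p, q, hp, hq, hpq, rfl⟩ := (mem_triangle hab hac hbc x).1 hx
    rw [hin p q hp hq hpq]
    have h1 := min_le_left p q
    have h2 := min_le_right p q
    have h3 : 0 ≤ min p q := le_min hp hq
    exact (mem_triangle hab hac hbc _).2 ⟨_, _, by linarith, by linarith, by linarith, rfl⟩
  have hout : ∀ x, x ∉ K₁ → x + μ x • d = x := by
    intro x hx
    simp only [μ, if_neg hx]; simp
  let f : L.space → L.space := fun x => ⟨x + μ x • d, by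
    by_cases h : (x : E3) ∈ K₁
    · exact hK₁s (hK₁K₁ _ h)
    · rw [hout _ h]; exact x.2⟩
  have hf : Continuous f := by
    refine Continuous.subtype_mk ?_ _
    have : Continuous (fun x : L.space => μ x) := continuousOn_iff_continuous_domRestrict.1 hμ
    exact continuous_subtype_val.add (this.smul continuous_const)
  have hfi : Function.Injective f := by
    intro x y hxy
    have hxy' : (x : E3) + μ x • d = y + μ y • d := congrArg Subtype.val hxy
    apply Subtype.ext
    by_cases hx : (x : E3) ∈ K₁ <;> by_cases hy : (y : E3) ∈ K₁
    · obtain ⟨p, q, hp, hq, hpq, hx'⟩ := (mem_triangle hab hac hbc _).1 hx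
      obtain ⟨p', q', hp', hq', hpq', hy'⟩ := (mem_triangle hab hac hbc _).1 hy
      rw [hx', hy'] at hxy' ⊢
      rw [hin p q hp hq hpq, hin p' q' hp' hq' hpq'] at hxy'
      have h1 := congrArg α hxy'
      have h2 := congrArg β hxy'
      rw [hαv, hαv] at h1
      rw [hβv, hβv] at h2
      have h3 : p = p' ∧ q = q' := by
        rcases le_total p q with h | h <;> rcases le_total p' q' with h' | h' <;>
          simp only [min_eq_left h, min_eq_left h', min_eq_right h, min_eq_right h'] at h1 h2 <;>
          constructor <;> linarith
      rw [h3.1, h3.2]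
    · rw [hout _ hy] at hxy'
      exact absurd (hxy' ▸ hK₁K₁ _ hx) hy
    · rw [hout _ hx] at hxy'
      exact absurd (hxy'.symm ▸ hK₁K₁ _ hy) hx
    · rwa [hout _ hx, hout _ hy] at hxy'
  have hm : c + (1/2 : ℝ) • (a - c) + (1/2 : ℝ) • (b - c) ∈ K₁ :=
    (mem_triangle hab hac hbc _).2 ⟨1/2, 1/2, by norm_num, by norm_num, by norm_num, rfl⟩
  obtain ⟨x, hx⟩ := space_self_surj L hsph f hf hfi ⟨_, hK₁s hm⟩
  have hx' : (x : E3) + μ x • d = c + (1/2 : ℝ) • (a - c) + (1/2 : ℝ) • (b - c) :=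
    congrArg Subtype.val hx
  by_cases h : (x : E3) ∈ K₁
  · obtain ⟨p, q, hp, hq, hpq, hxe⟩ := (mem_triangle hab hac hbc _).1 h
    rw [hxe, hin p q hp hq hpq] at hx'
    have h1 := congrArg α hx'
    have h2 := congrArg β hx'
    rw [hαv, hαv] at h1
    rw [hβv, hβv] at h2
    rcases le_total p q with h | h <;>
      simp only [min_eq_left h, min_eq_right h] at h1 h2 <;> linarith
  · rw [hout _ h] at hx'
    exact h (hx' ▸ hm)

theorem susp_verts (L : SimplicialComplex ℝ E3)
    (hsph : Nonempty (L.space ≃ₜ (Metric.sphere (0 : E3) 1 : Set E3)))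
    (V : Fin 5 → E3) (hV : Function.Injective V)
    (h1 : ({V 0, V 2, V 3} : Finset E3) ∈ L.faces) (h2 : ({V 0, V 3, V 4} : Finset E3) ∈ L.faces)
    (h3 : ({V 0, V 2, V 4} : Finset E3) ∈ L.faces) (h4 : ({V 1, V 2, V 3} : Finset E3) ∈ L.faces)
    (h5 : ({V 1, V 3, V 4} : Finset E3) ∈ L.faces) (h6 : ({V 1, V 2, V 4} : Finset E3) ∈ L.faces)
    (v : E3) (hv : ({v} : Finset E3) ∈ L.faces) : ∃ i, v = V i := by
  let n : E3 → ℝ := fun x => min (min (x 0) (x 1)) 0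
  let U : E3 → Fin 5 → ℝ := fun x => ![max (x 2) 0, max (-x 2) 0, x 0 - n x, x 1 - n x, - n x]
  let S : E3 → ℝ := fun x => ∑ i, U x i
  have hn1 : ∀ x, n x ≤ x 0 := fun x => (min_le_left _ _).trans (min_le_left _ _)
  have hn2 : ∀ x, n x ≤ x 1 := fun x => (min_le_left _ _).trans (min_le_right _ _)
  have hn3 : ∀ x, n x ≤ 0 := fun x => min_le_right _ _
  have hU : ∀ x i, 0 ≤ U x i := by
    intro x i
    have := hn1 x
    have := hn2 x
    have := hn3 x
    fin_cases i <;> simp [U] <;> assumption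
  have hU0 : ∀ x, (∀ i, U x i = 0) → x = 0 := by
    intro x h
    have e0 := h 0
    have e1 := h 1
    have e2 := h 2
    have e3 := h 3
    have e4 := h 4
    simp [U] at e0 e1 e2 e3 e4
    ext i
    fin_cases i <;> simp <;> linarith
  have hUx : ∀ (x y : E3) (r : ℝ), (∀ i, U x i = r * U y i) → x = r • y := by
    intro x y r h
    have hd : ∀ z : ℝ, z = max z 0 - max (-z) 0 := fun z => by
      rcases le_total z 0 with h | h
      · rw [max_eq_right h, max_eq_left (by linarith)]; ring
      · rw [max_eq_left h, max_eq_right (by linarith)]; ring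
    have e0 : max (x 2) 0 = r * max (y 2) 0 := h 0
    have e1 : max (-x 2) 0 = r * max (-y 2) 0 := h 1
    have e2 : x 0 - n x = r * (y 0 - n y) := h 2
    have e3 : x 1 - n x = r * (y 1 - n y) := h 3
    have e4 : - n x = r * (- n y) := h 4
    have e5 : x 2 = r * y 2 := by
      rw [hd (x 2), e0, e1, ← mul_sub, ← hd (y 2)]
    ext i
    fin_cases i
    · simp; linarith
    · simp; linarith
    · simpa using e5
  have hface : ∀ x, ∃ I : Finset (Fin 5), I.image V ∈ L.faces ∧ ∀ i, i ∉ I → U x i = 0 := by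
    intro x
    have hnc : n x = x 0 ∨ n x = x 1 ∨ n x = 0 := by
      simp only [n]
      rcases min_choice (min (x 0) (x 1)) 0 with h | h
      · rcases min_choice (x 0) (x 1) with h' | h'
        · left; rw [h, h']
        · right; left; rw [h, h']
      · right; right; exact h
    rcases le_total (x 2) 0 with h | h
    · have e0 : U x 0 = 0 := by simp [U, h]
      rcases hnc with h' | h' | h'
      · have e2 : U x 2 = 0 := by simp [U, h']
        refine ⟨{1, 3, 4}, by simpa [Finset.image_insert] using h5, ?_⟩
        intro i hi
        fin_cases i <;> first | assumption | simp at hi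
      · have e2 : U x 3 = 0 := by simp [U, h']
        refine ⟨{1, 2, 4}, by simpa [Finset.image_insert] using h6, ?_⟩
        intro i hi
        fin_cases i <;> first | assumption | simp at hi
      · have e2 : U x 4 = 0 := by simp [U, h']
        refine ⟨{1, 2, 3}, by simpa [Finset.image_insert] using h4, ?_⟩
        intro i hi
        fin_cases i <;> first | assumption | simp at hi
    · have e0 : U x 1 = 0 := by simp [U, h]
      rcases hnc with h' | h' | h'
      · have e2 : U x 2 = 0 := by simp [U, h']
        refine ⟨{0, 3, 4}, by simpa [Finset.image_insert] using h2, ?_⟩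
        intro i hi
        fin_cases i <;> first | assumption | simp at hi
      · have e2 : U x 3 = 0 := by simp [U, h']
        refine ⟨{0, 2, 4}, by simpa [Finset.image_insert] using h3, ?_⟩
        intro i hi
        fin_cases i <;> first | assumption | simp at hi
      · have e2 : U x 4 = 0 := by simp [U, h']
        refine ⟨{0, 2, 3}, by simpa [Finset.image_insert] using h1, ?_⟩
        intro i hi
        fin_cases i <;> first | assumption | simp at hi
  have hS : ∀ x : E3, x ≠ 0 → 0 < S x := by
    intro x hx
    refine lt_of_le_of_ne (Finset.sum_nonneg fun i _ => hU x i) fun h => hx (hU0 x ?_)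
    have := (Finset.sum_eq_zero_iff_of_nonneg (fun i _ => hU x i)).1 h.symm
    exact fun i => this i (Finset.mem_univ _)
  have hne : ∀ x : Metric.sphere (0 : E3) 1, (x : E3) ≠ 0 := by
    rintro ⟨x, hx⟩ rfl
    simp at hx
  let W : E3 → Fin 5 → ℝ := fun x i => U x i / S x
  have hW0 : ∀ x : Metric.sphere (0 : E3) 1, ∀ i, 0 ≤ W x i := fun x i =>
    div_nonneg (hU x i) (hS x (hne x)).le
  have hW1 : ∀ x : Metric.sphere (0 : E3) 1, ∑ i, W x i = 1 := fun x => by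
    simp only [W]
    rw [← Finset.sum_div]
    exact div_self (hS x (hne x)).ne'
  have hWz : ∀ x i, U x i = 0 → W x i = 0 := fun x i h => by simp only [W, h, zero_div]
  have hmem : ∀ x : Metric.sphere (0 : E3) 1, ∃ I : Finset (Fin 5), I.image V ∈ L.faces ∧
      ∑ i, W x i • V i ∈ convexHull ℝ ((I.image V : Finset E3) : Set E3) := by
    intro x
    obtain ⟨I, hI, hz⟩ := hface x
    refine ⟨I, hI, ?_⟩
    have e1 : ∑ i ∈ I, W x i • V i = ∑ i, W x i • V i :=
      Finset.sum_subset (Finset.subset_univ _)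
        (fun i _ hi => by rw [hWz x i (hz i hi), zero_smul])
    have e2 : ∑ i ∈ I, W x i = ∑ i, W x i :=
      Finset.sum_subset (Finset.subset_univ _) (fun i _ hi => hWz x i (hz i hi))
    rw [← e1]
    refine (convex_convexHull ℝ _).sum_mem (fun i _ => hW0 x i) (by rw [e2, hW1]) ?_
    intro i hi
    exact subset_convexHull ℝ _ (by simpa using ⟨i, hi, rfl⟩)
  let f : Metric.sphere (0 : E3) 1 → L.space := fun x => ⟨∑ i, W x i • V i, by
    obtain ⟨I, hI, h⟩ := hmem x
    exact SimplicialComplex.convexHull_subset_space hI h⟩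
  have hUc : ∀ i, Continuous fun x => U x i := by
    intro i
    fin_cases i <;> simp [U, n] <;> fun_prop
  have hf : Continuous f := by
    refine Continuous.subtype_mk ?_ _
    refine continuous_finsetSum _ fun i _ => ?_
    have hWc : Continuous fun x : Metric.sphere (0 : E3) 1 => W x i := by
      refine Continuous.div ((hUc i).comp continuous_subtype_val) ?_ (fun x => (hS x (hne x)).ne')
      exact (continuous_finsetSum _ fun i _ => hUc i).comp continuous_subtype_val
    exact hWc.smul continuous_const
  have hfi : Function.Injective f := by
    intro x y hxy
    have hxy' : ∑ i, W x i • V i = ∑ i, W y i • V i := congrArg Subtype.val hxy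
    obtain ⟨I, hI, hzI⟩ := hface x
    obtain ⟨J, hJ, hzJ⟩ := hface y
    have := index_unique L V hV I J hI hJ (W x) (W y) (hW0 x) (hW0 y) (hW1 x) (hW1 y)
      (fun i hi => hWz x i (hzI i hi)) (fun i hi => hWz y i (hzJ i hi)) hxy'
    have hxp := hS x (hne x)
    have hyp := hS y (hne y)
    have hr : (x : E3) = (S x / S y) • (y : E3) := by
      apply hUx
      intro i
      have h := congrFun this i
      simp only [W] at h
      field_simp at h ⊢
      linarith
    have hn : ‖(x : E3)‖ = ‖(S x / S y) • (y : E3)‖ := congrArg norm hr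
    rw [norm_smul, norm_eq_of_mem_sphere x, norm_eq_of_mem_sphere y, Real.norm_eq_abs,
      abs_of_pos (div_pos hxp hyp), mul_one] at hn
    apply Subtype.ext
    rw [hr, ← hn, one_smul]
  obtain ⟨x, hx⟩ := space_surj L hsph f hf hfi ⟨v, L.subset_space hv (by simp)⟩
  have hx' : ∑ i, W x i • V i = v := congrArg Subtype.val hx
  obtain ⟨I, hI, h⟩ := hmem x
  rw [hx', SimplicialComplex.vertex_mem_convexHull_iff hv hI] at h
  obtain ⟨i, -, hi⟩ := Finset.mem_image.1 h
  exact ⟨i, hi.symm⟩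

theorem full_link (L : SimplicialComplex ℝ E3) (hfin : L.faces.Finite)
    (hsph : Nonempty (L.space ≃ₜ (Metric.sphere (0 : E3) 1 : Set E3)))
    {s x y z : E3} (hsx : s ≠ x) (hsy : s ≠ y) (hxy : x ≠ y)
    (hN : ∀ G ∈ L.faces, s ∈ G → ∀ v ∈ G, v = s ∨ v = x ∨ v = y ∨ v = z)
    (h : ({s, x, y} : Finset E3) ∈ L.faces) : ({s, y, z} : Finset E3) ∈ L.faces := by
  by_contra hn
  have h' : ({s, y, x} : Finset E3) ∈ L.faces := by
    rwa [Finset.pair_comm y x]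
  refine not_free_edge L hfin hsph hsy hsx hxy.symm h' ?_
  intro G hG hs hy v hv
  rcases hN G hG hs v hv with rfl | rfl | rfl | rfl
  · simp
  · simp
  · simp
  · exfalso
    apply hn
    refine L.down_closed hG ?_ (by simp)
    intro w hw
    simp only [Finset.mem_insert, Finset.mem_singleton] at hw
    rcases hw with rfl | rfl | rfl <;> assumption

theorem five_injective {a b c d e : E3} (h : [a, b, c, d, e].Pairwise (· ≠ ·)) :
    Function.Injective ![a, b, c, d, e] := by
  have h' : (List.ofFn ![a, b, c, d, e]).Nodup := by
    simpa [List.ofFn_succ, List.Nodup] using h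
  exact List.nodup_ofFn.1 h'

theorem core_case (L : SimplicialComplex ℝ E3) (m : E3 → E3 → ℕ)
    (hL : IsLabeledS2 L m) (hnot : ¬ IsSuspensionOfThreeGon L) (s : E3) (A : E3 → Prop)
    (hA : ∀ v, A v ↔ (v ≠ s ∧ ({s, v} : Finset E3) ∈ L.faces))
    (hA3 : ∀ x y z, A x → A y → A z → x ≠ y → y ≠ z → x ≠ z → ∀ v, A v → v = x ∨ v = y ∨ v = z)
    (hsum : ∀ x y z, A x → A y → A z → x ≠ y → y ≠ z → x ≠ z →
      1 / (m x y : ℝ) + 1 / (m y z : ℝ) + 1 / (m z x : ℝ) = 1)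
    (htri : ∀ x y, A x → A y → x ≠ y → ({s, x, y} : Finset E3) ∈ L.faces)
    (T Z : Set (Finset E3)) (t t' : E3) (hd : IsRASuspData L m T Z t t')
    (hinf : InfiniteBase Z) (hfull : IsFullSubcomplex L Z) (F : Finset E3) (hF : F ∈ Z)
    (hcard : F.card = 2) (hs : s ∈ insert t F) : False := by
  have hT1 : ∀ G ∈ Z, insert t G ∈ L.faces := fun G hG => hd.subset (by
    rw [hd.eq]; left; right; exact ⟨G, hG, rfl⟩)
  have hT2 : ∀ G ∈ Z, insert t' G ∈ L.faces := fun G hG => hd.subset (by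
    rw [hd.eq]; right; exact ⟨G, hG, rfl⟩)
  have hsing : ∀ G ∈ Z, ∀ v ∈ G, ({v} : Finset E3) ∈ Z := fun G hG v hv =>
    hd.zdown G hG {v} (by simpa using hv) (by simp)
  have hedge : ∀ x y, A x → A y → x ≠ y → ({x, y} : Finset E3) ∈ L.faces := fun x y hx hy hxy =>
    L.down_closed (htri x y hx hy hxy) (by simp) (by simp)
  by_cases hsF : s ∈ F
  · have hsZ := hsing F hF s hsF
    have hst : t ≠ s := fun h => hd.t_notin F hF (h ▸ hsF)
    have hst' : t' ≠ s := fun h => hd.t'_notin F hF (h ▸ hsF)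
    have hAt : A t := (hA t).2 ⟨hst, by rw [Finset.pair_comm]; exact hT1 _ hsZ⟩
    have hAt' : A t' := (hA t').2 ⟨hst', by rw [Finset.pair_comm]; exact hT2 _ hsZ⟩
    obtain ⟨b, hbF, hbs⟩ : ∃ b ∈ F, b ≠ s := Finset.exists_mem_ne (by omega) s
    have hbt : b ≠ t := fun h => hd.t_notin F hF (h ▸ hbF)
    have hbt' : b ≠ t' := fun h => hd.t'_notin F hF (h ▸ hbF)
    have hAb : A b := (hA b).2 ⟨hbs, L.down_closed (hd.zsubset hF)
      (by intro w hw; simp only [Finset.mem_insert, Finset.mem_singleton] at hw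
          rcases hw with rfl | rfl <;> assumption) (by simp)⟩
    have h1 := hsum t b t' hAt hAb hAt' hbt.symm hbt' hd.tne
    obtain ⟨e1, e2⟩ := hd.labels b (hsing F hF b hbF)
    rw [e1, hL.symm b t', e2] at h1
    have h2 := hL.two_le t' t hd.tne.symm (hedge t' t hAt' hAt hd.tne.symm)
    have h3 : (0 : ℝ) < 1 / (m t' t : ℝ) := by positivity
    norm_num at h1
    norm_num [h1] at h3
  · have hst : s = t := by
      rcases Finset.mem_insert.1 hs with h | h
      · exact h
      · exact absurd h hsF
    subst hst
    obtain ⟨u, v, huv, rfl⟩ := Finset.card_eq_two.1 hcard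
    have huZ := hsing _ hF u (by simp)
    have hvZ := hsing _ hF v (by simp)
    have hZA : ∀ w, ({w} : Finset E3) ∈ Z → A w := fun w hw => (hA w).2
      ⟨fun h => hd.t_notin _ hw (by simp [h]), hT1 _ hw⟩
    obtain ⟨w, hwZ, hwu, hwv⟩ : ∃ w, ({w} : Finset E3) ∈ Z ∧ w ≠ u ∧ w ≠ v := by
      by_contra hcon
      push Not at hcon
      apply hinf.2
      refine ⟨u, v, huv, ?_⟩
      ext G
      simp only [Set.mem_insert_iff, Set.mem_singleton_iff]
      constructor
      · intro hG
        have hsub : G ⊆ {u, v} := by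
          intro w hw
          have := hcon w (hsing G hG w hw)
          simp only [Finset.mem_insert, Finset.mem_singleton]
          tauto
        have hne := L.nonempty_of_mem_faces (hd.zsubset hG)
        by_cases hu : u ∈ G <;> by_cases hv : v ∈ G
        · right; right
          exact hsub.antisymm (by
            intro q hq
            simp only [Finset.mem_insert, Finset.mem_singleton] at hq
            rcases hq with rfl | rfl <;> assumption)
        · left
          refine Finset.eq_singleton_iff_unique_mem.2 ⟨hu, fun q hq => ?_⟩
          have := hsub hq
          simp only [Finset.mem_insert, Finset.mem_singleton] at this
          exact this.resolve_right fun h => hv (h ▸ hq)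
        · right; left
          refine Finset.eq_singleton_iff_unique_mem.2 ⟨hv, fun q hq => ?_⟩
          have := hsub hq
          simp only [Finset.mem_insert, Finset.mem_singleton] at this
          exact this.resolve_left fun h => hu (h ▸ hq)
        · obtain ⟨q, hq⟩ := hne
          have := hsub hq
          simp only [Finset.mem_insert, Finset.mem_singleton] at this
          rcases this with rfl | rfl
          · exact absurd hq hu
          · exact absurd hq hv
      · rintro (rfl | rfl | rfl) <;> assumption
    have hAu := hZA u huZ
    have hAv := hZA v hvZ
    have hAw := hZA w hwZ
    have hvw : v ≠ w := hwv.symm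
    have huw : u ≠ w := hwu.symm
    have hZe : ∀ x y, ({x} : Finset E3) ∈ Z → ({y} : Finset E3) ∈ Z → x ≠ y →
        ({x, y} : Finset E3) ∈ Z := by
      intro x y hx hy hxy
      refine hfull.2 _ (hedge x y (hZA x hx) (hZA y hy) hxy) ?_
      intro q hq
      simp only [Finset.mem_insert, Finset.mem_singleton] at hq
      rcases hq with rfl | rfl <;> assumption
    have hsA : ∀ x, A x → s ≠ x := fun x hx => ((hA x).1 hx).1.symm
    have ht'Z : ∀ x, ({x} : Finset E3) ∈ Z → t' ≠ x := fun x hx h => hd.t'_notin _ hx (by simp [h])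
    have hpair : [s, t', u, v, w].Pairwise (· ≠ ·) := by
      simp [hd.tne, hsA u hAu, hsA v hAv, hsA w hAw, ht'Z u huZ, ht'Z v hvZ, ht'Z w hwZ, huv, huw,
        hvw]
    have hV : Function.Injective ![s, t', u, v, w] := five_injective hpair
    have hverts := susp_verts L hL.sphere ![s, t', u, v, w] hV
      (htri u v hAu hAv huv) (htri v w hAv hAw hvw) (htri u w hAu hAw huw)
      (hT2 _ (hZe u v huZ hvZ huv)) (hT2 _ (hZe v w hvZ hwZ hvw)) (hT2 _ (hZe u w huZ hwZ huw))
    have hdown : ∀ x, ({x} : Finset E3) ∈ Z → ({x} : Finset E3) ∈ L.faces := fun x hx =>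
      hd.zsubset hx
    apply hnot
    refine ⟨s, t', u, v, w, hpair, ?_, hedge u v hAu hAv huv, hedge v w hAv hAw hvw,
      hedge u w hAu hAw huw, hT1 _ huZ, hT1 _ hvZ, hT1 _ hwZ, hT2 _ huZ, hT2 _ hvZ, hT2 _ hwZ, ?_⟩
    · intro x
      constructor
      · intro hx
        obtain ⟨i, hi⟩ := hverts x hx
        fin_cases i <;> simp at hi <;> simp [hi]
      · rintro (rfl | rfl | rfl | rfl | rfl)
        · exact L.down_closed (hT1 _ huZ) (by simp) (by simp)
        · exact L.down_closed (hT2 _ huZ) (by simp) (by simp)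
        all_goals apply hdown; assumption
    · intro h
      have := hA3 u v w hAu hAv hAw huv hvw huw t' ((hA t').2 ⟨hd.tne.symm, h⟩)
      rcases this with h | h | h
      · exact ht'Z u huZ h
      · exact ht'Z v hvZ h
      · exact ht'Z w hwZ h

theorem ra_swap {L : SimplicialComplex ℝ E3} {m : E3 → E3 → ℕ} {T Z : Set (Finset E3)} {t t' : E3}
    (hd : IsRASuspData L m T Z t t') : IsRASuspData L m T Z t' t where
  subset := hd.subset
  zsubset := hd.zsubset
  zdown := hd.zdown
  znonempty := hd.znonempty
  tne := hd.tne.symm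
  t_notin := hd.t'_notin
  t'_notin := hd.t_notin
  labels := fun v hv => (hd.labels v hv).symm
  eq := by
    rw [hd.eq]
    ext G
    simp only [joinSusp, Set.mem_union, Set.mem_insert_iff, Set.mem_singleton_iff]
    tauto

/-- If `L` is a metric flag labeled triangulation of the 2-sphere which is not
the suspension of a 3-gon, then the closed star of a 3-Euclidean vertex and an
infinite, maximal RA-suspension contain no common 2-simplex of `L`. -/
theorem star_threeEuclidean_rasusp_no_common_two_simplex
    (L : SimplicialComplex ℝ E3) (m : E3 → E3 → ℕ)
    (hL : IsLabeledS2 L m) (hflag : MetricFlag L m)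
    (hnot : ¬ IsSuspensionOfThreeGon L)
    (s : E3) (hs : IsThreeEuclidean L m s)
    (T : Set (Finset E3)) (hT : IsInfMaxRASusp L m T) :
    ∀ F ∈ L.faces, F.card = 3 → ¬ (F ∈ star L s ∧ F ∈ T) := by
  rintro F hF hcard ⟨⟨-, G, hG, hsG, hFG⟩, hFT⟩
  obtain ⟨hs, s₀, s₁, s₂, h01, h12, h02, hlink, hsum⟩ := hs
  let A : E3 → Prop := fun v => v = s₀ ∨ v = s₁ ∨ v = s₂
  have hA : ∀ v, A v ↔ (v ≠ s ∧ ({s, v} : Finset E3) ∈ L.faces) := by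
    intro v
    have : v ∈ linkVerts L s ↔ v ∈ ({s₀, s₁, s₂} : Set E3) := by rw [hlink]
    simp only [Set.mem_insert_iff, Set.mem_singleton_iff] at this
    exact this.symm
  have hN : ∀ G ∈ L.faces, s ∈ G → ∀ v ∈ G, v = s ∨ A v := by
    intro G hG hsG v hv
    by_cases h : v = s
    · exact Or.inl h
    · refine Or.inr ((hA v).2 ⟨h, L.down_closed hG ?_ (by simp)⟩)
      intro w hw
      simp only [Finset.mem_insert, Finset.mem_singleton] at hw
      rcases hw with rfl | rfl <;> assumption
  have hA0 : A s₀ := Or.inl rfl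
  have hA1 : A s₁ := Or.inr (Or.inl rfl)
  have hA2 : A s₂ := Or.inr (Or.inr rfl)
  have hne : ∀ v, A v → s ≠ v := fun v hv => ((hA v).1 hv).1.symm
  have hA3 : ∀ x y z, A x → A y → A z → x ≠ y → y ≠ z → x ≠ z →
      ∀ v, A v → v = x ∨ v = y ∨ v = z := by
    intro x y z hx hy hz hxy hyz hxz v hv
    simp only [A] at hx hy hz hv
    grind
  have hsum' : ∀ x y z, A x → A y → A z → x ≠ y → y ≠ z → x ≠ z →
      1 / (m x y : ℝ) + 1 / (m y z : ℝ) + 1 / (m z x : ℝ) = 1 := by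
    intro x y z hx hy hz hxy hyz hxz
    have e1 := hL.symm s₀ s₁
    have e2 := hL.symm s₁ s₂
    have e3 := hL.symm s₂ s₀
    rcases hx with rfl | rfl | rfl <;> rcases hy with rfl | rfl | rfl <;>
      rcases hz with rfl | rfl | rfl <;> first
      | exact absurd rfl hxy
      | exact absurd rfl hyz
      | exact absurd rfl hxz
      | linarith
      | (rw [e1, e2, e3] at hsum; linarith)
  -- `s` belongs to `F`
  have hsF : s ∈ F := by
    by_contra hsF
    have hFA : ∀ v ∈ F, A v := fun v hv => (hN G hG hsG v (hFG hv)).resolve_left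
      (fun h => hsF (h ▸ hv))
    obtain ⟨x, y, z, hxy, hxz, hyz, rfl⟩ := Finset.card_eq_three.1 hcard
    have h := (hflag x y z hxy hyz hxz (L.down_closed hF (by simp) (by simp))
      (L.down_closed hF (by simp) (by simp))
      (L.down_closed hF (by intro w hw; simp at hw ⊢; tauto) (by simp))).1 hF
    have := hsum' x y z (hFA x (by simp)) (hFA y (by simp)) (hFA z (by simp)) hxy hyz hxz
    linarith
  -- all triangles at `s` are present
  have hstep : ∀ x y z, A x → A y → A z → x ≠ y → y ≠ z → x ≠ z →
      ({s, x, y} : Finset E3) ∈ L.faces → ({s, y, z} : Finset E3) ∈ L.faces := by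
    intro x y z hx hy hz hxy hyz hxz h
    refine full_link L hL.finite hL.sphere (hne x hx) (hne y hy) hxy ?_ h
    intro G hG hs v hv
    rcases hN G hG hs v hv with h | h
    · exact Or.inl h
    · exact Or.inr (hA3 x y z hx hy hz hxy hyz hxz v h)
  obtain ⟨x, y, hx, hy, hxy, hFe⟩ : ∃ x y, A x ∧ A y ∧ x ≠ y ∧ F = {s, x, y} := by
    have h2 : (F.erase s).card = 2 := by rw [Finset.card_erase_of_mem hsF, hcard]
    obtain ⟨x, y, hxy, he⟩ := Finset.card_eq_two.1 h2
    have hx : x ∈ F.erase s := by rw [he]; simp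
    have hy : y ∈ F.erase s := by rw [he]; simp
    rw [Finset.mem_erase] at hx hy
    refine ⟨x, y, (hN F hF hsF x hx.2).resolve_left hx.1, (hN F hF hsF y hy.2).resolve_left hy.1,
      hxy, ?_⟩
    rw [← he, Finset.insert_erase hsF]
  obtain ⟨z, hz, hxz, hyz⟩ : ∃ z, A z ∧ x ≠ z ∧ y ≠ z := by
    by_contra hcon
    push Not at hcon
    have c0 := hcon s₀ hA0
    have c1 := hcon s₁ hA1
    have c2 := hcon s₂ hA2
    grind
  have hxyF : ({s, x, y} : Finset E3) ∈ L.faces := hFe ▸ hF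
  have hyzF := hstep x y z hx hy hz hxy hyz hxz hxyF
  have hzxF := hstep y z x hy hz hx hyz hxz.symm hxy.symm hyzF
  have htri : ∀ p q, A p → A q → p ≠ q → ({s, p, q} : Finset E3) ∈ L.faces := by
    intro p q hp hq hpq
    rcases hA3 x y z hx hy hz hxy hyz hxz p hp with rfl | rfl | rfl <;>
      rcases hA3 _ _ _ hx hy hz hxy hyz hxz q hq with rfl | rfl | rfl <;> first
      | exact absurd rfl hpq
      | assumption
      | (rw [Finset.pair_comm]; assumption)
  obtain ⟨⟨Z, t, t', hd, hinf, hfull⟩, -⟩ := hT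
  have hFT' := hFT
  rw [hd.eq] at hFT'
  rcases hFT' with ((hFZ | hFt) | ⟨F', hF', rfl⟩) | ⟨F', hF', rfl⟩
  · have hsZ : ({s} : Finset E3) ∈ Z := hd.zdown F hFZ {s} (by simpa using hsF) (by simp)
    have h1 : ({t, s} : Finset E3) ∈ L.faces := hd.subset (by
      rw [hd.eq]; left; right; exact ⟨{s}, hsZ, rfl⟩)
    have h2 : ({t', s} : Finset E3) ∈ L.faces := hd.subset (by
      rw [hd.eq]; right; exact ⟨{s}, hsZ, rfl⟩)
    have ht := hd.t_notin F hFZ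
    have ht' := hd.t'_notin F hFZ
    have hAt : A t := (hA t).2 ⟨fun h => ht (h ▸ hsF), by rwa [Finset.pair_comm]⟩
    have hAt' : A t' := (hA t').2 ⟨fun h => ht' (h ▸ hsF), by rwa [Finset.pair_comm]⟩
    have k1 := hA3 x y z hx hy hz hxy hyz hxz t hAt
    have k2 := hA3 x y z hx hy hz hxy hyz hxz t' hAt'
    rw [hFe] at ht ht'
    simp only [Finset.mem_insert, Finset.mem_singleton, not_or] at ht ht'
    apply hd.tne
    rcases k1 with h | h | h
    · exact absurd h ht.2.1
    · exact absurd h ht.2.2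
    · rcases k2 with h' | h' | h'
      · exact absurd h' ht'.2.1
      · exact absurd h' ht'.2.2
      · rw [h, h']
  · simp only [Set.mem_insert_iff, Set.mem_singleton_iff] at hFt
    rcases hFt with rfl | rfl <;> simp at hcard
  · have hc : F'.card = 2 := by
      have := Finset.card_insert_of_notMem (hd.t_notin F' hF')
      simp only [] at hcard
      omega
    exact core_case L m hL hnot s A hA hA3 hsum' htri T Z t t' hd hinf hfull F' hF' hc hsF
  · have hc : F'.card = 2 := by
      have := Finset.card_insert_of_notMem (hd.t'_notin F' hF')
      simp only [] at hcard
      omega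
    exact core_case L m hL hnot s A hA hA3 hsum' htri T Z t' t (ra_swap hd) hinf hfull F' hF' hc hsF
end

section
/- Suppose L is a metric flag labeled triangulation of the 2-sphere and T is the RA-cone on a Euclidean 4-circuit C, with cone vertex c and with the vertices of C being s₀, s₁, s₂, s₃ in cyclic order. Suppose u is a vertex of L not in T joined to both opposite corners s₀ and s₂ by edges labeled 2, and v is a vertex of L not in T joined to both opposite corners s₁ and s₃ by edges labeled 2. Then u = v, L has exactly six vertices c, u, s₀, s₁, s₂, s₃, every edge of L is labeled 2, and L is the simplicial join of the 4-circuit C with the two-point set {c, u} (a right-angled octahedron). -/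
open Geometry

open CoxOrb
namespace OctaAux

open Set Filter Topology

/-- Nonvanishing continuous functions on nice simply connected spaces have continuous logs. -/
theorem exists_log {A : Type*} [TopologicalSpace A] [SimplyConnectedSpace A]
    [LocallyPathConnectedSpace A] (a0 : A) (f : A → ℂ) (hf : Continuous f) (h0 : ∀ a, f a ≠ 0) :
    ∃ g : A → ℂ, Continuous g ∧ ∀ a, Complex.exp (g a) = f a := by
  obtain ⟨F, ⟨-, hF⟩, -⟩ := Complex.isCoveringMapOn_exp.existsUnique_continuousMap_lifts
    (⟨f, hf⟩ : C(A, ℂ)) (a₀ := a0) (e₀ := Complex.log (f a0)) (Complex.exp_log (h0 a0))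
    (fun a => by simpa using h0 a)
  exact ⟨F, F.continuous, fun a => congrFun hF a⟩

theorem log_unique {A : Type*} [TopologicalSpace A] [PreconnectedSpace A]
    (g : A → ℂ) (hg : Continuous g) (h : ∀ a b, Complex.exp (g a) = Complex.exp (g b))
    (a b : A) : g a = g b :=
  Complex.isCoveringMap_exp.const_of_comp hg (fun a b => Subtype.ext (h a b)) a b

open Classical in
/-- The total change of the logarithm of `f` on `[0,1]`. -/
noncomputable def D (f : ℝ → ℂ) : ℂ :=
  if h : ∃ g : ℝ → ℂ, Continuous g ∧ ∀ t, Complex.exp (g t) = f t then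
    h.choose 1 - h.choose 0 else 0

theorem D_eq (f g : ℝ → ℂ) (hg : Continuous g) (h : ∀ t, Complex.exp (g t) = f t) :
    D f = g 1 - g 0 := by
  have hex : ∃ g : ℝ → ℂ, Continuous g ∧ ∀ t, Complex.exp (g t) = f t := ⟨g, hg, h⟩
  rw [D, dif_pos hex]
  have hs := hex.choose_spec
  have := log_unique (fun t => hex.choose t - g t) (hs.1.sub hg) (fun a b => by
    have e : ∀ t, Complex.exp (g t) ≠ 0 := fun t => Complex.exp_ne_zero _
    simp only [Complex.exp_sub, hs.2, ← h, div_self (e _)]) 1 0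
  linear_combination this

theorem exp_D (f : ℝ → ℂ) (hf : Continuous f) (h0 : ∀ a, f a ≠ 0) :
    Complex.exp (D f) = f 1 / f 0 := by
  obtain ⟨g, hg, h⟩ := exists_log 0 f hf h0
  rw [D_eq f g hg h, Complex.exp_sub, h, h]

theorem D_neg (f : ℝ → ℂ) (hf : Continuous f) (h0 : ∀ a, f a ≠ 0) :
    D (fun t => - f t) = D f := by
  obtain ⟨g, hg, h⟩ := exists_log 0 f hf h0
  rw [D_eq f g hg h, D_eq _ (fun t => g t + Real.pi * Complex.I) (by fun_prop) (fun t => by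
    rw [Complex.exp_add, h, Complex.exp_pi_mul_I]; ring)]
  ring

theorem D_square (F : ℝ × ℝ → ℂ) (hF : Continuous F) (h0 : ∀ a, F a ≠ 0) :
    D (fun t => F (t, 0)) + D (fun t => F (1, t)) =
      D (fun t => F (0, t)) + D (fun t => F (t, 1)) := by
  obtain ⟨g, hg, h⟩ := exists_log (0 : ℝ × ℝ) F hF h0
  rw [D_eq _ (fun t => g (t, 0)) (by fun_prop) (fun t => h _),
    D_eq _ (fun t => g (1, t)) (by fun_prop) (fun t => h _),
    D_eq _ (fun t => g (0, t)) (by fun_prop) (fun t => h _),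
    D_eq _ (fun t => g (t, 1)) (by fun_prop) (fun t => h _)]
  ring

/-- The change of the logarithm of `γ - y`. -/
noncomputable def W {a b : ℂ} (γ : Path a b) (y : ℂ) : ℂ := D (fun t => γ.extend t - y)

theorem ext_mem {a b : ℂ} (γ : Path a b) (t : ℝ) : γ.extend t ∈ range γ := by
  rw [← γ.extend_range]; exact ⟨t, rfl⟩

theorem exp_W {a b : ℂ} (γ : Path a b) (y : ℂ) (hy : y ∉ range γ) :
    Complex.exp (W γ y) = (b - y) / (a - y) := by
  rw [W, exp_D _ (by fun_prop)]
  · simp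
  · intro t ht
    exact hy (by rw [← sub_eq_zero.1 ht]; exact ext_mem γ t)

theorem W_square {a b a' b' : ℂ} (γ : Path a b) (δ : Path a' b')
    (h : Disjoint (range γ) (range δ)) : W γ a' + W δ b = W δ a + W γ b' := by
  have hne : ∀ s t, γ.extend s - δ.extend t ≠ 0 := fun s t e =>
    h.ne_of_mem (ext_mem γ s) (ext_mem δ t) (sub_eq_zero.1 e)
  have := D_square (fun p => γ.extend p.1 - δ.extend p.2) (by fun_prop) (fun p => hne _ _)
  simp only [Path.extend_zero, Path.extend_one] at this
  have e1 : W δ b = D (fun t => b - δ.extend t) := by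
    rw [← D_neg _ (by fun_prop) (fun t => by simpa using hne 1 t)]
    simp [W]
  have e2 : W δ a = D (fun t => a - δ.extend t) := by
    rw [← D_neg _ (by fun_prop) (fun t => by simpa using hne 0 t)]
    simp [W]
  rw [e1, e2]; exact this

theorem W_far {a b : ℂ} (γ : Path a b) (y : ℂ) (h : ∀ z ∈ range γ, ‖z‖ < ‖y‖) :
    W γ y = Complex.log (1 - b / y) - Complex.log (1 - a / y) := by
  have hy : y ≠ 0 := by
    rintro rfl
    have := h _ (ext_mem γ 0)
    simp at this
    linarith [norm_nonneg a]
  have hs : ∀ z ∈ range γ, 1 - z / y ∈ Complex.slitPlane := by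
    intro z hz
    have : ‖-(z / y)‖ < 1 := by
      rw [norm_neg, norm_div, div_lt_one (norm_pos_iff.2 hy)]; exact h z hz
    simpa [sub_eq_add_neg] using Complex.mem_slitPlane_of_norm_lt_one this
  rw [W, D_eq _ (fun t => Complex.log (1 - γ.extend t / y) + Complex.log (-y))]
  · simp
  · refine Continuous.add (Continuous.clog (by fun_prop) (fun t => hs _ (ext_mem γ t)))
      continuous_const
  · intro t
    rw [Complex.exp_add, Complex.exp_log (Complex.slitPlane_ne_zero (hs _ (ext_mem γ t))),
      Complex.exp_log (neg_ne_zero.2 hy)]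
    field_simp
    ring

theorem exists_potential {z y : ℂ} (ρ : Path z y) :
    ∃ φ : ℂ → ℂ, ∀ (a b : ℂ) (γ : Path a b), (∀ x ∈ range γ, ‖x‖ < ‖y‖) →
      Disjoint (range γ) (range ρ) → W γ z = φ b - φ a := by
  refine ⟨fun x => Complex.log (1 - x / y) - W ρ x, fun a b γ h1 h2 => ?_⟩
  have := W_square γ ρ h2
  rw [W_far γ y h1] at this
  linear_combination this

theorem range_bdd {a b : ℂ} (γ : Path a b) : ∃ R, ∀ x ∈ range γ, ‖x‖ < R := by
  obtain ⟨R, hR⟩ := (isCompact_range γ.continuous).isBounded.exists_norm_le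
  exact ⟨R + 1, fun x hx => by linarith [hR x hx]⟩

/-- Nonplanarity of `K₅`, one vertex being at infinity. -/
theorem nonplanar {z0 z1 z2 z3 : ℂ} (A : Path z0 z1) (B : Path z1 z2) (C : Path z2 z3)
    (E : Path z3 z0) (P : Path z0 z2) (Q : Path z1 z3)
    (hAC : Disjoint (range A) (range C)) (hBE : Disjoint (range B) (range E))
    (hPQ : Disjoint (range P) (range Q))
    (h0 : ∀ R : ℝ, ∃ y, R < ‖y‖ ∧ ∃ ρ : Path z0 y, Disjoint (range B) (range ρ) ∧
      Disjoint (range C) (range ρ) ∧ Disjoint (range Q) (range ρ))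
    (h1 : ∀ R : ℝ, ∃ y, R < ‖y‖ ∧ ∃ ρ : Path z1 y, Disjoint (range C) (range ρ) ∧
      Disjoint (range E) (range ρ) ∧ Disjoint (range P) (range ρ))
    (h2 : ∀ R : ℝ, ∃ y, R < ‖y‖ ∧ ∃ ρ : Path z2 y, Disjoint (range E) (range ρ) ∧
      Disjoint (range A) (range ρ) ∧ Disjoint (range Q) (range ρ))
    (h3 : ∀ R : ℝ, ∃ y, R < ‖y‖ ∧ ∃ ρ : Path z3 y, Disjoint (range A) (range ρ) ∧
      Disjoint (range B) (range ρ) ∧ Disjoint (range P) (range ρ)) : False := by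
  obtain ⟨RA, hA⟩ := range_bdd A
  obtain ⟨RB, hB⟩ := range_bdd B
  obtain ⟨RC, hC⟩ := range_bdd C
  obtain ⟨RE, hE⟩ := range_bdd E
  obtain ⟨RP, hP⟩ := range_bdd P
  obtain ⟨RQ, hQ⟩ := range_bdd Q
  obtain ⟨R, r1, r2, r3, r4, r5, r6⟩ :
      ∃ R, RA ≤ R ∧ RB ≤ R ∧ RC ≤ R ∧ RE ≤ R ∧ RP ≤ R ∧ RQ ≤ R :=
    ⟨max RA (max RB (max RC (max RE (max RP RQ)))), by simp, by simp, by simp, by simp,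
      by simp, by simp⟩
  obtain ⟨y0, hy0, ρ0, d01, d02, d03⟩ := h0 R
  obtain ⟨y1, hy1, ρ1, d11, d12, d13⟩ := h1 R
  obtain ⟨y2, hy2, ρ2, d21, d22, d23⟩ := h2 R
  obtain ⟨y3, hy3, ρ3, d31, d32, d33⟩ := h3 R
  obtain ⟨φ0, f0⟩ := exists_potential ρ0
  obtain ⟨φ1, f1⟩ := exists_potential ρ1
  obtain ⟨φ2, f2⟩ := exists_potential ρ2
  obtain ⟨φ3, f3⟩ := exists_potential ρ3
  have B0 := f0 _ _ B (fun x hx => by linarith [hB x hx]) d01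
  have C0 := f0 _ _ C (fun x hx => by linarith [hC x hx]) d02
  have Q0 := f0 _ _ Q (fun x hx => by linarith [hQ x hx]) d03
  have C1 := f1 _ _ C (fun x hx => by linarith [hC x hx]) d11
  have E1 := f1 _ _ E (fun x hx => by linarith [hE x hx]) d12
  have P1 := f1 _ _ P (fun x hx => by linarith [hP x hx]) d13
  have E2 := f2 _ _ E (fun x hx => by linarith [hE x hx]) d21
  have A2 := f2 _ _ A (fun x hx => by linarith [hA x hx]) d22
  have Q2 := f2 _ _ Q (fun x hx => by linarith [hQ x hx]) d23
  have A3 := f3 _ _ A (fun x hx => by linarith [hA x hx]) d31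
  have B3 := f3 _ _ B (fun x hx => by linarith [hB x hx]) d32
  have P3 := f3 _ _ P (fun x hx => by linarith [hP x hx]) d33
  have S1 := W_square A C hAC
  have S2 := W_square B E hBE
  have S3 := W_square P Q hPQ
  have key : W B z3 + W E z2 + W A z2 + W C z1 = 0 := by
    rw [P1, Q2, Q0, P3] at S3
    linear_combination (1/2 : ℂ) * (- S3 + S1 + S2) + (1/2 : ℂ) * (B3 + E2 + A2 + C1)
      + (1/2 : ℂ) * (A3 + B0 + C0 + E1)
  have src : ∀ {a b : ℂ} (γ : Path a b), a ∈ range γ := fun γ => ⟨0, γ.source⟩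
  have tgt : ∀ {a b : ℂ} (γ : Path a b), b ∈ range γ := fun γ => ⟨1, γ.target⟩
  have ex := congrArg Complex.exp key
  rw [Complex.exp_add, Complex.exp_add, Complex.exp_add, Complex.exp_zero,
    exp_W B z3 (disjoint_right.1 hBE (src E)), exp_W E z2 (disjoint_left.1 hBE (tgt B)),
    exp_W A z2 (disjoint_right.1 hAC (src C)), exp_W C z1 (disjoint_left.1 hAC (tgt A))] at ex
  have n13 : z1 - z3 ≠ 0 := sub_ne_zero.2 (hBE.ne_of_mem (src B) (src E))
  have n32 : z3 - z2 ≠ 0 := sub_ne_zero.2 (hBE.symm.ne_of_mem (src E) (tgt B))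
  have n02 : z0 - z2 ≠ 0 := sub_ne_zero.2 (hAC.ne_of_mem (src A) (src C))
  have n21 : z2 - z1 ≠ 0 := sub_ne_zero.2 (hAC.symm.ne_of_mem (src C) (tgt A))
  have : (z2 - z3) / (z1 - z3) * ((z0 - z2) / (z3 - z2)) * ((z1 - z2) / (z0 - z2)) *
      ((z3 - z1) / (z2 - z1)) = -1 := by
    field_simp
    ring
  rw [this] at ex
  norm_num at ex

/-- Stereographic chart of a topological sphere away from a point. -/
theorem exists_chart (X : Set E3) (h : X ≃ₜ (Metric.sphere (0 : E3) 1 : Set E3)) (p : E3)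
    (hp : p ∈ X) :
    ∃ H : E3 → ℂ, ContinuousOn H (X \ {p}) ∧ InjOn H (X \ {p}) ∧
      ∀ R : ℝ, ∃ U ∈ 𝓝 p, ∀ x ∈ U, x ∈ X → x ≠ p → R < ‖H x‖ := by
  classical
  have : Fact (Module.finrank ℝ E3 = 2 + 1) := ⟨by simp⟩
  let q := h ⟨p, hp⟩
  let S := stereographic' 2 q
  let e : EuclideanSpace ℝ (Fin 2) ≃ₗᵢ[ℝ] ℂ := Complex.orthonormalBasisOneI.repr.symm
  have hsrc : ∀ x : X, (x : E3) ≠ p → h x ∈ S.source := by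
    intro x hx
    simp only [S, stereographic'_source, mem_compl_iff, mem_singleton_iff]
    intro hh
    exact hx (congrArg Subtype.val (h.injective hh))
  let H : E3 → ℂ := fun x => if hx : x ∈ X then e (S (h ⟨x, hx⟩)) else 0
  have hH : ∀ x : X, H x = e (S (h x)) := fun x => by simp [H]
  refine ⟨H, ?_, ?_, ?_⟩
  · rw [continuousOn_iff_continuous_domRestrict]
    have : (X \ {p}).domRestrict H = fun x : ↥(X \ {p}) => e (S (h ⟨x.1, x.2.1⟩)) := by
      ext x
      exact hH ⟨x.1, x.2.1⟩
    rw [this]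
    refine e.continuous.comp ?_
    exact S.continuousOn.comp_continuous (by fun_prop) (fun x => hsrc ⟨x.1, x.2.1⟩ x.2.2)
  · intro x hx y hy hxy
    rw [hH ⟨x, hx.1⟩, hH ⟨y, hy.1⟩] at hxy
    have := h.injective (S.injOn (hsrc ⟨x, hx.1⟩ hx.2) (hsrc ⟨y, hy.1⟩ hy.2) (e.injective hxy))
    exact congrArg Subtype.val this
  · intro R
    let K := S.symm '' (Metric.closedBall 0 R)
    have hK : IsCompact K := (isCompact_closedBall _ _).image_of_continuousOn
      (S.continuousOn_symm.mono (by simp [S]))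
    have hqK : q ∉ K := by
      rintro ⟨y, -, hy⟩
      have : S.symm y ∈ S.source := S.map_target (by simp [S])
      rw [hy] at this
      simp [S] at this
    have hn : h ⁻¹' Kᶜ ∈ 𝓝 (⟨p, hp⟩ : X) :=
      h.continuous.continuousAt.preimage_mem_nhds (hK.isClosed.isOpen_compl.mem_nhds hqK)
    obtain ⟨U, hU, hUs⟩ := mem_nhds_subtype X ⟨p, hp⟩ _ |>.1 hn
    refine ⟨U, hU, fun x hxU hxX hxp => ?_⟩
    by_contra hlt
    have hx := hUs (show (⟨x, hxX⟩ : X) ∈ Subtype.val ⁻¹' U from hxU)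
    apply hx
    rw [hH ⟨x, hxX⟩, LinearIsometryEquiv.norm_map] at hlt
    refine ⟨S (h ⟨x, hxX⟩), ?_, S.left_inv (hsrc ⟨x, hxX⟩ hxp)⟩
    simpa using not_lt.1 hlt

/-- The image in the plane of a segment in the domain of the chart. -/
theorem exists_path (H : E3 → ℂ) (Y : Set E3) (hc : ContinuousOn H Y) (a b : E3)
    (hab : segment ℝ a b ⊆ Y) : ∃ γ : Path (H a) (H b), range γ ⊆ H '' segment ℝ a b := by
  have hm : ∀ t : unitInterval, AffineMap.lineMap a b (t : ℝ) ∈ segment ℝ a b := fun t => by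
    rw [segment_eq_image_lineMap]; exact ⟨t, t.2, rfl⟩
  refine ⟨⟨⟨fun t => H (AffineMap.lineMap a b (t : ℝ)), ?_⟩, by simp, by simp⟩, ?_⟩
  · refine hc.comp_continuous ?_ (fun t => hab (hm t))
    exact (AffineMap.lineMap_continuous).comp continuous_subtype_val
  · rintro _ ⟨t, rfl⟩
    exact ⟨_, hm t, rfl⟩

theorem exists_ray (X : Set E3) (p : E3) (H : E3 → ℂ) (hc : ContinuousOn H (X \ {p}))
    (hinf : ∀ R : ℝ, ∃ U ∈ 𝓝 p, ∀ x ∈ U, x ∈ X → x ≠ p → R < ‖H x‖)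
    (a : E3) (hap : a ≠ p) (hs : segment ℝ a p ⊆ X) (R : ℝ) :
    ∃ y, R < ‖y‖ ∧ ∃ ρ : Path (H a) y, range ρ ⊆ H '' (segment ℝ a p \ {p}) := by
  obtain ⟨U, hU, hUs⟩ := hinf R
  have hcont : Continuous (fun t : ℝ => AffineMap.lineMap a p t) := AffineMap.lineMap_continuous
  have h1 : ∀ᶠ t in 𝓝[<] (1 : ℝ), AffineMap.lineMap a p t ∈ U := by
    refine Filter.Eventually.filter_mono nhdsWithin_le_nhds ?_
    exact hcont.continuousAt.preimage_mem_nhds (by simpa using hU)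
  have h2 : ∀ᶠ t in 𝓝[<] (1 : ℝ), t ∈ Ioo (0 : ℝ) 1 := Ioo_mem_nhdsLT (by norm_num)
  obtain ⟨t, ht, ht0, ht1⟩ := (h1.and h2).exists
  have hne : ∀ s : ℝ, s < 1 → AffineMap.lineMap a p s ≠ p := by
    intro s hs e
    have := (AffineMap.lineMap_injective ℝ hap) (e.trans (AffineMap.lineMap_apply_one a p).symm)
    linarith
  have hmem : ∀ s : ℝ, 0 ≤ s → s < 1 → AffineMap.lineMap a p s ∈ segment ℝ a p \ {p} := by
    intro s h0 h1
    refine ⟨?_, hne s h1⟩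
    rw [segment_eq_image_lineMap]; exact ⟨s, ⟨h0, h1.le⟩, rfl⟩
  have hsub : segment ℝ a (AffineMap.lineMap a p t) ⊆ segment ℝ a p \ {p} := by
    intro x hx
    rw [segment_eq_image_lineMap] at hx
    obtain ⟨s, ⟨s0, s1⟩, rfl⟩ := hx
    rw [AffineMap.lineMap_lineMap_right]
    exact hmem _ (by positivity) (by nlinarith)
  obtain ⟨γ, hγ⟩ := exists_path H (X \ {p}) hc a (AffineMap.lineMap a p t)
    (hsub.trans (sdiff_subset_sdiff_left hs))
  exact ⟨_, hUs _ ht (hs (hmem t ht0.le ht1).1) (hne t ht1), γ, hγ.trans (image_mono hsub)⟩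

open Geometry in
theorem hull_disjoint (L : SimplicialComplex ℝ E3) {F G : Finset E3} (hF : F ∈ L.faces)
    (hG : G ∈ L.faces) (h : Disjoint F G) :
    Disjoint (convexHull ℝ (F : Set E3)) (convexHull ℝ (G : Set E3)) := by
  rw [disjoint_iff_inter_eq_empty, SimplicialComplex.convexHull_inter_convexHull hF hG,
    ← Finset.coe_inter, Finset.disjoint_iff_inter_eq_empty.1 h]
  simp

open Geometry in
theorem seg_disjoint (L : SimplicialComplex ℝ E3) {a b a' b' : E3}
    (hF : ({a, b} : Finset E3) ∈ L.faces) (hG : ({a', b'} : Finset E3) ∈ L.faces)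
    (h1 : a ≠ a') (h2 : a ≠ b') (h3 : b ≠ a') (h4 : b ≠ b') :
    Disjoint (segment ℝ a b) (segment ℝ a' b') := by
  have := hull_disjoint L hF hG (by simp [h1.symm, h2.symm, h3.symm, h4.symm])
  simpa [convexHull_pair] using this

open Geometry in
/-- Points joined to opposite corners coincide. -/
theorem eq_of_opposite (L : SimplicialComplex ℝ E3)
    (hs : Nonempty (L.space ≃ₜ (Metric.sphere (0 : E3) 1 : Set E3)))
    {c a0 a1 a2 a3 u w : E3}
    (e01 : ({a0, a1} : Finset E3) ∈ L.faces) (e12 : ({a1, a2} : Finset E3) ∈ L.faces)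
    (e23 : ({a2, a3} : Finset E3) ∈ L.faces) (e30 : ({a3, a0} : Finset E3) ∈ L.faces)
    (c0 : ({a0, c} : Finset E3) ∈ L.faces) (c1 : ({a1, c} : Finset E3) ∈ L.faces)
    (c2 : ({a2, c} : Finset E3) ∈ L.faces) (c3 : ({a3, c} : Finset E3) ∈ L.faces)
    (u0 : ({a0, u} : Finset E3) ∈ L.faces) (u2 : ({u, a2} : Finset E3) ∈ L.faces)
    (w1 : ({a1, w} : Finset E3) ∈ L.faces) (w3 : ({w, a3} : Finset E3) ∈ L.faces)
    (n01 : a0 ≠ a1) (n02 : a0 ≠ a2) (n03 : a0 ≠ a3) (n12 : a1 ≠ a2) (n13 : a1 ≠ a3)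
    (n23 : a2 ≠ a3) (nc0 : a0 ≠ c) (nc1 : a1 ≠ c) (nc2 : a2 ≠ c) (nc3 : a3 ≠ c)
    (nu0 : a0 ≠ u) (nu1 : a1 ≠ u) (nu2 : a2 ≠ u) (nu3 : a3 ≠ u) (nuc : u ≠ c)
    (nw0 : a0 ≠ w) (nw1 : a1 ≠ w) (nw2 : a2 ≠ w) (nw3 : a3 ≠ w) (nwc : w ≠ c) : u = w := by
  by_contra nuw
  obtain ⟨h⟩ := hs
  have hcf : ({c} : Finset E3) ∈ L.faces := L.down_closed c0 (by simp) (by simp)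
  have hcX : c ∈ L.space := SimplicialComplex.subset_space hcf (by simp)
  obtain ⟨H, hH, hinj, hinf⟩ := exists_chart L.space h c hcX
  have sub : ∀ {a b : E3}, ({a, b} : Finset E3) ∈ L.faces → segment ℝ a b ⊆ L.space := by
    intro a b hab
    have := SimplicialComplex.convexHull_subset_space hab
    simpa [convexHull_pair] using this
  have sub' : ∀ {a b : E3}, ({a, b} : Finset E3) ∈ L.faces → a ≠ c → b ≠ c →
      segment ℝ a b ⊆ L.space \ {c} := by
    intro a b hab ha hb
    have := hull_disjoint L hab hcf (by simp [ha.symm, hb.symm])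
    rw [Finset.coe_pair, convexHull_pair, Finset.coe_singleton, convexHull_singleton,
      disjoint_singleton_right] at this
    exact fun x hx => ⟨sub hab hx, fun e => this (e ▸ hx)⟩
  have path : ∀ {a b : E3}, ({a, b} : Finset E3) ∈ L.faces → a ≠ c → b ≠ c →
      ∃ γ : Path (H a) (H b), range γ ⊆ H '' segment ℝ a b := fun hab ha hb =>
    exists_path H _ hH _ _ (sub' hab ha hb)
  have dis : ∀ {s t S T : Set E3}, S ⊆ L.space \ {c} → T ⊆ L.space \ {c} → Disjoint S T →
      Disjoint (H '' S) (H '' T) := fun {s t S T} hS hT hd =>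
    (hinj.image_inter hS hT).symm.subset |> fun hh => by
      rw [disjoint_iff_inter_eq_empty] at hd ⊢
      rw [hd, image_empty] at hh
      exact subset_empty_iff.1 hh
  have edis : ∀ {a b a' b' : E3} {x y x' y' : ℂ} {γ : Path x y} {δ : Path x' y'},
      range γ ⊆ H '' segment ℝ a b → range δ ⊆ H '' segment ℝ a' b' →
      ({a, b} : Finset E3) ∈ L.faces → ({a', b'} : Finset E3) ∈ L.faces →
      a ≠ c ∧ b ≠ c ∧ a' ≠ c ∧ b' ≠ c ∧ a ≠ a' ∧ a ≠ b' ∧ b ≠ a' ∧ b ≠ b' →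
      Disjoint (range γ) (range δ) := by
    rintro a b a' b' x y x' y' γ δ hγ hδ f g ⟨k1, k2, k3, k4, k5, k6, k7, k8⟩
    exact (dis (s := ∅) (t := ∅) (sub' f k1 k2) (sub' g k3 k4)
      (seg_disjoint L f g k5 k6 k7 k8)).mono hγ hδ
  have rdis : ∀ {a b a' : E3} {x y x' y' : ℂ} {γ : Path x y} {δ : Path x' y'},
      range γ ⊆ H '' segment ℝ a b → range δ ⊆ H '' (segment ℝ a' c \ {c}) →
      ({a, b} : Finset E3) ∈ L.faces → ({a', c} : Finset E3) ∈ L.faces →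
      a ≠ c ∧ b ≠ c ∧ a ≠ a' ∧ b ≠ a' →
      Disjoint (range γ) (range δ) := by
    rintro a b a' x y x' y' γ δ hγ hδ f g ⟨k1, k2, k5, k7⟩
    exact (dis (s := ∅) (t := ∅) (sub' f k1 k2) (sdiff_subset_sdiff_left (sub g))
      ((seg_disjoint L f g k5 k1 k7 k2).mono_right sdiff_subset)).mono hγ hδ
  obtain ⟨A, hA⟩ := path e01 nc0 nc1
  obtain ⟨B, hB⟩ := path e12 nc1 nc2
  obtain ⟨C, hC⟩ := path e23 nc2 nc3
  obtain ⟨E, hE⟩ := path e30 nc3 nc0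
  obtain ⟨P, hP⟩ := path u0 nc0 nuc
  obtain ⟨P', hP'⟩ := path u2 nuc nc2
  obtain ⟨Q, hQ⟩ := path w1 nc1 nwc
  obtain ⟨Q', hQ'⟩ := path w3 nwc nc3
  refine nonplanar A B C E (P.trans P') (Q.trans Q') ?_ ?_ ?_ ?_ ?_ ?_ ?_
  · exact edis hA hC e01 e23 (by grind)
  · exact edis hB hE e12 e30 (by grind)
  · rw [Path.trans_range, Path.trans_range, disjoint_union_left, disjoint_union_right,
      disjoint_union_right]
    exact ⟨⟨edis hP hQ u0 w1 (by grind), edis hP hQ' u0 w3 (by grind)⟩,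
      edis hP' hQ u2 w1 (by grind), edis hP' hQ' u2 w3 (by grind)⟩
  · intro R
    obtain ⟨y, hy, ρ, hρ⟩ := exists_ray L.space c H hH hinf a0 nc0 (sub c0) R
    refine ⟨y, hy, ρ, rdis hB hρ e12 c0 (by grind), rdis hC hρ e23 c0 (by grind), ?_⟩
    rw [Path.trans_range, disjoint_union_left]
    exact ⟨rdis hQ hρ w1 c0 (by grind), rdis hQ' hρ w3 c0 (by grind)⟩
  · intro R
    obtain ⟨y, hy, ρ, hρ⟩ := exists_ray L.space c H hH hinf a1 nc1 (sub c1) R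
    refine ⟨y, hy, ρ, rdis hC hρ e23 c1 (by grind), rdis hE hρ e30 c1 (by grind), ?_⟩
    rw [Path.trans_range, disjoint_union_left]
    exact ⟨rdis hP hρ u0 c1 (by grind), rdis hP' hρ u2 c1 (by grind)⟩
  · intro R
    obtain ⟨y, hy, ρ, hρ⟩ := exists_ray L.space c H hH hinf a2 nc2 (sub c2) R
    refine ⟨y, hy, ρ, rdis hE hρ e30 c2 (by grind), rdis hA hρ e01 c2 (by grind), ?_⟩
    rw [Path.trans_range, disjoint_union_left]
    exact ⟨rdis hQ hρ w1 c2 (by grind), rdis hQ' hρ w3 c2 (by grind)⟩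
  · intro R
    obtain ⟨y, hy, ρ, hρ⟩ := exists_ray L.space c H hH hinf a3 nc3 (sub c3) R
    refine ⟨y, hy, ρ, rdis hA hρ e01 c3 (by grind), rdis hB hρ e12 c3 (by grind), ?_⟩
    rw [Path.trans_range, disjoint_union_left]
    exact ⟨rdis hP hρ u0 c3 (by grind), rdis hP' hρ u2 c3 (by grind)⟩

/-- A Borsuk–Ulam type statement for the disc. -/
theorem no_odd (F : ℝ × ℝ → ℂ) (hF : ContinuousOn F {p | |p.1| + |p.2| ≤ 1})
    (h0 : ∀ p : ℝ × ℝ, |p.1| + |p.2| ≤ 1 → F p ≠ 0)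
    (hodd : ∀ p : ℝ × ℝ, |p.1| + |p.2| = 1 → F (-p) = - F p) : False := by
  let N : ℝ × ℝ → ℝ := fun p => max 1 (|p.1| + |p.2|)
  have hN : ∀ p, 0 < N p := fun p => lt_of_lt_of_le one_pos (le_max_left _ _)
  have hNc : Continuous N := by fun_prop
  let r : ℝ × ℝ → ℝ × ℝ := fun p => ((N p)⁻¹ * p.1, (N p)⁻¹ * p.2)
  have hr : Continuous r := by
    have : Continuous fun p => (N p)⁻¹ := hNc.inv₀ (fun p => (hN p).ne')
    fun_prop
  have hnorm : ∀ p, |(r p).1| + |(r p).2| = (N p)⁻¹ * (|p.1| + |p.2|) := fun p => by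
    simp only [r, abs_mul, abs_of_pos (inv_pos.2 (hN p))]; ring
  have hrm : ∀ p, |(r p).1| + |(r p).2| ≤ 1 := fun p => by
    rw [hnorm, inv_mul_le_iff₀ (hN p), mul_one]; exact le_max_right _ _
  obtain ⟨g, hg, hgF⟩ := exists_log (0 : ℝ × ℝ) (fun p => F (r p))
    (hF.comp_continuous hr hrm) (fun p => h0 _ (hrm p))
  let q : ℝ → ℝ × ℝ := fun θ => (Real.cos θ, Real.sin θ)
  have hq : Continuous q := by fun_prop
  have hq1 : ∀ θ, 1 ≤ |(q θ).1| + |(q θ).2| := by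
    intro θ
    have h1 := Real.abs_cos_le_one θ
    have h2 := Real.abs_sin_le_one θ
    have h3 := Real.sin_sq_add_cos_sq θ
    rw [← sq_abs (Real.sin θ), ← sq_abs (Real.cos θ)] at h3
    have := abs_nonneg (Real.sin θ)
    have := abs_nonneg (Real.cos θ)
    simp only [q]
    nlinarith
  have hqr : ∀ θ, |(r (q θ)).1| + |(r (q θ)).2| = 1 := by
    intro θ
    have : N (q θ) = |(q θ).1| + |(q θ).2| := max_eq_right (hq1 θ)
    rw [hnorm, this]
    exact inv_mul_cancel₀ (by linarith [hq1 θ])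
  have hrneg : ∀ p, r (-p) = - r p := fun p => by
    ext <;> simp [r, N]
  have hk : ∀ θ, Complex.exp (g (-(q θ)) - g (q θ)) = -1 := by
    intro θ
    rw [Complex.exp_sub, hgF, hgF, hrneg, hodd _ (hqr θ)]
    exact neg_div_self (h0 _ (hqr θ).le)
  have hc := log_unique (fun θ => g (-(q θ)) - g (q θ)) (by fun_prop)
    (fun a b => by rw [hk, hk]) 0 Real.pi
  have hqpi : q Real.pi = - q 0 := by ext <;> simp [q]
  have hz : g (-(q 0)) - g (q 0) = 0 := by
    simp only [hqpi, neg_neg] at hc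
    linear_combination (1/2 : ℂ) * hc
  have := hk 0
  rw [hz, Complex.exp_zero] at this
  norm_num at this

theorem mem_hull3 {a b d : E3} {x y z : ℝ} (hx : 0 ≤ x) (hy : 0 ≤ y) (hz : 0 ≤ z)
    (h : x + y + z = 1) :
    x • d + y • a + z • b ∈ convexHull ℝ (({d, a, b} : Finset E3) : Set E3) := by
  have hc := convex_convexHull ℝ (({d, a, b} : Finset E3) : Set E3)
  have m : ∀ w ∈ ({d, a, b} : Finset E3), w ∈ convexHull ℝ (({d, a, b} : Finset E3) : Set E3) :=
    fun w hw => subset_convexHull ℝ _ hw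
  have := hc.sum_mem (t := (Finset.univ : Finset (Fin 3))) (w := ![x, y, z]) (z := ![d, a, b])
    (by intro i _; fin_cases i <;> simpa) (by simp [Fin.sum_univ_three, h])
    (by intro i _; fin_cases i <;> exact m _ (by simp))
  simpa [Fin.sum_univ_three] using this

/-- The upper half of the octahedron with apex `d`, over the diamond. -/
noncomputable def Psi (v : Fin 4 → E3) (d : E3) (p : ℝ × ℝ) : E3 :=
  (1 - |p.1| - |p.2|) • d + max p.1 0 • v 0 + max (-p.1) 0 • v 2 + max p.2 0 • v 1 +
    max (-p.2) 0 • v 3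

theorem Psi_mem (v : Fin 4 → E3) (d : E3) (p : ℝ × ℝ) (hp : |p.1| + |p.2| ≤ 1) :
    (0 ≤ p.1 → 0 ≤ p.2 → Psi v d p ∈ convexHull ℝ (({d, v 0, v 1} : Finset E3) : Set E3)) ∧
    (p.1 ≤ 0 → 0 ≤ p.2 → Psi v d p ∈ convexHull ℝ (({d, v 1, v 2} : Finset E3) : Set E3)) ∧
    (p.1 ≤ 0 → p.2 ≤ 0 → Psi v d p ∈ convexHull ℝ (({d, v 2, v 3} : Finset E3) : Set E3)) ∧
    (0 ≤ p.1 → p.2 ≤ 0 → Psi v d p ∈ convexHull ℝ (({d, v 3, v 0} : Finset E3) : Set E3)) := by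
  refine ⟨fun h1 h2 => ?_, fun h1 h2 => ?_, fun h1 h2 => ?_, fun h1 h2 => ?_⟩
  · rw [abs_of_nonneg h1, abs_of_nonneg h2] at hp
    convert mem_hull3 (a := v 0) (b := v 1) (d := d) (x := 1 - p.1 - p.2) (y := p.1) (z := p.2)
      (by linarith) h1 h2 (by ring) using 1
    simp [Psi, abs_of_nonneg, h1, h2]
  · rw [abs_of_nonpos h1, abs_of_nonneg h2] at hp
    convert mem_hull3 (a := v 1) (b := v 2) (d := d) (x := 1 + p.1 - p.2) (y := p.2) (z := -p.1)
      (by linarith) h2 (by linarith) (by ring) using 1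
    simp [Psi, abs_of_nonneg, abs_of_nonpos, h1, h2]
    abel
  · rw [abs_of_nonpos h1, abs_of_nonpos h2] at hp
    convert mem_hull3 (a := v 2) (b := v 3) (d := d) (x := 1 + p.1 + p.2) (y := -p.1) (z := -p.2)
      (by linarith) (by linarith) (by linarith) (by ring) using 1
    simp [Psi, abs_of_nonpos, h1, h2]
  · rw [abs_of_nonneg h1, abs_of_nonpos h2] at hp
    convert mem_hull3 (a := v 3) (b := v 0) (d := d) (x := 1 - p.1 + p.2) (y := -p.2) (z := p.1)
      (by linarith) (by linarith) h1 (by ring) using 1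
    simp [Psi, abs_of_nonneg, abs_of_nonpos, h1, h2]
    abel

theorem Psi_continuous (v : Fin 4 → E3) (d : E3) : Continuous (Psi v d) := by
  unfold Psi
  fun_prop

open Geometry in
/-- An octahedron contained in a triangulated sphere is everything. -/
theorem space_octa (L : SimplicialComplex ℝ E3)
    (hs : Nonempty (L.space ≃ₜ (Metric.sphere (0 : E3) 1 : Set E3)))
    (c u : E3) (v : Fin 4 → E3) (hv : Function.Injective v) (hcv : ∀ i, c ≠ v i)
    (huv : ∀ i, u ≠ v i) (hcu : c ≠ u)
    (hc : ∀ i : Fin 4, ({c, v i, v (i + 1)} : Finset E3) ∈ L.faces)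
    (hu : ∀ i : Fin 4, ({u, v i, v (i + 1)} : Finset E3) ∈ L.faces) (p : E3) (hp : p ∈ L.space) :
    ∃ i : Fin 4, p ∈ convexHull ℝ (({c, v i, v (i + 1)} : Finset E3) : Set E3) ∨
      p ∈ convexHull ℝ (({u, v i, v (i + 1)} : Finset E3) : Set E3) := by
  by_contra! hcon
  obtain ⟨h⟩ := hs
  obtain ⟨H, hH, hinj, -⟩ := exists_chart L.space h p hp
  have quad : ∀ (d : E3) (q : ℝ × ℝ), |q.1| + |q.2| ≤ 1 → ∃ i : Fin 4,
      (∀ d, Psi v d q ∈ convexHull ℝ (({d, v i, v (i + 1)} : Finset E3) : Set E3)) ∧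
      (∀ d, Psi v d (-q) ∈ convexHull ℝ (({d, v (i + 2), v (i + 3)} : Finset E3) : Set E3)) := by
    intro d q hq
    have hq' : |(-q).1| + |(-q).2| ≤ 1 := by simpa using hq
    rcases le_total 0 q.1 with h1 | h1 <;> rcases le_total 0 q.2 with h2 | h2
    · exact ⟨0, fun d => (Psi_mem v d q hq).1 h1 h2,
        fun d => (Psi_mem v d (-q) hq').2.2.1 (by simpa) (by simpa)⟩
    · exact ⟨3, fun d => (Psi_mem v d q hq).2.2.2 h1 h2,
        fun d => (Psi_mem v d (-q) hq').2.1 (by simpa) (by simpa)⟩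
    · exact ⟨1, fun d => (Psi_mem v d q hq).2.1 h1 h2,
        fun d => (Psi_mem v d (-q) hq').2.2.2 (by simpa) (by simpa)⟩
    · exact ⟨2, fun d => (Psi_mem v d q hq).2.2.1 h1 h2,
        fun d => (Psi_mem v d (-q) hq').1 (by simpa) (by simpa)⟩
  have hcm : ∀ q : ℝ × ℝ, |q.1| + |q.2| ≤ 1 → Psi v c q ∈ L.space \ {p} := by
    intro q hq
    obtain ⟨i, hi, -⟩ := quad c q hq
    exact ⟨SimplicialComplex.convexHull_subset_space (hc i) (hi c),
      fun e => (hcon i).1 (e ▸ hi c)⟩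
  have hum : ∀ q : ℝ × ℝ, |q.1| + |q.2| ≤ 1 → Psi v u q ∈ L.space \ {p} := by
    intro q hq
    obtain ⟨i, hi, -⟩ := quad c q hq
    exact ⟨SimplicialComplex.convexHull_subset_space (hu i) (hi u),
      fun e => (hcon i).2 (e ▸ hi u)⟩
  have neg_le : ∀ q : ℝ × ℝ, |q.1| + |q.2| ≤ 1 → |(-q).1| + |(-q).2| ≤ 1 := fun q hq => by
    simpa using hq
  refine no_odd (fun q => H (Psi v c q) - H (Psi v u (-q))) ?_ ?_ ?_
  · refine ContinuousOn.sub ?_ ?_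
    · exact hH.comp (Psi_continuous v c).continuousOn (fun q hq => hcm q hq)
    · exact hH.comp ((Psi_continuous v u).comp continuous_neg).continuousOn
        (fun q hq => hum _ (neg_le q hq))
  · intro q hq e
    have := hinj (hcm q hq) (hum _ (neg_le q hq)) (sub_eq_zero.1 e)
    obtain ⟨i, hi, hi'⟩ := quad c q hq
    have hui := hu (i + 2)
    have e3 : i + 2 + 1 = i + 3 := by fin_cases i <;> rfl
    rw [e3] at hui
    refine (hull_disjoint L (hc i) hui ?_).ne_of_mem (hi c) (hi' u) this
    have n1 : i ≠ i + 2 := by fin_cases i <;> decide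
    have n2 : i ≠ i + 3 := by fin_cases i <;> decide
    have n3 : i + 1 ≠ i + 2 := by fin_cases i <;> decide
    have n4 : i + 1 ≠ i + 3 := by fin_cases i <;> decide
    have m1 := hv.ne n1
    have m2 := hv.ne n2
    have m3 := hv.ne n3
    have m4 := hv.ne n4
    have k1 := hcv (i + 2)
    have k2 := hcv (i + 3)
    have k3 := huv i
    have k4 := huv (i + 1)
    rw [Finset.disjoint_left]
    simp only [Finset.mem_insert, Finset.mem_singleton]
    grind
  · intro q hq
    have hap : ∀ q : ℝ × ℝ, |q.1| + |q.2| = 1 → Psi v c q = Psi v u q := by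
      intro q hq
      have : 1 - |q.1| - |q.2| = 0 := by linarith
      simp [Psi, this]
    simp only [neg_neg]
    rw [hap q hq, hap (-q) (by simpa using hq)]
    ring

open Geometry in
/-- A face is contained in every face whose hull contains its barycentre. -/
theorem face_subset (L : SimplicialComplex ℝ E3) {F G : Finset E3} (hF : F ∈ L.faces)
    (hG : G ∈ L.faces)
    (h : ∑ y ∈ F, ((F.card : ℝ)⁻¹) • y ∈ convexHull ℝ (G : Set E3)) : F ⊆ G := by
  intro x hx
  by_contra hxG
  have hcard : (F.card : ℝ) ≠ 0 := by
    have : F.card ≠ 0 := Finset.card_ne_zero_of_mem hx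
    exact_mod_cast this
  have hs1 : ∑ y ∈ F, ((F.card : ℝ)⁻¹) = 1 := by simp [hcard]
  have hFm : ∑ y ∈ F, ((F.card : ℝ)⁻¹) • y ∈ convexHull ℝ (F : Set E3) :=
    (convex_convexHull ℝ _).sum_mem (fun _ _ => by positivity) hs1
      (fun y hy => subset_convexHull ℝ _ hy)
  have h2 := L.inter_subset_convexHull hF hG ⟨hFm, h⟩
  rw [← Finset.coe_inter, Finset.mem_convexHull'] at h2
  obtain ⟨w, -, hw1, hw2⟩ := h2
  have hind := L.indep hF
  have hz := hind.eq_zero_of_sum_eq_zero_subtype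
    (w := fun y => (F.card : ℝ)⁻¹ - if y ∈ G then w y else 0)
    (by rw [Finset.sum_sub_distrib, hs1, ← Finset.sum_filter, Finset.filter_mem_eq_inter, hw1,
          sub_self])
    (by simp only [sub_smul, ite_smul, zero_smul]
        rw [Finset.sum_sub_distrib, ← Finset.sum_filter, Finset.filter_mem_eq_inter, hw2,
          sub_self]) x hx
  simp [hxG] at hz
  exact hcard (by exact_mod_cast (by simp [hz] : F.card = 0))

theorem sub3 {α : Type*} [DecidableEq α] {F : Finset α} {d a b : α}
    (h : F ⊆ {d, a, b}) (hne : F.Nonempty) :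
    F = {d} ∨ F = {a} ∨ F = {b} ∨ F = {a, b} ∨ F = {d, a} ∨ F = {d, b} ∨ F = {d, a, b} := by
  have h' : ∀ x ∈ F, x = d ∨ x = a ∨ x = b := fun x hx => by simpa using h hx
  obtain ⟨z, hz⟩ := hne
  by_cases hd : d ∈ F <;> by_cases ha : a ∈ F <;> by_cases hb : b ∈ F
  · right; right; right; right; right; right; ext x; simp; grind
  · right; right; right; right; left; ext x; simp; grind
  · right; right; right; right; right; left; ext x; simp; grind
  · left; ext x; simp; grind
  · right; right; right; left; ext x; simp; grind
  · right; left; ext x; simp; grind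
  · right; right; left; ext x; simp; grind
  · grind

end OctaAux


/-- Let `T` be the RA-cone on a Euclidean 4-circuit `v` with cone vertex `c`.
If a vertex `u ∉ T` is joined to the opposite corners `v 0, v 2` by edges
labeled `2` and a vertex `w ∉ T` is joined to the opposite corners `v 1, v 3`
by edges labeled `2`, then `u = w`, `L` has exactly the six vertices
`c, u, v 0, v 1, v 2, v 3`, every edge of `L` is labeled `2`, and `L` is the
simplicial join of the 4-circuit with the two points `c, u` — a right-angled
octahedron. -/
theorem raCone_on_circuit_octahedron
    (L : SimplicialComplex ℝ E3) (m : E3 → E3 → ℕ)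
    (hL : IsLabeledS2 L m) (hflag : MetricFlag L m)
    (c : E3) (v : Fin 4 → E3) (hv : IsEuclidean4Circuit L m v)
    (hlink : linkVerts L c = {v 0, v 1, v 2, v 3})
    (hcone : ∀ i : Fin 4, ({c, v i, v (i + 1)} : Finset E3) ∈ L.faces)
    (hclab : ∀ i : Fin 4, m c (v i) = 2)
    (T : Set (Finset E3)) (hT : T = star L c)
    (u : E3) (hu : ({u} : Finset E3) ∈ L.faces) (huT : ({u} : Finset E3) ∉ T)
    (hu0 : ({u, v 0} : Finset E3) ∈ L.faces) (hu2 : ({u, v 2} : Finset E3) ∈ L.faces)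
    (hmu0 : m u (v 0) = 2) (hmu2 : m u (v 2) = 2)
    (w : E3) (hw : ({w} : Finset E3) ∈ L.faces) (hwT : ({w} : Finset E3) ∉ T)
    (hw1 : ({w, v 1} : Finset E3) ∈ L.faces) (hw3 : ({w, v 3} : Finset E3) ∈ L.faces)
    (hmw1 : m w (v 1) = 2) (hmw3 : m w (v 3) = 2) :
    u = w ∧
    (∀ x : E3, ({x} : Finset E3) ∈ L.faces ↔
      x ∈ ({c, u, v 0, v 1, v 2, v 3} : Set E3)) ∧
    (∀ a b : E3, a ≠ b → ({a, b} : Finset E3) ∈ L.faces → m a b = 2) ∧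
    L.faces = joinSusp (circuitComplex v) c u := by
  obtain ⟨hinj, hve, hvl, -⟩ := hv
  subst hT
  have hcv' : ∀ i, v i ≠ c ∧ ({c, v i} : Finset E3) ∈ L.faces := by
    intro i
    have h : v i ∈ linkVerts L c := by
      rw [hlink]; fin_cases i <;> simp
    exact h
  have out : ∀ x : E3, ({x} : Finset E3) ∈ L.faces → ({x} : Finset E3) ∉ star L c →
      x ≠ c ∧ ∀ i, v i ≠ x := by
    intro x hx hxT
    refine ⟨?_, ?_⟩
    · rintro rfl
      exact hxT ⟨hx, {x}, hx, by simp, subset_rfl⟩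
    · rintro i rfl
      exact hxT ⟨hx, {c, v i, v (i + 1)}, hcone i, by simp, by simp⟩
  obtain ⟨huc, hvu⟩ := out u hu huT
  obtain ⟨hwc, hvw⟩ := out w hw hwT
  have hne : ∀ i j : Fin 4, i ≠ j → v i ≠ v j := fun i j h => hinj.ne h
  have huw : u = w := by
    refine OctaAux.eq_of_opposite L hL.sphere (c := c) (a0 := v 0) (a1 := v 1) (a2 := v 2)
      (a3 := v 3) (hve 0) (hve 1) (hve 2) (hve 3) ?_ ?_ ?_ ?_ ?_ hu2 ?_ hw3
      (hne _ _ (by decide)) (hne _ _ (by decide)) (hne _ _ (by decide)) (hne _ _ (by decide))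
      (hne _ _ (by decide)) (hne _ _ (by decide))
      (hcv' 0).1 (hcv' 1).1 (hcv' 2).1 (hcv' 3).1 (hvu 0) (hvu 1) (hvu 2) (hvu 3) huc
      (hvw 0) (hvw 1) (hvw 2) (hvw 3) hwc
    · rw [Finset.pair_comm]; exact (hcv' 0).2
    · rw [Finset.pair_comm]; exact (hcv' 1).2
    · rw [Finset.pair_comm]; exact (hcv' 2).2
    · rw [Finset.pair_comm]; exact (hcv' 3).2
    · rw [Finset.pair_comm]; exact hu0
    · rw [Finset.pair_comm]; exact hw1
  subst huw
  have hue : ∀ i, ({u, v i} : Finset E3) ∈ L.faces := by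
    intro i; fin_cases i
    exacts [hu0, hw1, hu2, hw3]
  have hul : ∀ i, m u (v i) = 2 := by
    intro i; fin_cases i
    exacts [hmu0, hmw1, hmu2, hmw3]
  have hut : ∀ i, ({u, v i, v (i + 1)} : Finset E3) ∈ L.faces := by
    intro i
    refine (hflag u (v i) (v (i + 1)) (hvu i).symm (hne _ _ ?_) (hvu _).symm (hue i) (hve i)
      (hue _)).2 ?_
    · revert i; decide
    · rw [hul, hvl, hL.symm, hul]; norm_num
  have cover : ∀ F ∈ L.faces, ∃ d i, (d = c ∨ d = u) ∧ F ⊆ ({d, v i, v (i + 1)} : Finset E3) := by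
    intro F hF
    have hFne := L.nonempty_of_mem_faces hF
    have hb : ∑ y ∈ F, ((F.card : ℝ)⁻¹) • y ∈ convexHull ℝ (F : Set E3) := by
      refine (convex_convexHull ℝ _).sum_mem (fun _ _ => by positivity) ?_
        (fun y hy => subset_convexHull ℝ _ hy)
      have : (F.card : ℝ) ≠ 0 := by exact_mod_cast hFne.card_pos.ne'
      simp [this]
    obtain ⟨i, h | h⟩ := OctaAux.space_octa L hL.sphere c u v hinj (fun i => (hcv' i).1.symm)
      (fun i => (hvu i).symm) huc.symm hcone hut _ (L.convexHull_subset_space hF hb)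
    · exact ⟨c, i, Or.inl rfl, OctaAux.face_subset L hF (hcone i) h⟩
    · exact ⟨u, i, Or.inr rfl, OctaAux.face_subset L hF (hut i) h⟩
  have tri : ∀ d, (d = c ∨ d = u) → ∀ i, ({d, v i, v (i + 1)} : Finset E3) ∈ L.faces := by
    rintro d (rfl | rfl) i
    exacts [hcone i, hut i]
  have dlab : ∀ d, (d = c ∨ d = u) → ∀ i, m d (v i) = 2 := by
    rintro d (rfl | rfl) i
    exacts [hclab i, hul i]
  have dn : ∀ F ∈ L.faces, ∀ G : Finset E3, G ⊆ F → G.Nonempty → G ∈ L.faces :=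
    fun F hF G hG hn => L.down_closed hF hG hn
  refine ⟨rfl, ?_, ?_, ?_⟩
  · intro x
    constructor
    · intro hx
      obtain ⟨d, i, hd, hF⟩ := cover _ hx
      have hx' : x = d ∨ x = v i ∨ x = v (i + 1) := by simpa using hF
      have hvi : ∀ j, v j ∈ ({c, u, v 0, v 1, v 2, v 3} : Set E3) := by
        intro j; fin_cases j <;> simp
      rcases hx' with rfl | rfl | rfl
      · rcases hd with rfl | rfl <;> simp
      · exact hvi _
      · exact hvi _
    · have hvi : ∀ j, ({v j} : Finset E3) ∈ L.faces := fun j =>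
        dn _ (hcone j) _ (by simp) (by simp)
      rintro (rfl | rfl | rfl | rfl | rfl | rfl)
      · exact dn _ (hcone 0) _ (by simp) (by simp)
      · exact hu
      all_goals exact hvi _
  · intro a b hab hF
    obtain ⟨d, i, hd, hs⟩ := cover _ hF
    have ha : a = d ∨ a = v i ∨ a = v (i + 1) := by
      simpa using hs (Finset.mem_insert_self _ _)
    have hb : b = d ∨ b = v i ∨ b = v (i + 1) := by
      simpa using hs (Finset.mem_insert_of_mem (Finset.mem_singleton_self _))
    have h1 := dlab d hd i
    have h2 := dlab d hd (i + 1)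
    have h3 := hvl i
    rcases ha with rfl | rfl | rfl <;> rcases hb with rfl | rfl | rfl <;>
      first | exact absurd rfl hab | assumption | (rw [hL.symm]; assumption)
  · ext F
    constructor
    · intro hF
      obtain ⟨d, i, hd, hs⟩ := cover _ hF
      have hz1 : ∀ j, ({v j} : Finset E3) ∈ circuitComplex v := fun j => Or.inl ⟨j, rfl⟩
      have hz2 : ({v i, v (i + 1)} : Finset E3) ∈ circuitComplex v := Or.inr ⟨i, rfl⟩
      have hz : ∀ G ∈ circuitComplex v, G ∈ joinSusp (circuitComplex v) c u :=
        fun G hG => Or.inl (Or.inl (Or.inl hG))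
      have hi : ∀ G ∈ circuitComplex v, insert d G ∈ joinSusp (circuitComplex v) c u := by
        intro G hG
        rcases hd with rfl | rfl
        · exact Or.inl (Or.inr ⟨G, hG, rfl⟩)
        · exact Or.inr ⟨G, hG, rfl⟩
      rcases OctaAux.sub3 hs (L.nonempty_of_mem_faces hF) with
        rfl | rfl | rfl | rfl | rfl | rfl | rfl
      · rcases hd with rfl | rfl
        · exact Or.inl (Or.inl (Or.inr (Or.inl rfl)))
        · exact Or.inl (Or.inl (Or.inr (Or.inr rfl)))
      · exact hz _ (hz1 _)
      · exact hz _ (hz1 _)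
      · exact hz _ hz2
      · exact hi _ (hz1 _)
      · exact hi _ (hz1 _)
      · exact hi _ hz2
    · have hins : ∀ d, (d = c ∨ d = u) → ∀ G ∈ circuitComplex v, insert d G ∈ L.faces := by
        rintro d hd G (⟨i, rfl⟩ | ⟨i, rfl⟩)
        · refine dn _ (tri d hd i) _ ?_ (by simp)
          intro x hx
          simp only [Finset.mem_insert, Finset.mem_singleton] at hx ⊢
          tauto
        · exact tri d hd i
      rintro ((((⟨i, rfl⟩ | ⟨i, rfl⟩) | rfl | rfl) | ⟨G, hG, rfl⟩) | ⟨G, hG, rfl⟩)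
      · exact dn _ (hcone i) _ (by simp) (by simp)
      · exact hve i
      · exact dn _ (hcone 0) _ (by simp) (by simp)
      · exact hu
      · exact hins c (Or.inl rfl) G hG
      · exact hins u (Or.inr rfl) G hG
end
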